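/- arXiv:1005.2561 — 2 statements merged into one kernel-verified Lean document; each statement's English description precedes it below -/
import Mathlib

section
/- Fix k ≥ 0 and n ≥ 2. Let X be the set of D-dissections of the regular 2n-gon P_{2n} with exactly k D-diagonals, and let the cyclic group C = Z_{2n} act on X by D-rotation. Then the triple (X, C, X(q)) exhibits the cyclic sieving phenomenon, where X(q) = [n+k−1 choose k]_{q²}[n−1 choose k]_{q²} + [n+k−1 choose k]_{q²}[n−2 choose k−1]_{q²}·q^n + [n+k−1 choose k]_{q²}[n−2 choose k−2]_{q²} + [n+k−2 choose k]_{q²}[n−2 choose k−2]_{q²}·q^n. -/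
open Finset

/-- Two chords `{i,j}` and `{a,b}` of a polygon whose vertices are labeled clockwise by
`ZMod m` (i.e. `0,1,…,m−1`) cross iff their endpoints strictly interleave in cyclic order:
writing the pairs in increasing order of labels as `{p,q}`, `{r,s}` with `p<q`, `r<s`,
they cross iff `p<r<q<s` or `r<p<s<q`. -/
def crossE {m : ℕ} (i j a b : ZMod m) : Prop :=
  (min i.val j.val < min a.val b.val ∧ min a.val b.val < max i.val j.val ∧
     max i.val j.val < max a.val b.val) ∨
  (min a.val b.val < min i.val j.val ∧ min i.val j.val < max a.val b.val ∧
     max a.val b.val < max i.val j.val)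

/-- The `q`-analog `[m]_q = 1 + q + ⋯ + q^{m-1}` as a polynomial over `ℂ`. -/
noncomputable def qnat (m : ℕ) : Polynomial ℂ := ∑ i ∈ Finset.range m, Polynomial.X ^ i

/-- The Gaussian binomial coefficient `[m choose r]_q` as a polynomial over `ℂ`,
defined via the `q`-Pascal recurrence
`[m+1 choose r+1]_q = [m choose r]_q + q^{r+1}·[m choose r+1]_q`. -/
noncomputable def qbinom : ℕ → ℕ → Polynomial ℂ
  | _, 0 => 1
  | 0, _ + 1 => 0
  | m + 1, r + 1 => qbinom m r + Polynomial.X ^ (r + 1) * qbinom m (r + 1)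

/-!
Put `m = gcd(d, n)`.  A D-dissection fixed by the `d`-th power of the D-rotation is, apart from the
colors, a symmetric dissection of the `2n`-gon that is invariant under rotation by `m` (`Good`,
`good_gcd_iff`), and the theorem compares the number of these with the polynomial at `ζ ^ d`.

**Counting.**  An `m`-periodic symmetric dissection with diameters of one color unwraps to an
`m`-periodic noncrossing system of arcs and rays on `ℤ` (`Sys`, `wrap_bijOn`), a ray being a radius
towards the centre, that is, half of a diameter.  A system is determined by its code: to a residue
`x` and an arc or ray from `x` is attached the number (minus one) of vertices below it that are
visible from `x` (`code_injective`).  The weight of a code, the sum over `x` of the largest count, is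
the number of residues covered by an arc or ray (`sum_wt_code`).  Hence it is at most `m`; it is at
most `m - 1` exactly when there are no rays (`ray_iff`), and at most `m - 2` exactly when moreover
there are no loops, i.e. arcs of length `m` (`loop_iff`).  Conversely every family of sets of weight
at most `m` is a code (`code_surjective`): arcs and rays are recovered from a height function whose
strict records are the visible vertices.  Peeling off entries of a code shows that there are
`C(m+k-1, k) C(M, k)` codes of size `k` and weight at most `M` (`ncard_codes`), so this counts all
systems, those without rays and those without loops and rays for `M = m, m-1, m-2` (`ncard_sys`,
`ncard_sys_noray`, `ncard_sys_noloop`).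

For `m < n` this settles the count of dissections.  For `m = n` a loop would wrap to a diameter, so
systems with loops have to be excluded.  At the class of a loop one may draw a loop, a ray, or both
(`ncard_drawn`), so systems with loops are expressed through those with one ray class and no
loop, which themselves are obtained by subtraction (`ncard_single`, `ncard_noloop`).

**Colors.**  If `n ∤ d` a fixed D-dissection has diameters of at most one color, and none at all if
`d` is odd (`fixed_even`, `fixed_odd`).  If `n ∣ d` there are in addition the D-dissections with one
diameter drawn in both colors (`fixed_even_self`, `fixed_odd_self`).

**Evaluation.**  `ζ ^ (2 * d)` is a primitive root of unity of order `e = n / m`, and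
`ζ ^ (d * n) = (-1) ^ d`.  The `q`-Lucas theorem (`qLucas`) turns the Gaussian binomials into
ordinary ones for `e ≥ 2` (`sieve_eq`), while for `e = 1` they are evaluated at `1`.  Both sides then
agree by Pascal's rule.
-/

/-! ### Gaussian binomials at roots of unity -/

theorem qbinom_eval_succ (q : ℂ) (M r : ℕ) :
    (qbinom (M + 1) (r + 1)).eval q =
      (qbinom M r).eval q + q ^ (r + 1) * (qbinom M (r + 1)).eval q := by
  simp [qbinom]

theorem qbinom_zero_right (M : ℕ) : qbinom M 0 = 1 := by
  cases M <;> rfl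

theorem qbinom_eq_zero : ∀ {M r : ℕ}, M < r → qbinom M r = 0
  | _, 0, h => absurd h (by omega)
  | 0, _ + 1, _ => rfl
  | M + 1, r + 1, h => by
    simp [qbinom, qbinom_eq_zero (show M < r by omega),
      qbinom_eq_zero (show M < r + 1 by omega)]

theorem qbinom_self : ∀ M : ℕ, qbinom M M = 1
  | 0 => rfl
  | M + 1 => by simp [qbinom, qbinom_self M, qbinom_eq_zero (Nat.lt_succ_self M)]

/-- The ratio of two neighbouring Gaussian binomials in a row, cleared of denominators. -/
theorem qbinom_ratio (q : ℂ) : ∀ M r : ℕ,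
    (q ^ (r + 1) - 1) * q ^ r * (qbinom M (r + 1)).eval q =
      (q ^ M - q ^ r) * (qbinom M r).eval q
  | 0, 0 => by simp [qbinom]
  | 0, r + 1 => by simp [qbinom]
  | M + 1, 0 => by
    have h := qbinom_ratio q M 0
    rw [qbinom_eval_succ]
    simp only [qbinom_zero_right, Polynomial.eval_one] at *
    linear_combination q * h
  | M + 1, r + 1 => by
    have h0 := qbinom_ratio q M r
    have h1 := qbinom_ratio q M (r + 1)
    rw [qbinom_eval_succ, qbinom_eval_succ]
    linear_combination q * h0 + q ^ (r + 2) * h1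

/-- The inner Gaussian binomials `[e choose s]` vanish at a primitive `e`-th root of unity: by
the ratio formula each is a multiple of its predecessor, and the step from `s = 0` carries the
factor `q ^ e - 1 = 0`. -/
theorem qbinom_order_eq_zero {q : ℂ} {e : ℕ} (hq : IsPrimitiveRoot q e) :
    ∀ s : ℕ, 0 < s → s < e → (qbinom e s).eval q = 0
  | 0, h, _ => absurd h (by omega)
  | s + 1, _, h => by
    have hne : q ^ (s + 1) - 1 ≠ 0 := sub_ne_zero.2 (hq.pow_ne_one_of_pos_of_lt (by omega) h)
    have hq0 : q ≠ 0 := hq.ne_zero (by omega)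
    have hr := qbinom_ratio q e s
    have hz : (q ^ e - q ^ s) * (qbinom e s).eval q = 0 := by
      rcases Nat.eq_zero_or_pos s with rfl | hs
      · simp [hq.pow_eq_one]
      · rw [qbinom_order_eq_zero hq s hs (by omega), mul_zero]
    rw [hz] at hr
    simpa [hne, hq0] using hr

/-- The `q`-Lucas theorem at a primitive `e`-th root of unity. -/
theorem qLucas {q : ℂ} {e : ℕ} (he : 0 < e) (hq : IsPrimitiveRoot q e) : ∀ M j : ℕ,
    (qbinom M j).eval q = ((M / e).choose (j / e) : ℂ) * (qbinom (M % e) (j % e)).eval q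
  | M, 0 => by simp [qbinom_zero_right]
  | 0, j + 1 => by
    rcases Nat.lt_or_ge (j + 1) e with h | h
    · simp [Nat.mod_eq_of_lt h, Nat.div_eq_of_lt h]
    · have : 0 < (j + 1) / e := Nat.div_pos h he
      rw [Nat.zero_div, Nat.choose_eq_zero_of_lt this]
      simp [qbinom]
  | M + 1, j + 1 => by
    rw [qbinom_eval_succ, qLucas he hq M j, qLucas he hq M (j + 1)]
    have hM := Nat.mod_lt M he
    have hj := Nat.mod_lt j he
    have hpow : q ^ (j + 1) = q ^ ((j + 1) % e) := by
      conv_lhs => rw [← Nat.mod_add_div (j + 1) e, pow_add, pow_mul, hq.pow_eq_one]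
      simp
    rw [hpow]
    have key : ∀ x : ℕ, (x % e + 1 < e → (x + 1) % e = x % e + 1 ∧ (x + 1) / e = x / e) ∧
        (x % e + 1 = e → (x + 1) % e = 0 ∧ (x + 1) / e = x / e + 1) := by
      intro x
      have hx := Nat.mod_add_div x e
      constructor
      · intro h
        have h2 : x + 1 = (x % e + 1) + e * (x / e) := by omega
        constructor
        · conv_lhs => rw [h2]
          rw [Nat.add_mul_mod_self_left, Nat.mod_eq_of_lt h]
        · conv_lhs => rw [h2]
          rw [Nat.add_mul_div_left _ _ he, Nat.div_eq_of_lt h, zero_add]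
      · intro h
        have h2 : x + 1 = e * (x / e + 1) := by rw [mul_add]; omega
        constructor
        · conv_lhs => rw [h2]
          simp
        · conv_lhs => rw [h2]
          exact Nat.mul_div_cancel_left _ he
    rcases Nat.lt_or_ge (M % e + 1) e with h1 | h1 <;>
      rcases Nat.lt_or_ge (j % e + 1) e with h2 | h2
    · rw [((key M).1 h1).1, ((key M).1 h1).2, ((key j).1 h2).1, ((key j).1 h2).2,
        qbinom_eval_succ]
      ring
    · have h2 : j % e + 1 = e := by omega
      rw [((key M).1 h1).1, ((key M).1 h1).2, ((key j).2 h2).1, ((key j).2 h2).2,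
        qbinom_eq_zero (show M % e < j % e by omega)]
      simp [qbinom_zero_right]
    · have h1 : M % e + 1 = e := by omega
      rw [((key M).2 h1).1, ((key M).2 h1).2, ((key j).1 h2).1, ((key j).1 h2).2]
      have hv := qbinom_order_eq_zero hq (j % e + 1) (by omega) h2
      conv at hv => rw [← h1]
      rw [qbinom_eval_succ] at hv
      simp only [qbinom, Polynomial.eval_zero, mul_zero]
      rw [h1] at hv
      linear_combination (((M / e).choose (j / e) : ℕ) : ℂ) * hv
    · have h1 : M % e + 1 = e := by omega
      have h2 : j % e + 1 = e := by omega
      rw [((key M).2 h1).1, ((key M).2 h1).2, ((key j).2 h2).1, ((key j).2 h2).2,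
        show j % e = M % e by omega, qbinom_self]
      simp [qbinom_zero_right, Nat.choose_succ_succ]

/-! ### Codes and their number -/

/-- The weight `max p + 1` of a finite set of naturals, and `0` for the empty set. -/
def wt (p : Finset ℕ) : ℕ := p.sup Nat.succ

theorem wt_empty : wt ∅ = 0 := rfl

theorem lt_wt {p : Finset ℕ} {s : ℕ} (h : s ∈ p) : s < wt p :=
  Finset.le_sup (f := Nat.succ) h

theorem exists_wt {p : Finset ℕ} (h : 0 < wt p) : ∃ s ∈ p, s + 1 = wt p := by
  have hne : p.Nonempty := by
    rw [Finset.nonempty_iff_ne_empty]; rintro rfl; simp [wt] at h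
  obtain ⟨s, hs, h2⟩ := Finset.exists_mem_eq_sup p hne Nat.succ
  exact ⟨s, hs, h2.symm⟩

theorem wt_le_iff {p : Finset ℕ} {t : ℕ} : wt p ≤ t ↔ ∀ s ∈ p, s < t :=
  Finset.sup_le_iff

/-- Translate a set of naturals by one. -/
def shift (p : Finset ℕ) : Finset ℕ := p.map ⟨Nat.succ, Nat.succ_injective⟩

theorem mem_shift_zero (p : Finset ℕ) : 0 ∉ shift p := by simp [shift]

theorem mem_shift_succ (p : Finset ℕ) (s : ℕ) : s + 1 ∈ shift p ↔ s ∈ p := by simp [shift]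

theorem card_shift (p : Finset ℕ) : (shift p).card = p.card := by simp [shift]

theorem shift_injective : Function.Injective shift := Finset.map_injective _

theorem wt_shift {p : Finset ℕ} (h : p.Nonempty) : wt (shift p) = wt p + 1 := by
  apply le_antisymm
  · rw [wt_le_iff]
    intro s hs
    cases s with
    | zero => exact absurd hs (mem_shift_zero p)
    | succ s => have := lt_wt ((mem_shift_succ p s).1 hs); omega
  · obtain ⟨s, hs, h2⟩ := exists_wt (p := p) (by
      obtain ⟨s, hs⟩ := h; have := lt_wt hs; omega)
    have := lt_wt ((mem_shift_succ p s).2 hs); omega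

theorem wt_insert_shift (p : Finset ℕ) : wt (insert 0 (shift p)) = wt p + 1 := by
  rcases p.eq_empty_or_nonempty with rfl | h
  · simp [wt, shift]
  · have := wt_shift h
    simp only [wt, Finset.sup_insert] at *
    rw [this]; simp

theorem exists_shift {p : Finset ℕ} (h : 0 ∉ p) : ∃ p', shift p' = p := by
  refine ⟨p.image Nat.pred, ?_⟩
  ext s
  cases s with
  | zero => simp [mem_shift_zero, h]
  | succ s =>
    rw [mem_shift_succ]
    simp only [Finset.mem_image]
    constructor
    · rintro ⟨t, ht, rfl⟩
      cases t with
      | zero => exact absurd ht h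
      | succ t => simpa using ht
    · intro hs; exact ⟨s + 1, hs, rfl⟩

/-- Codes: `m`-tuples of finite sets of naturals with total size `k` and total weight at most
`M`.  A finite set of cardinality `r` and weight `t` encodes a composition of `t` into `r` parts. -/
def Codes (m k M : ℕ) : Set (Fin m → Finset ℕ) :=
  {P | ∑ i, (P i).card = k ∧ ∑ i, wt (P i) ≤ M}

/-- Codes on `m + 1` places whose first set is nonempty, as pairs. -/
def CodesNE (m k M : ℕ) : Set (Finset ℕ × (Fin m → Finset ℕ)) :=
  {p | p.1.Nonempty ∧ p.1.card + ∑ i, (p.2 i).card = k ∧ wt p.1 + ∑ i, wt (p.2 i) ≤ M}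

theorem codes_finite (m k M : ℕ) : (Codes m k M).Finite := by
  refine (Set.Finite.pi' (t := fun _ : Fin m => ((Finset.range M).powerset : Set (Finset ℕ)))
    (fun _ => Finset.finite_toSet _)).subset ?_
  rintro P ⟨_, h⟩ i
  refine Finset.mem_coe.2 (Finset.mem_powerset.2 fun s hs => ?_)
  have h1 := lt_wt hs
  have h2 := Finset.single_le_sum (f := fun i => wt (P i)) (fun _ _ => Nat.zero_le _)
    (Finset.mem_univ i)
  exact Finset.mem_range.2 (by omega)

/-- Split a code on `m + 1` places into its first set and the remaining ones. -/
def codeSplit (m : ℕ) : (Fin (m + 1) → Finset ℕ) ≃ Finset ℕ × (Fin m → Finset ℕ) :=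
  (Fin.consEquiv (fun _ => Finset ℕ)).symm

theorem codes_zero (k M : ℕ) : (Codes 0 k M).ncard = if k = 0 then 1 else 0 := by
  split_ifs with h
  · subst h
    rw [show Codes 0 0 M = Set.univ by ext; simp [Codes]]
    simp [Set.ncard_univ]
  · rw [show Codes 0 k M = ∅ by ext; simp [Codes]; omega]
    simp

theorem image_codeSplit (m k M : ℕ) : codeSplit m '' Codes (m + 1) k M =
    {p | p.1.card + ∑ i, (p.2 i).card = k ∧ wt p.1 + ∑ i, wt (p.2 i) ≤ M} := by
  ext ⟨p, P⟩
  rw [Equiv.image_eq_preimage_symm]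
  simp [Codes, codeSplit, Fin.consEquiv, Fin.sum_univ_succ]

theorem pairs_finite (m k M : ℕ) :
    {p : Finset ℕ × (Fin m → Finset ℕ) | p.1.card + ∑ i, (p.2 i).card = k ∧
      wt p.1 + ∑ i, wt (p.2 i) ≤ M}.Finite := by
  rw [← image_codeSplit]
  exact (codes_finite _ _ _).image _

theorem codesNE_finite (m k M : ℕ) : (CodesNE m k M).Finite :=
  (pairs_finite m k M).subset fun _ h => h.2

theorem ncard_pairs (m k M : ℕ) :
    {p : Finset ℕ × (Fin m → Finset ℕ) | p.1.card + ∑ i, (p.2 i).card = k ∧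
      wt p.1 + ∑ i, wt (p.2 i) ≤ M}.ncard = (Codes (m + 1) k M).ncard := by
  rw [← image_codeSplit, Set.ncard_image_of_injective _ (codeSplit m).injective]

/-- Codes are split according to whether their first set is empty. -/
theorem codes_succ (m k M : ℕ) :
    (Codes (m + 1) k M).ncard = (Codes m k M).ncard + (CodesNE m k M).ncard := by
  have h1 : ((fun P : Fin m → Finset ℕ => ((∅ : Finset ℕ), P)) '' Codes m k M).ncard =
      (Codes m k M).ncard := Set.ncard_image_of_injective _ (fun _ _ h => (Prod.mk.inj h).2)
  rw [← ncard_pairs, ← h1, ← Set.ncard_union_eq _ ((codes_finite _ _ _).image _)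
    (codesNE_finite _ _ _)]
  · congr 1
    ext ⟨p, P⟩
    simp only [Set.mem_ofPred_eq, Set.mem_union, Set.mem_image, Codes, CodesNE, Prod.mk.injEq]
    rcases p.eq_empty_or_nonempty with rfl | h
    · simp [wt_empty]
    · simp [h, h.ne_empty.symm]
  · rw [Set.disjoint_left]
    rintro _ ⟨P, _, rfl⟩ h
    exact Finset.not_nonempty_empty h.1

/-- Peeling the smallest possible level off the first set of a code. -/
theorem codesNE_succ (m k M : ℕ) :
    (CodesNE m (k + 1) (M + 1)).ncard = (Codes (m + 1) k M).ncard +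
      (CodesNE m (k + 1) M).ncard := by
  have hi1 : Function.Injective
      (fun p : Finset ℕ × (Fin m → Finset ℕ) => (insert 0 (shift p.1), p.2)) := by
    rintro ⟨p, P⟩ ⟨p', P'⟩ h
    simp only [Prod.mk.injEq] at h
    have := congrArg (fun s => Finset.erase s 0) h.1
    simp only [Finset.erase_insert (mem_shift_zero _)] at this
    rw [shift_injective this, h.2]
  have hi2 : Function.Injective
      (fun p : Finset ℕ × (Fin m → Finset ℕ) => (shift p.1, p.2)) := by
    rintro ⟨p, P⟩ ⟨p', P'⟩ h
    simp only [Prod.mk.injEq] at h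
    rw [shift_injective h.1, h.2]
  rw [← ncard_pairs,
    ← Set.ncard_image_of_injective {p : Finset ℕ × (Fin m → Finset ℕ) |
      p.1.card + ∑ i, (p.2 i).card = k ∧ wt p.1 + ∑ i, wt (p.2 i) ≤ M} hi1,
    ← Set.ncard_image_of_injective (CodesNE m (k + 1) M) hi2,
    ← Set.ncard_union_eq _ ((pairs_finite _ _ _).image _) ((codesNE_finite _ _ _).image _)]
  · congr 1
    ext ⟨p, P⟩
    simp only [Set.mem_ofPred_eq, Set.mem_union, Set.mem_image, CodesNE, Prod.mk.injEq,
      Prod.exists]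
    -- If `0 ∈ p`, remove `0` and shift down; otherwise just shift down.
    by_cases h0 : 0 ∈ p
    · obtain ⟨p', hp'⟩ := exists_shift (p := p.erase 0) (by simp)
      have hp : p = insert 0 (shift p') := by rw [hp', Finset.insert_erase h0]
      have hc : p.card = p'.card + 1 := by
        rw [hp, Finset.card_insert_of_notMem (mem_shift_zero _), card_shift]
      have ht : wt p = wt p' + 1 := by rw [hp, wt_insert_shift]
      constructor
      · rintro ⟨_, h1, h2⟩
        exact Or.inl ⟨p', P, ⟨by omega, by omega⟩, hp.symm, rfl⟩
      · rintro (⟨q, Q, ⟨h1, h2⟩, h3, rfl⟩ | ⟨q, Q, _, h3, _⟩)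
        · have h4 := congrArg (fun s => Finset.erase s 0) (h3.trans hp)
          simp only [Finset.erase_insert (mem_shift_zero _)] at h4
          have := shift_injective h4
          subst this
          exact ⟨⟨0, h0⟩, by omega, by omega⟩
        · rw [← h3] at h0; exact absurd h0 (mem_shift_zero _)
    · obtain ⟨p', rfl⟩ := exists_shift h0
      constructor
      · rintro ⟨h, h1, h2⟩
        have hne : p'.Nonempty := by simpa [shift] using h
        rw [card_shift] at h1
        rw [wt_shift hne] at h2
        exact Or.inr ⟨p', P, ⟨hne, h1, by omega⟩, rfl, rfl⟩
      · rintro (⟨q, Q, _, h3, _⟩ | ⟨q, Q, ⟨hne, h1, h2⟩, h3, rfl⟩)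
        · rw [← h3] at h0; simp at h0
        · have := shift_injective h3
          subst this
          refine ⟨by simpa [shift] using hne, by rw [card_shift]; exact h1, ?_⟩
          rw [wt_shift hne]; omega
  · rw [Set.disjoint_left]
    rintro _ ⟨P, _, rfl⟩ ⟨Q, _, h⟩
    have := (Prod.mk.inj h).1
    exact mem_shift_zero Q.1 (by rw [this]; simp)

theorem codesNE_zero_left (m M : ℕ) : (CodesNE m 0 M).ncard = 0 := by
  rw [show CodesNE m 0 M = ∅ by
    ext ⟨p, P⟩
    simp only [CodesNE, Set.mem_ofPred_eq, Set.mem_empty_iff_false, iff_false]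
    rintro ⟨h, h1, _⟩
    have := h.card_pos
    omega]
  simp

theorem codesNE_zero_right (m k : ℕ) : (CodesNE m k 0).ncard = 0 := by
  rw [show CodesNE m k 0 = ∅ by
    ext ⟨p, P⟩
    simp only [CodesNE, Set.mem_ofPred_eq, Set.mem_empty_iff_false, iff_false]
    rintro ⟨⟨s, hs⟩, _, h1⟩
    have := lt_wt hs
    omega]
  simp

/-- The recurrences `codes_succ` and `codesNE_succ` are those of `C(m+k, k) C(M, k)`, by Pascal's
rule in each factor. -/
theorem ncard_codes_succ (m : ℕ) : ∀ k M : ℕ,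
    (Codes (m + 1) k M).ncard = (m + k).choose k * M.choose k := by
  induction m with
  | zero =>
    intro k
    induction k with
    | zero => intro M; simp [codes_succ, codes_zero, codesNE_zero_left]
    | succ k ih =>
      intro M
      rw [codes_succ, codes_zero, if_neg (by omega)]
      induction M with
      | zero => simp [codesNE_zero_right]
      | succ M ihM =>
        rw [codesNE_succ, ih]
        simp only [zero_add] at *
        rw [ihM]
        simp [Nat.choose_succ_succ]
  | succ m ihm =>
    intro k
    induction k with
    | zero => intro M; simp [codes_succ (m + 1), codesNE_zero_left, ihm]
    | succ k ih =>
      intro M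
      have hV : (CodesNE (m + 1) (k + 1) M).ncard =
          (m + 1 + k).choose k * M.choose (k + 1) := by
        induction M with
        | zero => simp [codesNE_zero_right]
        | succ M ihM =>
          rw [codesNE_succ, ih, ihM, Nat.choose_succ_succ M]
          ring
      rw [codes_succ, hV, ihm, show m + 1 + (k + 1) = (m + 1 + k) + 1 by ring,
        Nat.choose_succ_succ (m + 1 + k), show m + (k + 1) = m + 1 + k by ring]
      ring

/-- The number of codes on `m ≥ 1` places. -/
theorem ncard_codes {m : ℕ} (hm : 0 < m) (k M : ℕ) :
    (Codes m k M).ncard = (m + k - 1).choose k * M.choose k := by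
  obtain ⟨m, rfl⟩ : ∃ m', m = m' + 1 := ⟨m - 1, by omega⟩
  rw [ncard_codes_succ, show m + 1 + k - 1 = m + k by omega]

/-! ### Periodic systems and their codes -/

/-- Periodic noncrossing systems on the line `ℤ` with period `m`.  A pair `E i j` with
`j ≤ i + m` is an arc from `i` to `j`; the pair `E i (i + m + 1)` encodes a ray (radius) starting
at `i` and running off to infinity, i.e. towards the centre of the polygon. -/
structure Sys (m : ℕ) (E : ℤ → ℤ → Prop) : Prop where
  per : ∀ i j, E (i + m) (j + m) ↔ E i j
  len : ∀ i j, E i j → i + 2 ≤ j ∧ j ≤ i + m + 1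
  nc : ∀ i j i' j', E i j → E i' j' → i < i' → i' < j → j' ≤ j ∨ j = i + m + 1

/-- `y` is visible from `x` when no arc starting strictly between `x` and `y` passes over `y`. -/
def Vis (E : ℤ → ℤ → Prop) (x y : ℤ) : Prop :=
  ∀ x' j', E x' j' → x < x' → x' < y → j' ≤ y

open Classical in
/-- The number of points of the open interval `(x, j)` visible from `x`. -/
noncomputable def cnt (E : ℤ → ℤ → Prop) (x j : ℤ) : ℕ := #{y ∈ Ioo x j | Vis E x y}

open Classical in
/-- The arcs and rays starting at `x`. -/
noncomputable def ends (m : ℕ) (E : ℤ → ℤ → Prop) (x : ℤ) : Finset ℤ :=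
  {j ∈ Icc (x + 2) (x + m + 1) | E x j}

/-- The number of arcs and rays modulo `m`. -/
noncomputable def size (m : ℕ) (E : ℤ → ℤ → Prop) : ℕ := ∑ x ∈ Ico (0 : ℤ) m, #(ends m E x)

/-- The code of a system at `x`: every arc or ray from `x` contributes the number of vertices
visible below it (minus one). -/
noncomputable def codeZ (m : ℕ) (E : ℤ → ℤ → Prop) (x : ℤ) : Finset ℕ :=
  (ends m E x).image fun j => cnt E x j - 1

/-- The code of a periodic system. -/
noncomputable def code (m : ℕ) (E : ℤ → ℤ → Prop) : Fin m → Finset ℕ :=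
  fun i => codeZ m E ((i : ℕ) : ℤ)

theorem sum_fin_Ico {M : Type*} [AddCommMonoid M] (m : ℕ) (f : ℤ → M) :
    ∑ i : Fin m, f ((i : ℕ) : ℤ) = ∑ x ∈ Ico (0 : ℤ) m, f x := by
  rw [Fin.sum_univ_eq_sum_range (fun i => f (i : ℤ)) m]
  refine Finset.sum_bij (fun i _ => (i : ℤ)) ?_ ?_ ?_ ?_
  · intro i hi; simp at hi ⊢; exact hi
  · intro i _ j _ h; exact_mod_cast h
  · intro x hx
    simp only [Finset.mem_Ico] at hx
    exact ⟨x.toNat, by simp; omega, by simp; omega⟩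
  · intros; rfl

theorem mem_ends {m : ℕ} {E : ℤ → ℤ → Prop} (h : Sys m E) {x j : ℤ} :
    j ∈ ends m E x ↔ E x j := by
  simp only [ends, Finset.mem_filter, Finset.mem_Icc]
  exact ⟨fun h => h.2, fun hE => ⟨h.len _ _ hE, hE⟩⟩

/-- A predicate invariant under a step is invariant under its integer multiples. -/
theorem iff_mul_of_iff {p : ℤ → Prop} {m : ℤ} (h : ∀ x, p (x + m) ↔ p x) (x t : ℤ) :
    p (x + m * t) ↔ p x := by
  have : Function.Periodic p m := fun x => propext (h x)
  have h2 := (this.int_mul t) x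
  rw [mul_comm] at h2
  exact iff_of_eq h2

namespace Sys

variable {m : ℕ} {E E' : ℤ → ℤ → Prop}

theorem shift (h : Sys m E) (i j t : ℤ) : E (i + m * t) (j + m * t) ↔ E i j := by
  have := iff_mul_of_iff (p := fun s => E (i + s) (j + s)) (m := m)
    (fun s => by rw [← add_assoc, ← add_assoc]; exact h.per _ _) 0 t
  simpa using this

theorem vis_shift (h : Sys m E) (x y t : ℤ) : Vis E (x + m * t) (y + m * t) ↔ Vis E x y := by
  constructor
  · intro hv x' j' hE h1 h2
    have := hv (x' + m * t) (j' + m * t) ((h.shift _ _ _).2 hE) (by omega) (by omega)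
    omega
  · intro hv x' j' hE h1 h2
    have := hv (x' - m * t) (j' - m * t)
      ((h.shift _ _ t).1 (by simpa using hE)) (by omega) (by omega)
    omega

theorem cnt_shift (h : Sys m E) (x j t : ℤ) : cnt E (x + m * t) (j + m * t) = cnt E x j := by
  symm
  unfold cnt
  refine Finset.card_bij (fun y _ => y + m * t) ?_ ?_ ?_
  · intro y hy
    simp only [Finset.mem_filter, Finset.mem_Ioo] at hy ⊢
    exact ⟨by omega, (h.vis_shift _ _ _).2 hy.2⟩
  · intro a _ b _ hab; simpa using hab
  · intro y hy
    simp only [Finset.mem_filter, Finset.mem_Ioo] at hy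
    refine ⟨y - m * t, ?_, by ring⟩
    simp only [Finset.mem_filter, Finset.mem_Ioo]
    exact ⟨by omega, (h.vis_shift _ _ t).1 (by simpa using hy.2)⟩

/-- The vertex next to `x` is always visible from `x`. -/
theorem cnt_pos (h : Sys m E) {x j : ℤ} (hj : E x j) : 1 ≤ cnt E x j := by
  refine Finset.card_pos.2 ⟨x + 1, ?_⟩
  have := h.len _ _ hj
  simp only [Finset.mem_filter, Finset.mem_Ioo]
  exact ⟨by omega, fun x' j' _ h1 h2 => by omega⟩

theorem mem_codeZ (h : Sys m E) {x : ℤ} {s : ℕ} :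
    s ∈ codeZ m E x ↔ ∃ j, E x j ∧ cnt E x j = s + 1 := by
  classical
  unfold codeZ
  simp only [Finset.mem_image, mem_ends h]
  constructor
  · rintro ⟨j, hj, rfl⟩
    have := h.cnt_pos hj
    exact ⟨j, hj, by omega⟩
  · rintro ⟨j, hj, hs⟩
    exact ⟨j, hj, by omega⟩

theorem codeZ_shift (h : Sys m E) (x t : ℤ) : codeZ m E (x + m * t) = codeZ m E x := by
  ext s
  rw [h.mem_codeZ, h.mem_codeZ]
  constructor
  · rintro ⟨j, hj, hs⟩
    refine ⟨j - m * t, (h.shift _ _ t).1 (by simpa using hj), ?_⟩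
    rw [← hs, ← h.cnt_shift x _ t]; simp
  · rintro ⟨j, hj, hs⟩
    exact ⟨j + m * t, (h.shift _ _ t).2 hj, by rw [h.cnt_shift, hs]⟩

/-- The end of an arc is visible from its start, because an arc over that end would cross it. -/
theorem vis_of_mem (h : Sys m E) {x j : ℤ} (hj : E x j) (hjm : j ≤ x + m) : Vis E x j := by
  intro x' j' hE h1 h2
  rcases h.nc _ _ _ _ hj hE h1 h2 with h3 | h3
  · exact h3
  · omega

theorem cnt_lt_of_vis {x j j' : ℤ} (hv : Vis E x j) (hx : x < j) (hj : j < j') :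
    cnt E x j < cnt E x j' := by
  classical
  refine Finset.card_lt_card ((Finset.ssubset_iff_of_subset ?_).2 ⟨j, ?_, ?_⟩)
  · intro y hy
    simp only [Finset.mem_filter, Finset.mem_Ioo] at hy ⊢
    exact ⟨by omega, hy.2⟩
  · simp only [Finset.mem_filter, Finset.mem_Ioo]
    exact ⟨by omega, hv⟩
  · simp

/-- A longer arc from `x` sees in addition the end of the shorter one, so arcs from `x` are told
apart by their counts. -/
theorem cnt_lt (h : Sys m E) {x j j' : ℤ} (hE : E x j) (hE' : E x j') (hj : j < j') :
    cnt E x j < cnt E x j' := by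
  have h1 := h.len _ _ hE
  have h2 := h.len _ _ hE'
  exact cnt_lt_of_vis (h.vis_of_mem hE (by omega)) (by omega) hj

theorem cnt_inj (h : Sys m E) {x j j' : ℤ} (hE : E x j) (hE' : E x j')
    (hc : cnt E x j = cnt E x j') : j = j' := by
  rcases lt_trichotomy j j' with h1 | h1 | h1
  · have := h.cnt_lt hE hE' h1; omega
  · exact h1
  · have := h.cnt_lt hE' hE h1; omega

theorem card_codeZ (h : Sys m E) (x : ℤ) : #(codeZ m E x) = #(ends m E x) := by
  classical
  refine Finset.card_image_of_injOn ?_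
  intro j hj j' hj' hc
  have hj := (mem_ends h).1 (Finset.mem_coe.1 hj)
  have hj' := (mem_ends h).1 (Finset.mem_coe.1 hj')
  have k1 := h.cnt_pos hj
  have k2 := h.cnt_pos hj'
  simp only at hc
  exact h.cnt_inj hj hj' (by omega)

/-- The total number of elements of a code is the number of arcs and rays. -/
theorem sum_card_code (h : Sys m E) : ∑ i, #(code m E i) = size m E := by
  unfold code size
  rw [sum_fin_Ico m (fun x => #(codeZ m E x))]
  exact Finset.sum_congr rfl fun x _ => h.card_codeZ x

/-- The two counts below a common arc agree if all shorter arcs agree. -/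
theorem cnt_eq (h : Sys m E) (h' : Sys m E') {x j : ℤ} (hE : E x j) (hE' : E' x j)
    (hjm : j ≤ x + m) (hs : ∀ x' j', j' - x' < j - x → (E x' j' ↔ E' x' j')) :
    cnt E x j = cnt E' x j := by
  classical
  unfold cnt
  congr 1
  refine Finset.filter_congr fun y hy => ?_
  rw [Finset.mem_Ioo] at hy
  constructor
  · intro hv x' j' hx h1 h2
    have h3 := h'.vis_of_mem hE' hjm x' j' hx h1 (by omega)
    exact hv x' j' ((hs _ _ (by omega)).2 hx) h1 h2
  · intro hv x' j' hx h1 h2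
    have h3 := h.vis_of_mem hE hjm x' j' hx h1 (by omega)
    exact hv x' j' ((hs _ _ (by omega)).1 hx) h1 h2

/-- The inductive step for injectivity of the code: a shortest arc of one system that is
missing from the other cannot exist. -/
theorem code_step (h : Sys m E) (h' : Sys m E') (hc : ∀ x, codeZ m E x = codeZ m E' x)
    {x j : ℤ} (hE : E x j) (hs : ∀ x' j', j' - x' < j - x → (E x' j' ↔ E' x' j')) :
    E' x j := by
  classical
  have transfer : ∀ {F F' : ℤ → ℤ → Prop}, Sys m F → Sys m F' →
      (∀ x, codeZ m F x = codeZ m F' x) → ∀ {x j}, F x j →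
        ∃ j', F' x j' ∧ cnt F' x j' = cnt F x j := by
    intro F F' hF hF' hcc x j hj
    obtain ⟨s, hs⟩ : ∃ s, cnt F x j = s + 1 :=
      ⟨cnt F x j - 1, by have := hF.cnt_pos hj; omega⟩
    have := hF.mem_codeZ.2 ⟨j, hj, hs⟩
    rw [hcc] at this
    obtain ⟨j', h1, h2⟩ := hF'.mem_codeZ.1 this
    exact ⟨j', h1, by rw [h2, hs]⟩
  obtain ⟨j', hj', hcnt⟩ := transfer h h' hc hE
  have l1 := h.len _ _ hE
  have l2 := h'.len _ _ hj'
  rcases lt_trichotomy j' j with hlt | rfl | hgt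
  -- The shorter arc to `j'` is common to both systems, so its count is too small.
  · have h1 : E x j' := (hs _ _ (by omega)).2 hj'
    have h2 := h.cnt_eq h' h1 hj' (by omega) (fun x' j'' h3 => hs _ _ (by omega))
    have h3 := h.cnt_lt h1 hE hlt
    omega
  · exact hj'
  · exfalso
    have hjm : j ≤ x + m := by omega
    -- If `j < j'`, all that `x` sees up to `j` in `E` is seen in `E'` as well, and `j` itself too,
    -- which makes the count of `j'` too large.
    have claim : ∀ y, y ≤ j → Vis E x y → Vis E' x y := by
      intro y hy hv x' j'' hx h1 h2
      by_contra h3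
      by_cases h4 : j'' ≤ j
      · exact h3 (hv x' j'' ((hs _ _ (by omega)).2 hx) h1 h2)
      -- An arc of `E'` reaching beyond `j` has the same count as an arc of `E` from the same
      -- point; the latter stays below `j`, so it is shared and has a smaller count.
      · obtain ⟨j3, h5, h6⟩ := transfer h' h (fun x => (hc x).symm) hx
        have h7 := h.vis_of_mem hE hjm x' j3 h5 h1 (by omega)
        have h8 : E' x' j3 := (hs _ _ (by omega)).1 h5
        have h9 := h.cnt_eq h' h5 h8 (by omega) (fun x' j'' h3 => hs _ _ (by omega))
        have h10 := h'.cnt_lt h8 hx (by omega)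
        omega
    have hvj : Vis E' x j := claim j le_rfl (h.vis_of_mem hE hjm)
    have h1 := cnt_lt_of_vis hvj (by omega) hgt
    have h2 : cnt E x j ≤ cnt E' x j := by
      refine Finset.card_le_card fun y hy => ?_
      simp only [Finset.mem_filter, Finset.mem_Ioo] at hy ⊢
      exact ⟨hy.1, claim y (by omega) hy.2⟩
    omega

/-- A periodic noncrossing system is determined by its code. -/
theorem code_injective (hm : 0 < m) (h : Sys m E) (h' : Sys m E')
    (hc : code m E = code m E') : E = E' := by
  have hcz : ∀ x, codeZ m E x = codeZ m E' x := by
    intro x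
    have h1 : x = x % m + m * (x / m) := (Int.emod_add_mul_ediv x m).symm
    have h2 := Int.emod_nonneg x (show (m : ℤ) ≠ 0 by omega)
    have h3 := Int.emod_lt_of_pos x (show (0 : ℤ) < m by omega)
    have h4 := congrFun hc ⟨(x % m).toNat, by omega⟩
    simp only [code, Int.toNat_of_nonneg h2] at h4
    rw [h1, h.codeZ_shift, h'.codeZ_shift, h4]
  -- Induction on the length of arcs.
  have key : ∀ L : ℕ, ∀ x j : ℤ, j - x < L → (E x j ↔ E' x j) := by
    intro L
    induction L with
    | zero =>
      intro x j hL
      constructor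
      · intro hE; have := h.len _ _ hE; omega
      · intro hE; have := h'.len _ _ hE; omega
    | succ L ih =>
      intro x j hL
      constructor
      · intro hE
        exact h.code_step h' hcz hE fun x' j' hlt => ih _ _ (by omega)
      · intro hE
        exact h'.code_step h (fun x => (hcz x).symm) hE fun x' j' hlt => (ih _ _ (by omega)).symm
  funext x j
  exact propext (key (j - x + 1).toNat x j (by omega))

end Sys

/-! ### The weight of a code and covered vertices -/

/-- `y` lies strictly below some arc or ray. -/
def Cov (E : ℤ → ℤ → Prop) (y : ℤ) : Prop := ∃ x j, E x j ∧ x < y ∧ y < j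

open Classical in
/-- The vertices directly below the arcs and rays that start at `x`. -/
noncomputable def below (m : ℕ) (E : ℤ → ℤ → Prop) (x : ℤ) : Finset ℤ :=
  {y ∈ Ioo x (x + m + 1) | Vis E x y ∧ ∃ j, E x j ∧ y < j}

open Classical in
/-- The covered residues modulo `m`. -/
noncomputable def covers (m : ℕ) (E : ℤ → ℤ → Prop) : Finset ℤ := {y ∈ Ico (0 : ℤ) m | Cov E y}

namespace Sys

variable {m : ℕ} {E : ℤ → ℤ → Prop}

theorem mem_below (h : Sys m E) {x y : ℤ} :
    y ∈ below m E x ↔ x < y ∧ Vis E x y ∧ ∃ j, E x j ∧ y < j := by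
  simp only [below, Finset.mem_filter, Finset.mem_Ioo]
  constructor
  · rintro ⟨h1, h2⟩; exact ⟨h1.1, h2⟩
  · rintro ⟨h1, h2, j, h3, h4⟩
    have := h.len _ _ h3
    exact ⟨by omega, h2, j, h3, h4⟩

/-- The largest count at `x` belongs to the longest arc or ray from `x`, under which lie all the
vertices directly below `x`. -/
theorem wt_codeZ (h : Sys m E) (x : ℤ) : wt (codeZ m E x) = #(below m E x) := by
  classical
  apply le_antisymm
  · refine wt_le_iff.2 fun s hs => ?_
    obtain ⟨j, hj, hc⟩ := h.mem_codeZ.1 hs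
    have : cnt E x j ≤ #(below m E x) := by
      refine Finset.card_le_card fun y hy => ?_
      simp only [Finset.mem_filter, Finset.mem_Ioo] at hy
      exact h.mem_below.2 ⟨hy.1.1, hy.2, j, hj, hy.1.2⟩
    omega
  · rcases (ends m E x).eq_empty_or_nonempty with he | hne
    · have : below m E x = ∅ := by
        rw [Finset.eq_empty_iff_forall_notMem]
        intro y hy
        obtain ⟨_, _, j, hj, _⟩ := h.mem_below.1 hy
        have := (mem_ends h).2 hj
        rw [he] at this
        simp at this
      simp [this]
    · obtain ⟨j, hj, hmax⟩ := Finset.exists_max_image (ends m E x) id hne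
      have hj := (mem_ends h).1 hj
      have h1 : #(below m E x) ≤ cnt E x j := by
        refine Finset.card_le_card fun y hy => ?_
        obtain ⟨h1, h2, j', h3, h4⟩ := h.mem_below.1 hy
        have h5 := hmax j' ((mem_ends h).2 h3)
        simp only [id] at h5
        simp only [Finset.mem_filter, Finset.mem_Ioo]
        exact ⟨by omega, h2⟩
      have h2 := h.cnt_pos hj
      have h3 := lt_wt (h.mem_codeZ.2 ⟨j, hj, (show cnt E x j = (cnt E x j - 1) + 1 by omega)⟩)
      omega

theorem cov_shift (h : Sys m E) (y t : ℤ) : Cov E (y + m * t) ↔ Cov E y := by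
  constructor
  · rintro ⟨x, j, h1, h2, h3⟩
    exact ⟨x - m * t, j - m * t, (h.shift _ _ t).1 (by simpa using h1), by omega, by omega⟩
  · rintro ⟨x, j, h1, h2, h3⟩
    exact ⟨x + m * t, j + m * t, (h.shift _ _ t).2 h1, by omega, by omega⟩

theorem mem_below_shift (h : Sys m E) (x y t : ℤ) :
    y + m * t ∈ below m E (x + m * t) ↔ y ∈ below m E x := by
  rw [h.mem_below, h.mem_below, h.vis_shift]
  refine and_congr (by omega) (and_congr Iff.rfl ⟨?_, ?_⟩)
  · rintro ⟨j, h1, h2⟩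
    exact ⟨j - m * t, (h.shift _ _ t).1 (by simpa using h1), by omega⟩
  · rintro ⟨j, h1, h2⟩
    exact ⟨j + m * t, (h.shift _ _ t).2 h1, by omega⟩

/-- A vertex is directly below the arcs of one starting point only. -/
theorem below_unique {x x' y : ℤ} (h : Sys m E) (hy : y ∈ below m E x) (hy' : y ∈ below m E x') :
    x = x' := by
  obtain ⟨h1, h2, j, h3, h4⟩ := h.mem_below.1 hy
  obtain ⟨h1', h2', j', h3', h4'⟩ := h.mem_below.1 hy'
  rcases lt_trichotomy x x' with h5 | h5 | h5
  · have := h2 x' j' h3' h5 h1'; omega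
  · exact h5
  · have := h2' x j h3 h5 h1; omega

/-- Every covered vertex is directly below the last arc that covers it. -/
theorem exists_below (h : Sys m E) {y : ℤ} (hy : Cov E y) : ∃ x, y ∈ below m E x := by
  obtain ⟨x, ⟨j, hj, hxy, hyj⟩, hmax⟩ := Int.exists_greatest_of_bdd
    (P := fun x => ∃ j, E x j ∧ x < y ∧ y < j) ⟨y, fun z ⟨j, _, h2, _⟩ => h2.le⟩ hy
  refine ⟨x, h.mem_below.2 ⟨hxy, ?_, j, hj, hyj⟩⟩
  intro x' j' hE h1 h2
  by_contra h3
  have := hmax x' ⟨j', hE, h2, by omega⟩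
  omega

/-- The total weight of the code is the number of covered residues, since every covered vertex
is directly below exactly one starting point. -/
theorem sum_wt_code (h : Sys m E) : ∑ i, wt (code m E i) = #(covers m E) := by
  classical
  unfold code
  rw [sum_fin_Ico m (fun x => wt (codeZ m E x)),
    Finset.sum_congr rfl (fun x _ => h.wt_codeZ x), ← Finset.card_sigma]
  -- A pair `(x, y)` with `y` directly below `x` goes to the residue of the covered vertex `y`.
  refine Finset.card_bij (fun p _ => p.2 % m) ?_ ?_ ?_
  · rintro ⟨x, y⟩ hp
    simp only [Finset.mem_sigma, Finset.mem_Ico] at hp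
    obtain ⟨h1, _, j, h3, h4⟩ := h.mem_below.1 hp.2
    simp only [covers, Finset.mem_filter, Finset.mem_Ico]
    refine ⟨⟨Int.emod_nonneg _ (by omega), Int.emod_lt_of_pos _ (by omega)⟩, ?_⟩
    rw [← h.cov_shift _ (y / m), Int.emod_add_mul_ediv]
    exact ⟨x, j, h3, h1, h4⟩
  · rintro ⟨x, y⟩ hp ⟨x', y'⟩ hp' hmod
    simp only [Finset.mem_sigma, Finset.mem_Ico] at hp hp' hmod
    have e1 := Int.emod_add_mul_ediv y m
    have e2 := Int.emod_add_mul_ediv y' m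
    have e3 : y' = y + m * (y' / m - y / m) := by rw [mul_sub]; omega
    have h1 := (h.mem_below_shift x y (y' / m - y / m)).2 hp.2
    rw [← e3] at h1
    have h2 := h.below_unique h1 hp'.2
    have h3 : y' / m - y / m = 0 := by
      by_contra hne
      rcases lt_or_gt_of_ne hne with h4 | h4
      · have : (m : ℤ) * (y' / m - y / m) ≤ m * (-1) :=
          mul_le_mul_of_nonneg_left (by omega) (by omega)
        omega
      · have : (m : ℤ) * 1 ≤ m * (y' / m - y / m) :=
          mul_le_mul_of_nonneg_left (by omega) (by omega)
        omega
    rw [h3] at h2 e3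
    simp only [mul_zero, add_zero] at h2 e3
    subst h2; subst e3; rfl
  · intro y hy
    simp only [covers, Finset.mem_filter, Finset.mem_Ico] at hy
    obtain ⟨x, hx⟩ := h.exists_below hy.2
    have e1 := Int.emod_add_mul_ediv x m
    refine ⟨⟨x % m, y + m * (-(x / m))⟩, ?_, ?_⟩
    · simp only [Finset.mem_sigma, Finset.mem_Ico]
      refine ⟨⟨Int.emod_nonneg _ (by omega), Int.emod_lt_of_pos _ (by omega)⟩, ?_⟩
      rw [show x % m = x + m * (-(x / m)) by rw [mul_neg]; omega, h.mem_below_shift]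
      exact hx
    · simp only [Int.add_mul_emod_self_left]
      exact Int.emod_eq_of_lt hy.1.1 hy.1.2

theorem card_covers_le (m : ℕ) (E : ℤ → ℤ → Prop) : #(covers m E) ≤ m := by
  classical
  calc #(covers m E) ≤ #(Ico (0 : ℤ) m) := Finset.card_filter_le _ _
    _ = m := by simp

theorem emod_mem_covers (h : Sys m E) (hm : 0 < m) (y : ℤ) : y % m ∈ covers m E ↔ Cov E y := by
  simp only [covers, Finset.mem_filter, Finset.mem_Ico]
  rw [← h.cov_shift (y % m) (y / m), Int.emod_add_mul_ediv]
  exact ⟨fun h => h.2, fun h => ⟨⟨Int.emod_nonneg _ (by omega), Int.emod_lt_of_pos _ (by omega)⟩, h⟩⟩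

/-- With a ray present every vertex is covered. -/
theorem cov_of_ray (h : Sys m E) (hm : 0 < m) {i : ℤ} (hi : E i (i + m + 1)) (y : ℤ) :
    Cov E y := by
  have e1 := Int.emod_add_mul_ediv (y - i - 1) m
  have e2 := Int.emod_nonneg (y - i - 1) (show (m : ℤ) ≠ 0 by omega)
  have e3 := Int.emod_lt_of_pos (y - i - 1) (show (0 : ℤ) < m by omega)
  exact ⟨_, _, (h.shift _ _ ((y - i - 1) / m)).2 hi, by omega, by omega⟩

/-- Without rays some vertex is uncovered. -/
theorem exists_not_cov (h : Sys m E) (hr : ∀ i, ¬ E i (i + m + 1)) : ∃ y, ¬ Cov E y := by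
  by_cases hne : ∃ i j, E i j
  · obtain ⟨i₀, j₀, h₀⟩ := hne
    obtain ⟨L, ⟨i, j, hij, hL⟩, hmax⟩ := Int.exists_greatest_of_bdd
      (P := fun L => ∃ i j, E i j ∧ j - i = L)
      ⟨m + 1, fun z ⟨i, j, h1, h2⟩ => by have := h.len _ _ h1; omega⟩ ⟨_, i₀, j₀, h₀, rfl⟩
    -- The start of a longest arc is uncovered.
    refine ⟨i, ?_⟩
    rintro ⟨x, j', h1, h2, h3⟩
    rcases h.nc _ _ _ _ h1 hij h2 h3 with h4 | h4
    · have := hmax _ ⟨x, j', h1, rfl⟩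
      omega
    · exact hr x (h4 ▸ h1)
  · exact ⟨0, fun ⟨x, j, h1, _⟩ => hne ⟨x, j, h1⟩⟩

/-- There are no rays exactly when some residue is uncovered. -/
theorem ray_iff (h : Sys m E) (hm : 0 < m) :
    (∀ i, ¬ E i (i + m + 1)) ↔ ∑ i, wt (code m E i) ≤ m - 1 := by
  classical
  rw [h.sum_wt_code]
  constructor
  · intro hr
    obtain ⟨y, hy⟩ := h.exists_not_cov hr
    have : covers m E ⊂ Ico (0 : ℤ) m := by
      refine (Finset.ssubset_iff_of_subset (Finset.filter_subset _ _)).2 ⟨y % m, ?_, ?_⟩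
      · rw [Finset.mem_Ico]
        exact ⟨Int.emod_nonneg _ (by omega), Int.emod_lt_of_pos _ (by omega)⟩
      · exact fun h' => hy ((h.emod_mem_covers hm y).1 h')
    have := Finset.card_lt_card this
    simp at this
    omega
  · intro hle i hi
    have : covers m E = Ico (0 : ℤ) m :=
      Finset.filter_true_of_mem fun y _ => h.cov_of_ray hm hi y
    rw [this] at hle
    simp at hle
    omega

/-- Without rays, all but one residue are covered exactly when there is an arc of length `m`. -/
theorem loop_iff (h : Sys m E) (hm : 2 ≤ m) (hr : ∀ i, ¬ E i (i + m + 1)) :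
    (∀ i, ¬ E i (i + m)) ↔ ∑ i, wt (code m E i) ≤ m - 2 := by
  classical
  rw [h.sum_wt_code]
  constructor
  · intro hl
    by_contra hlt
    obtain ⟨x, hx⟩ := h.exists_not_cov hr
    have hsub : covers m E ⊆ (Ico (0 : ℤ) m).erase (x % m) := by
      intro y hy
      refine Finset.mem_erase.2 ⟨?_, (Finset.mem_filter.1 hy).1⟩
      rintro rfl
      exact hx ((h.emod_mem_covers (by omega) x).1 hy)
    have hxm : x % m ∈ Ico (0 : ℤ) m := by
      rw [Finset.mem_Ico]
      exact ⟨Int.emod_nonneg _ (by omega), Int.emod_lt_of_pos _ (by omega)⟩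
    -- All residues other than that of `x` are covered.
    have heq := Finset.eq_of_subset_of_card_le hsub (by
      rw [Finset.card_erase_of_mem hxm]; simp; omega)
    have hcov : ∀ y, x < y → y < x + m → Cov E y := by
      intro y h1 h2
      rw [← h.emod_mem_covers (by omega), heq]
      refine Finset.mem_erase.2 ⟨?_, ?_⟩
      · intro h3
        have := Int.emod_emod_of_dvd (y - x) (dvd_refl (m : ℤ))
        have h4 : (y - x) % m = 0 := Int.emod_eq_emod_iff_emod_sub_eq_zero.1 h3
        rw [Int.emod_eq_of_lt (by omega) (by omega)] at h4
        omega
      · rw [Finset.mem_Ico]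
        exact ⟨Int.emod_nonneg _ (by omega), Int.emod_lt_of_pos _ (by omega)⟩
    obtain ⟨i, j, hij, h1, h2⟩ := hcov (x + 1) (by omega) (by omega)
    have hix : i = x := by
      by_contra hne
      exact hx ⟨i, j, hij, by omega, by omega⟩
    subst hix
    -- The longest arc from `x` ends in `J < x + m`; what covers `J` starts neither before `x`,
    -- nor at `x`, nor strictly below that arc.
    obtain ⟨J, hJ, hmax⟩ := Finset.exists_max_image (ends m E i) id ⟨j, (mem_ends h).2 hij⟩
    have hJ := (mem_ends h).1 hJ
    have l1 := h.len _ _ hJ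
    have hJ1 : J ≠ i + m + 1 := fun h' => hr i (h' ▸ hJ)
    have hJ2 : J ≠ i + m := fun h' => hl i (h' ▸ hJ)
    obtain ⟨a, b, hab, h3, h4⟩ := hcov J (by omega) (by omega)
    rcases lt_trichotomy a i with h5 | h5 | h5
    · exact hx ⟨a, b, hab, h5, by omega⟩
    · subst h5
      have := hmax b ((mem_ends h).2 hab)
      simp only [id] at this
      omega
    · rcases h.nc _ _ _ _ hJ hab h5 h3 with h6 | h6
      · omega
      · exact hJ1 h6
  · intro hle i hi
    -- A loop at `i` covers every residue except that of `i`.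
    have hsub : (Ico (0 : ℤ) m).erase (i % m) ⊆ covers m E := by
      intro y hy
      rw [Finset.mem_erase, Finset.mem_Ico] at hy
      have e1 := Int.emod_add_mul_ediv i m
      have e2 := Int.emod_nonneg i (show (m : ℤ) ≠ 0 by omega)
      have e3 := Int.emod_lt_of_pos i (show (0 : ℤ) < m by omega)
      simp only [covers, Finset.mem_filter, Finset.mem_Ico]
      refine ⟨hy.2, ?_⟩
      rcases lt_or_gt_of_ne hy.1 with h1 | h1
      · refine ⟨_, _, (h.shift _ _ (-(i / m) - 1)).2 hi, ?_, ?_⟩ <;>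
          rw [mul_sub, mul_neg] <;> omega
      · refine ⟨_, _, (h.shift _ _ (-(i / m))).2 hi, ?_, ?_⟩ <;>
          rw [mul_neg] <;> omega
    have h1 := Finset.card_le_card hsub
    rw [Finset.card_erase_of_mem (by
      rw [Finset.mem_Ico]
      exact ⟨Int.emod_nonneg _ (by omega), Int.emod_lt_of_pos _ (by omega)⟩)] at h1
    simp at h1
    omega

end Sys

/-! ### Decoding -/

/-- The system decoded from a periodic family of finite sets `P` with height function `W`: the
element `s ∈ P i` is drawn as the arc from `i` to the first later vertex of height exceeding
`W (i + 1) + s`, or as a ray when there is none within one period. -/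
def mkE (m : ℕ) (P : ℤ → Finset ℕ) (W : ℤ → ℤ) (i j : ℤ) : Prop :=
  i + 2 ≤ j ∧ j ≤ i + m + 1 ∧ ∃ s ∈ P i, (∀ l, i < l → l < j → W l ≤ W (i + 1) + s) ∧
    (W j = W (i + 1) + s + 1 ∨ j = i + m + 1)

/-- A height function on `ℤ` for prescribed increments `1 - T l`, `0 ≤ l < m`, extended
quasi-periodically. -/
theorem exists_height (m : ℕ) (hm : 0 < m) (T : ℤ → ℤ) (hT : ∀ x, T (x % m) = T x) :
    ∃ W : ℤ → ℤ, (∀ x, W (x + 1) = W x + 1 - T x) ∧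
      ∀ x, W (x + m) = W x + ∑ l ∈ Ico (0 : ℤ) m, (1 - T l) := by
  have hm' : (0 : ℤ) < m := by omega
  -- Whole periods contribute the full sum, the remainder a partial sum.
  refine ⟨fun x => (x / m) * ∑ l ∈ Ico (0 : ℤ) m, (1 - T l)
    + ∑ l ∈ Ico (0 : ℤ) (x % m), (1 - T l), ?_, ?_⟩
  · intro x
    have e1 := Int.emod_add_mul_ediv x m
    have e2 := Int.emod_nonneg x (show (m : ℤ) ≠ 0 by omega)
    have e3 := Int.emod_lt_of_pos x hm'
    rw [← hT x]
    generalize hr0 : x % (m : ℤ) = r at *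
    generalize ht0 : x / (m : ℤ) = t at *
    subst e1
    have hIco : ∑ l ∈ Ico (0 : ℤ) (r + 1), (1 - T l)
        = ∑ l ∈ Ico (0 : ℤ) r, (1 - T l) + (1 - T r) := by
      have : Ico (0 : ℤ) (r + 1) = insert r (Ico (0 : ℤ) r) := by ext y; simp; omega
      rw [this, Finset.sum_insert (by simp)]; ring
    by_cases h : r + 1 < m
    · have h1 : (r + m * t + 1) / (m : ℤ) = t := by
        rw [show r + m * t + 1 = (r + 1) + m * t by ring, Int.add_mul_ediv_left _ _ (by omega),
          Int.ediv_eq_zero_of_lt (by omega) h]; ring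
      have h2 : (r + m * t + 1) % (m : ℤ) = r + 1 := by
        rw [show r + m * t + 1 = (r + 1) + m * t by ring, Int.add_mul_emod_self_left,
          Int.emod_eq_of_lt (by omega) h]
      simp only [h1, h2, hIco, hr0, ht0]; ring
    · have hr : (m : ℤ) = r + 1 := by omega
      have h1 : (r + m * t + 1) / (m : ℤ) = t + 1 := by
        rw [show r + m * t + 1 = m * (t + 1) by rw [hr]; ring]
        exact Int.mul_ediv_cancel_left _ (by omega)
      have h2 : (r + m * t + 1) % (m : ℤ) = 0 := by
        rw [show r + m * t + 1 = m * (t + 1) by rw [hr]; ring]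
        exact Int.mul_emod_right _ _
      simp only [h1, h2, hr0, ht0]
      rw [hr, hIco, Finset.Ico_self, Finset.sum_empty]; ring
  · intro x
    have h1 : (x + m) / (m : ℤ) = x / m + 1 := Int.add_ediv_of_dvd_right (dvd_refl _) |>.trans
      (by rw [Int.ediv_self (by omega)])
    have h2 : (x + m) % (m : ℤ) = x % m := Int.add_emod_right x m
    simp only [h1, h2]; ring

section decode

variable {m : ℕ} {P : ℤ → Finset ℕ} {W : ℤ → ℤ} {c : ℤ}

theorem mkE_len {i j : ℤ} (h : mkE m P W i j) : i + 2 ≤ j ∧ j ≤ i + m + 1 := ⟨h.1, h.2.1⟩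

theorem level_le (hW : ∀ x, W (x + 1) = W x + 1 - wt (P x)) {x : ℤ} {s : ℕ} (hs : s ∈ P x) :
    W (x + 1) + s ≤ W x := by
  have := lt_wt hs
  rw [hW]; omega

theorem step_le (hW : ∀ x, W (x + 1) = W x + 1 - wt (P x)) (x : ℤ) : W (x + 1) ≤ W x + 1 := by
  rw [hW]; omega

/-- The decoded arcs do not cross: the height at the end of an arc exceeds its level, whereas an
arc starting below it has a level at most the height at its start, hence at most the level of
the outer arc. -/
theorem mkE_sys (hW : ∀ x, W (x + 1) = W x + 1 - wt (P x)) (hP : ∀ x, P (x + m) = P x)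
    (hc : ∀ x, W (x + m) = W x + c) : Sys m (mkE m P W) := by
  refine ⟨?_, fun i j h => mkE_len h, ?_⟩
  · intro i j
    unfold mkE
    have h1 : W (i + m + 1) = W (i + 1) + c := by rw [add_right_comm, hc]
    rw [hP, h1, hc]
    constructor
    · rintro ⟨a, b, s, hs, h, h'⟩
      refine ⟨by omega, by omega, s, hs, fun l l1 l2 => ?_, by omega⟩
      have := h (l + m) (by omega) (by omega)
      rw [hc] at this; omega
    · rintro ⟨a, b, s, hs, h, h'⟩
      refine ⟨by omega, by omega, s, hs, fun l l1 l2 => ?_, by omega⟩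
      have := h (l - m) (by omega) (by omega)
      have h2 := hc (l - m)
      rw [sub_add_cancel] at h2; omega
  · rintro i j i' j' ⟨-, -, s, hs, h, h'⟩ ⟨-, -, s', hs', h1, -⟩ hi hj
    by_contra hcon
    have a1 := h1 j hj (by omega)
    have a2 := level_le hW hs'
    have a3 := h i' hi hj
    omega

/-- Every level `s` at `i` is realized by an arc ending at the first vertex above that level, or by
a ray if the height does not exceed the level up to `i + m`.  Since the height increases by at most
one, the arc ends exactly one above the level. -/
theorem exists_mkE (hm : 0 < m) (hW : ∀ x, W (x + 1) = W x + 1 - wt (P x)) (i : ℤ) (s : ℕ) :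
    ∃ j, i + 2 ≤ j ∧ j ≤ i + m + 1 ∧
      (∀ l, i < l → l < j → W l ≤ W (i + 1) + s) ∧
      (W j = W (i + 1) + s + 1 ∨ j = i + m + 1) := by
  classical
  have hex : ∃ t : ℕ, W (i + 2 + t) > W (i + 1) + s ∨ (t : ℤ) + 1 = m := ⟨m - 1, by omega⟩
  have hsp := Nat.find_spec hex
  have hmin := fun t (ht : t < Nat.find hex) => Nat.find_min hex ht
  generalize Nat.find hex = t at hsp hmin
  have hlt : (t : ℤ) + 1 ≤ m := by
    by_contra hcon
    exact hmin (m - 1) (by omega) (by omega)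
  have hle : ∀ l, i < l → l < i + 2 + t → W l ≤ W (i + 1) + s := by
    intro l l1 l2
    by_cases hl : l = i + 1
    · subst hl; omega
    · have := hmin (l - i - 2).toNat (by omega)
      push Not at this
      have h3 := this.1
      rw [show i + 2 + ((l - i - 2).toNat : ℤ) = l by omega] at h3
      exact h3
  refine ⟨i + 2 + t, by omega, by omega, hle, ?_⟩
  rcases hsp with h | h
  · left
    have h1 := step_le hW (i + 1 + t)
    have h2 := hle (i + 1 + t) (by omega) (by omega)
    rw [show i + 1 + (t : ℤ) + 1 = i + 2 + t by ring] at h1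
    omega
  · right; omega

/-- Visible vertices are the strict records of the height function. -/
theorem vis_mkE (hm : 0 < m) (hW : ∀ x, W (x + 1) = W x + 1 - wt (P x)) {x y : ℤ}
    (hy : y ≤ x + m) :
    Vis (mkE m P W) x y ↔ ∀ l, x < l → l < y → W l < W y := by
  classical
  constructor
  · intro hv
    by_contra hcon
    push Not at hcon
    obtain ⟨l, l1, l2, l3⟩ := hcon
    -- The last vertex before `y` that is at least as high as `y` starts an arc over `y`.
    obtain ⟨x', hx', hmax⟩ := Finset.exists_max_image ({l ∈ Ioo x y | W y ≤ W l}) id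
      ⟨l, by simp; omega⟩
    simp only [Finset.mem_filter, Finset.mem_Ioo, id] at hx' hmax
    have hlt : ∀ l, x' < l → l < y → W l < W y := by
      intro l a b
      by_contra hc
      have := hmax l ⟨⟨by omega, b⟩, by omega⟩
      omega
    have hnext : W (x' + 1) ≤ W x' := by
      by_cases h : x' + 1 = y
      · rw [h]; exact hx'.2
      · have := hlt (x' + 1) (by omega) (by omega); omega
    have h1 := hW x'
    obtain ⟨s, hs, hs1⟩ := exists_wt (p := P x') (by omega)
    obtain ⟨j, j1, j2, j3, j4⟩ := exists_mkE hm hW x' s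
    have hv1 := hv x' j ⟨j1, j2, s, hs, j3, j4⟩ hx'.1.1 hx'.1.2
    rcases j4 with j4 | j4
    · rcases eq_or_lt_of_le hv1 with h | h
      · subst h; omega
      · have := hlt j (by omega) h; omega
    · omega
  · rintro h x' j' ⟨-, -, s, hs, h1, -⟩ hx hy'
    by_contra hcon
    have a1 := h1 y hy' (by omega)
    have a2 := level_le hW hs
    have a3 := h x' hx hy'
    omega

open Classical in
/-- A function with upward steps of size at most one takes every value between its initial value
and its maximum as a strict record. -/
theorem card_records (hst : ∀ x, W (x + 1) ≤ W x + 1) (x : ℤ) (n : ℕ) :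
    ∃ M, (∀ l, x < l → l < x + 2 + n → W l ≤ M) ∧ (∃ l, x < l ∧ l < x + 2 + n ∧ W l = M) ∧
      (#{y ∈ Ioo x (x + 2 + n) | ∀ l, x < l → l < y → W l < W y} : ℤ) = M - W (x + 1) + 1 := by
  induction n with
  | zero =>
    refine ⟨W (x + 1), ?_, ⟨x + 1, by omega, by omega, rfl⟩, ?_⟩
    · intro l a b
      rw [show l = x + 1 by push_cast at b; omega]
    · have : {y ∈ Ioo x (x + 2 + (0 : ℕ)) | ∀ l, x < l → l < y → W l < W y} = {x + 1} := by
        ext y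
        simp only [Finset.mem_filter, Finset.mem_Ioo, Finset.mem_singleton]
        constructor
        · rintro ⟨a, -⟩; push_cast at a; omega
        · rintro rfl; exact ⟨by omega, fun l a b => by omega⟩
      rw [this]; simp
  | succ n ih =>
    obtain ⟨M, h1, ⟨l0, h2, h3, h4⟩, h5⟩ := ih
    have hI : Ioo x (x + 2 + (n + 1 : ℕ)) = insert (x + 2 + n) (Ioo x (x + 2 + n)) := by
      ext y; simp only [Finset.mem_insert, Finset.mem_Ioo]; omega
    rw [hI, Finset.filter_insert]
    by_cases hM : M < W (x + 2 + n)
    · have h6 := hst (x + 1 + n)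
      have h7 := h1 (x + 1 + n) (by omega) (by omega)
      rw [show x + 1 + (n : ℤ) + 1 = x + 2 + n by ring] at h6
      refine ⟨W (x + 2 + n), ?_, ⟨x + 2 + n, by omega, by omega, rfl⟩, ?_⟩
      · intro l a b
        by_cases hl : l = x + 2 + n
        · rw [hl]
        · have := h1 l a (by omega); omega
      · rw [if_pos (fun l a b => lt_of_le_of_lt (h1 l a b) hM),
          Finset.card_insert_of_notMem (by simp)]
        push_cast
        rw [h5]; omega
    · refine ⟨M, ?_, ⟨l0, h2, by omega, h4⟩, ?_⟩
      · intro l a b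
        by_cases hl : l = x + 2 + n
        · rw [hl]; omega
        · exact h1 l a (by omega)
      · rw [if_neg (fun h => by have := h l0 h2 h3; omega), h5]

/-- The arc drawn for the level `s` has count `s + 1`. -/
theorem cnt_mkE (hm : 0 < m) (hW : ∀ x, W (x + 1) = W x + 1 - wt (P x))
    (hc : ∀ x, W (x + m) = W x + c) (hc0 : 0 ≤ c) {i j : ℤ} {s : ℕ} (hs : s ∈ P i)
    (h1 : i + 2 ≤ j) (h2 : j ≤ i + m + 1) (h3 : ∀ l, i < l → l < j → W l ≤ W (i + 1) + s)
    (h4 : W j = W (i + 1) + s + 1 ∨ j = i + m + 1) : cnt (mkE m P W) i j = s + 1 := by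
  classical
  -- The height just before the end of the arc equals the level; for a ray this uses that the
  -- height does not decrease over a period.
  have hlast : W (j - 1) = W (i + 1) + s := by
    have a1 := h3 (j - 1) (by omega) (by omega)
    rcases h4 with h4 | h4
    · have := step_le hW (j - 1)
      rw [sub_add_cancel] at this
      omega
    · have a2 := hc i
      have a3 := level_le hW hs
      rw [h4, show i + (m : ℤ) + 1 - 1 = i + m by ring] at a1 ⊢
      omega
  -- The visible vertices are the strict records, taking the values `W (i + 1), …, W (i + 1) + s`.
  obtain ⟨M, a1, ⟨l0, a2, a3, a4⟩, a5⟩ := card_records (step_le hW) i (j - i - 2).toNat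
  rw [show i + 2 + ((j - i - 2).toNat : ℤ) = j by omega] at a1 a3 a5
  have b1 := a1 (j - 1) (by omega) (by omega)
  have b2 := h3 l0 a2 a3
  have : cnt (mkE m P W) i j = #{y ∈ Ioo i j | ∀ l, i < l → l < y → W l < W y} := by
    unfold cnt
    congr 1
    refine Finset.filter_congr fun y hy => ?_
    rw [Finset.mem_Ioo] at hy
    exact vis_mkE hm hW (by omega)
  omega

/-- Decoding is a right inverse of taking codes. -/
theorem codeZ_mkE (hm : 0 < m) (hW : ∀ x, W (x + 1) = W x + 1 - wt (P x))
    (hP : ∀ x, P (x + m) = P x)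
    (hc : ∀ x, W (x + m) = W x + c) (hc0 : 0 ≤ c) (x : ℤ) : codeZ m (mkE m P W) x = P x := by
  ext s
  rw [(mkE_sys hW hP hc).mem_codeZ]
  constructor
  · rintro ⟨j, ⟨h1, h2, s', hs', h3, h4⟩, h5⟩
    rw [cnt_mkE hm hW hc hc0 hs' h1 h2 h3 h4] at h5
    rwa [show s = s' by omega]
  · intro hs
    obtain ⟨j, h1, h2, h3, h4⟩ := exists_mkE hm hW x s
    exact ⟨j, ⟨h1, h2, s, hs, h3, h4⟩, cnt_mkE hm hW hc hc0 hs h1 h2 h3 h4⟩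

end decode

/-- Every family of finite sets of total weight at most `m` is the code of a system. -/
theorem code_surjective {m : ℕ} (hm : 0 < m) (p : Fin m → Finset ℕ) (hp : ∑ i, wt (p i) ≤ m) :
    ∃ E, Sys m E ∧ code m E = p := by
  have hm' : (m : ℤ) ≠ 0 := by omega
  have hlt : ∀ x : ℤ, (x % m).toNat < m := fun x => by
    have := Int.emod_lt_of_pos x (show (0 : ℤ) < m by omega)
    omega
  let P : ℤ → Finset ℕ := fun x => p ⟨(x % m).toNat, hlt x⟩
  have hP0 : ∀ i : Fin m, P ((i : ℕ) : ℤ) = p i := by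
    intro i
    have : (((i : ℕ) : ℤ) % m).toNat = i := by
      rw [Int.emod_eq_of_lt (by omega) (by have := i.2; omega)]; simp
    simp only [P]
    congr 1
    exact Fin.ext this
  have hPm : ∀ x, P (x % m) = P x := by
    intro x; simp only [P, Int.emod_emod_of_dvd x (dvd_refl (m : ℤ))]
  have hP : ∀ x, P (x + m) = P x := by
    intro x; simp only [P, Int.add_emod_right]
  obtain ⟨W, hW, hc⟩ := exists_height m hm (fun x => (wt (P x) : ℤ)) (fun x => by rw [hPm])
  refine ⟨mkE m P W, mkE_sys hW hP hc, ?_⟩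
  funext i
  unfold code
  rw [codeZ_mkE hm hW hP hc, hP0]
  rw [Finset.sum_sub_distrib, ← sum_fin_Ico m (fun x => (wt (P x) : ℤ))]
  simp only [hP0]
  have : ((∑ i, wt (p i) : ℕ) : ℤ) ≤ m := by exact_mod_cast hp
  push_cast at this
  simp
  exact this

/-- Systems of size `k` correspond to codes of total size `k` and total weight at most `m`, and
a bound `M` on the weight cuts out the systems with a property `Q`. -/
theorem ncard_sys_aux {m : ℕ} (hm : 0 < m) (k M : ℕ) (hM : M ≤ m) (Q : (ℤ → ℤ → Prop) → Prop)
    (hQ : ∀ E, Sys m E → (Q E ↔ ∑ i, wt (code m E i) ≤ M)) :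
    {E | Sys m E ∧ size m E = k ∧ Q E}.ncard = (m + k - 1).choose k * M.choose k ∧
    {E | Sys m E ∧ size m E = k ∧ Q E}.Finite := by
  have hbij : Set.BijOn (code m) {E | Sys m E ∧ size m E = k ∧ Q E} (Codes m k M) := by
    refine ⟨?_, ?_, ?_⟩
    · rintro E ⟨h, hk, hq⟩
      exact ⟨h.sum_card_code.trans hk, (hQ E h).1 hq⟩
    · rintro E ⟨h, -, -⟩ E' ⟨h', -, -⟩ he
      exact Sys.code_injective hm h h' he
    · rintro p ⟨h1, h2⟩
      obtain ⟨E, hE, rfl⟩ := code_surjective hm p (h2.trans hM)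
      exact ⟨E, ⟨hE, hE.sum_card_code.symm.trans h1, (hQ E hE).2 h2⟩, rfl⟩
  constructor
  · rw [← ncard_codes hm, ← hbij.image_eq, hbij.injOn.ncard_image]
  · exact Set.Finite.of_finite_image (hbij.image_eq ▸ codes_finite m k M) hbij.injOn

/-- All systems are counted by codes of weight at most `m`. -/
theorem ncard_sys {m : ℕ} (hm : 0 < m) (k : ℕ) :
    {E | Sys m E ∧ size m E = k}.ncard = (m + k - 1).choose k * m.choose k ∧
    {E | Sys m E ∧ size m E = k}.Finite := by
  have := ncard_sys_aux hm k m le_rfl (fun _ => True) fun E h => by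
    rw [h.sum_wt_code]; simp [Sys.card_covers_le]
  simpa using this

/-- By `ray_iff`, systems without rays are counted by codes of weight at most `m - 1`. -/
theorem ncard_sys_noray {m : ℕ} (hm : 0 < m) (k : ℕ) :
    {E | Sys m E ∧ size m E = k ∧ ∀ i, ¬ E i (i + m + 1)}.ncard
      = (m + k - 1).choose k * (m - 1).choose k :=
  (ncard_sys_aux hm k (m - 1) (by omega) _ fun _ h => h.ray_iff hm).1

/-- By `loop_iff`, systems without rays and loops are counted by codes of weight at most `m - 2`. -/
theorem ncard_sys_noloop {m : ℕ} (hm : 2 ≤ m) (k : ℕ) :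
    {E | Sys m E ∧ size m E = k ∧ (∀ i, ¬ E i (i + m + 1)) ∧ ∀ i, ¬ E i (i + m)}.ncard
      = (m + k - 1).choose k * (m - 2).choose k := by
  refine (ncard_sys_aux (by omega) k (m - 2) (by omega) _ fun E h => ?_).1
  constructor
  · rintro ⟨h1, h2⟩; exact (h.loop_iff hm h1).1 h2
  · intro h1
    have h2 := (h.ray_iff (by omega)).2 (by omega)
    exact ⟨h2, (h.loop_iff hm h2).2 h1⟩

/-! ### Systems whose loops and rays form a single class -/

/-- A marked system: a system with neither loops nor rays together with one marked
residue class modulo `m` that is not covered by any arc. -/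
structure Marked (m : ℕ) (p : (ℤ → ℤ → Prop) × (ℤ → Prop)) : Prop where
  sys : Sys m p.1
  short : ∀ i j, p.1 i j → j < i + m
  per : ∀ i, p.2 (i + m) ↔ p.2 i
  ex : ∃ i, p.2 i
  uniq : ∀ i j, p.2 i → p.2 j → (m : ℤ) ∣ i - j
  free : ∀ i j x, p.1 i j → p.2 x → i < x → x < j → False

/-- Draw a loop (if `u`) and a ray (if `v`) at the marked class. -/
def draw (m : ℕ) (u v : Prop) (p : (ℤ → ℤ → Prop) × (ℤ → Prop)) (i j : ℤ) : Prop :=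
  p.1 i j ∨ (u ∧ j = i + m ∧ p.2 i) ∨ (v ∧ j = i + m + 1 ∧ p.2 i)

/-- Systems of size `k` having loops iff `u`, rays iff `v`, all of them at a single class. -/
def Drawn (m : ℕ) (u v : Prop) (k : ℕ) : Set (ℤ → ℤ → Prop) :=
  {E | Sys m E ∧ size m E = k ∧ (u ↔ ∃ i, E i (i + m)) ∧ (v ↔ ∃ i, E i (i + m + 1)) ∧
    ∀ i j, (E i (i + m) ∨ E i (i + m + 1)) → (E j (j + m) ∨ E j (j + m + 1)) → (m : ℤ) ∣ i - j}

theorem dvd_lt {m x : ℤ} (h : m ∣ x) (h1 : -m < x) (h2 : x < m) : x = 0 :=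
  Int.eq_zero_of_abs_lt_dvd h (abs_lt.2 ⟨h1, h2⟩)

open Classical in
/-- A single residue class has one representative in `[0, m)`. -/
theorem card_class {m : ℕ} (hm : 0 < m) {D : ℤ → Prop} (hper : ∀ i, D (i + m) ↔ D i)
    (hex : ∃ i, D i) (huniq : ∀ i j, D i → D j → (m : ℤ) ∣ i - j) :
    #{x ∈ Ico (0 : ℤ) m | D x} = 1 := by
  obtain ⟨i, hi⟩ := hex
  rw [Finset.card_eq_one]
  have e2 := Int.emod_nonneg i (show (m : ℤ) ≠ 0 by omega)
  have e3 := Int.emod_lt_of_pos i (show (0 : ℤ) < m by omega)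
  have hi' : D (i % m) := by
    rw [← Int.emod_add_mul_ediv i m, iff_mul_of_iff hper] at hi
    exact hi
  refine ⟨i % m, ?_⟩
  ext x
  simp only [Finset.mem_filter, Finset.mem_Ico, Finset.mem_singleton]
  constructor
  · rintro ⟨a, b⟩
    have := dvd_lt (huniq _ _ b hi') (by omega) (by omega)
    omega
  · rintro rfl; exact ⟨⟨e2, e3⟩, hi'⟩

/-- A loop or ray at an uncovered class crosses nothing. -/
theorem draw_sys {m : ℕ} (hm : 2 ≤ m) {u v : Prop} {p : (ℤ → ℤ → Prop) × (ℤ → Prop)}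
    (h : Marked m p) : Sys m (draw m u v p) := by
  refine ⟨?_, ?_, ?_⟩
  · intro i j
    unfold draw
    rw [h.sys.per, h.per, show (j + m = i + m + m) ↔ j = i + m by omega,
      show (j + m = i + m + m + 1) ↔ j = i + m + 1 by omega]
  · rintro i j (h1 | ⟨-, h1, -⟩ | ⟨-, h1, -⟩)
    · exact h.sys.len _ _ h1
    · omega
    · omega
  · rintro i j i' j' h1 h2 hi hj
    rcases h1 with h1 | ⟨-, h1, h1'⟩ | ⟨-, h1, h1'⟩
    · rcases h2 with h2 | ⟨-, h2, h2'⟩ | ⟨-, h2, h2'⟩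
      · exact h.sys.nc _ _ _ _ h1 h2 hi hj
      · exact (h.free _ _ _ h1 h2' hi hj).elim
      · exact (h.free _ _ _ h1 h2' hi hj).elim
    · rcases h2 with h2 | ⟨-, h2, h2'⟩ | ⟨-, h2, h2'⟩
      · left
        by_contra hcon
        exact h.free _ _ (i + m) h2 ((h.per i).2 h1') (by omega) (by omega)
      · have := dvd_lt (h.uniq _ _ h2' h1') (by omega) (by omega); omega
      · have := dvd_lt (h.uniq _ _ h2' h1') (by omega) (by omega); omega
    · right; exact h1

open Classical in
/-- Each of the classes of loops and of rays contributes one to the size. -/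
theorem draw_size {m : ℕ} (hm : 2 ≤ m) {u v : Prop} {p : (ℤ → ℤ → Prop) × (ℤ → Prop)}
    (h : Marked m p) :
    size m (draw m u v p) = size m p.1 + (if u then 1 else 0) + (if v then 1 else 0) := by
  have hs : Sys m (draw m u v p) := draw_sys hm h
  have hends : ∀ x, #(ends m (draw m u v p) x) = #(ends m p.1 x) +
      (if u then (if p.2 x then 1 else 0) else 0) +
      (if v then (if p.2 x then 1 else 0) else 0) := by
    intro x
    have : ends m (draw m u v p) x = (ends m p.1 x ∪ (if u ∧ p.2 x then {x + (m : ℤ)} else ∅)) ∪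
        (if v ∧ p.2 x then {x + (m : ℤ) + 1} else ∅) := by
      ext j
      rw [mem_ends hs, Finset.mem_union, Finset.mem_union, mem_ends h.sys]
      unfold draw
      split_ifs <;> simp <;> tauto
    rw [this, Finset.card_union_of_disjoint, Finset.card_union_of_disjoint]
    · by_cases hu : u <;> by_cases hv : v <;> by_cases hp : p.2 x <;> simp [hu, hv, hp]
    · rw [Finset.disjoint_left]
      intro j hj
      rw [mem_ends h.sys] at hj
      have := h.short _ _ hj
      split_ifs <;> simp; omega
    · rw [Finset.disjoint_left]
      intro j hj
      rw [Finset.mem_union, mem_ends h.sys] at hj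
      rcases hj with hj | hj
      · have := h.short _ _ hj
        split_ifs <;> simp; omega
      · split_ifs at hj <;> simp at hj
        split_ifs <;> simp; omega
  unfold size
  rw [Finset.sum_congr rfl fun x _ => hends x, Finset.sum_add_distrib, Finset.sum_add_distrib]
  have hc := card_class (by omega) h.per h.ex h.uniq
  rw [Finset.card_filter] at hc
  by_cases hu : u <;> by_cases hv : v <;> simp only [hu, hv, if_true, if_false, hc] <;> simp

/-- Erasing loops and rays inverts drawing them. -/
theorem exists_draw {m : ℕ} {u v : Prop} (huv : u ∨ v) {k : ℕ}
    {E : ℤ → ℤ → Prop} (hmem : E ∈ Drawn m u v k) : ∃ p, Marked m p ∧ draw m u v p = E := by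
  obtain ⟨hE, hsz, hu, hv, huniq⟩ := hmem
  have hperD : ∀ i, (E (i + m) (i + m + m) ∨ E (i + m) (i + m + m + 1)) ↔
      (E i (i + m) ∨ E i (i + m + 1)) := by
    intro i
    rw [hE.per, show i + (m : ℤ) + m + 1 = i + m + 1 + m by ring, hE.per]
  have hp : Marked m (fun i j => E i j ∧ j < i + m,
      fun i => E i (i + m) ∨ E i (i + m + 1)) := by
    refine ⟨⟨?_, ?_, ?_⟩, ?_, hperD, ?_, huniq, ?_⟩
    · intro i j
      show (E (i + m) (j + m) ∧ j + m < i + m + m) ↔ (E i j ∧ j < i + m)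
      rw [hE.per, show (j + m < i + m + m) ↔ j < i + m by omega]
    · intro i j h; exact hE.len _ _ h.1
    · intro i j i' j' h1 h2; exact hE.nc _ _ _ _ h1.1 h2.1
    · intro i j h; exact h.2
    · rcases huv with h | h
      · obtain ⟨i, hi⟩ := hu.1 h; exact ⟨i, Or.inl hi⟩
      · obtain ⟨i, hi⟩ := hv.1 h; exact ⟨i, Or.inr hi⟩
    · rintro i j x ⟨h1, h2⟩ (h3 | h3) h4 h5
      · have := hE.nc _ _ _ _ h1 h3 h4 h5; omega
      · have := hE.nc _ _ _ _ h1 h3 h4 h5; omega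
  have hdraw : draw m u v (fun i j => E i j ∧ j < i + m,
      fun i => E i (i + m) ∨ E i (i + m + 1)) = E := by
    -- By uniqueness of the class, one loop (ray) at the class entails loops (rays) at all of it.
    have hcls : ∀ (s : ℤ), (∃ i, E i (i + s)) → (s = m ∨ s = m + 1) → ∀ i,
        (E i (i + m) ∨ E i (i + m + 1)) → E i (i + s) := by
      rintro s ⟨i0, h0⟩ hs i hi
      obtain ⟨t, ht⟩ := huniq i i0 hi (by
        rcases hs with rfl | rfl
        · exact Or.inl h0
        · right; rwa [add_assoc])
      rw [show i = i0 + m * t by omega, show i0 + m * t + s = i0 + s + m * t by ring, hE.shift]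
      exact h0
    funext i j
    refine propext ⟨?_, ?_⟩
    · rintro (h | ⟨h, h1, h2⟩ | ⟨h, h1, h2⟩)
      · exact h.1
      · subst h1
        exact hcls m (hu.1 h) (Or.inl rfl) i h2
      · subst h1
        rw [add_assoc]
        exact hcls (m + 1) (by simpa only [add_assoc] using hv.1 h) (Or.inr rfl) i h2
    · intro h
      have := hE.len _ _ h
      rcases lt_trichotomy j (i + m) with h1 | h1 | h1
      · exact Or.inl ⟨h, h1⟩
      · subst h1; exact Or.inr (Or.inl ⟨hu.2 ⟨i, h⟩, rfl, Or.inl h⟩)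
      · obtain rfl : j = i + m + 1 := by omega
        exact Or.inr (Or.inr ⟨hv.2 ⟨i, h⟩, rfl, Or.inr h⟩)
  exact ⟨_, hp, hdraw⟩

open Classical in
/-- Systems of `Drawn m u v` correspond to marked systems, whatever is drawn at the mark. -/
theorem draw_bijOn {m : ℕ} (hm : 2 ≤ m) {u v : Prop} (huv : u ∨ v) (k k' : ℕ)
    (hk' : k' = k + (if u then 1 else 0) + (if v then 1 else 0)) :
    Set.BijOn (draw m u v) {p | Marked m p ∧ size m p.1 = k} (Drawn m u v k') := by
  have hloop : ∀ p, Marked m p → ∀ i, draw m u v p i (i + m) ↔ u ∧ p.2 i := by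
    intro p hp i
    constructor
    · rintro (h | ⟨h, -, h'⟩ | ⟨-, h, -⟩)
      · have := hp.short _ _ h; omega
      · exact ⟨h, h'⟩
      · omega
    · rintro ⟨h1, h2⟩; exact Or.inr (Or.inl ⟨h1, rfl, h2⟩)
  have hray : ∀ p, Marked m p → ∀ i, draw m u v p i (i + m + 1) ↔ v ∧ p.2 i := by
    intro p hp i
    constructor
    · rintro (h | ⟨-, h, -⟩ | ⟨h, -, h'⟩)
      · have := hp.short _ _ h; omega
      · omega
      · exact ⟨h, h'⟩
    · rintro ⟨h1, h2⟩; exact Or.inr (Or.inr ⟨h1, rfl, h2⟩)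
  refine ⟨?_, ?_, ?_⟩
  · rintro p ⟨hp, hk⟩
    refine ⟨draw_sys hm hp, ?_, ?_, ?_, ?_⟩
    · rw [draw_size hm hp, hk, hk']
    · simp only [hloop p hp]
      obtain ⟨i, hi⟩ := hp.ex
      exact ⟨fun h => ⟨i, h, hi⟩, fun ⟨_, h, _⟩ => h⟩
    · simp only [hray p hp]
      obtain ⟨i, hi⟩ := hp.ex
      exact ⟨fun h => ⟨i, h, hi⟩, fun ⟨_, h, _⟩ => h⟩
    · intro i j
      rw [hloop p hp, hray p hp, hloop p hp, hray p hp]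
      intro h1 h2
      exact hp.uniq _ _ (by tauto) (by tauto)
  · rintro p ⟨hp, -⟩ q ⟨hq, -⟩ he
    have he' : ∀ i j, draw m u v p i j ↔ draw m u v q i j := fun i j => by rw [he]
    refine Prod.ext ?_ ?_
    · funext i j
      have key : ∀ p, Marked m p → (p.1 i j ↔ draw m u v p i j ∧ j < i + m) := by
        intro p hp
        constructor
        · intro h; exact ⟨Or.inl h, hp.short _ _ h⟩
        · rintro ⟨h | ⟨-, h, -⟩ | ⟨-, h, -⟩, h'⟩
          · exact h
          · omega
          · omega
      exact propext (by rw [key p hp, key q hq, he'])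
    · funext i
      have h1 := he' i (i + m)
      have h2 := he' i (i + m + 1)
      rw [hloop p hp, hloop q hq] at h1
      rw [hray p hp, hray q hq] at h2
      exact propext (by tauto)
  · intro E hE
    obtain ⟨p, hp, rfl⟩ := exists_draw huv hE
    refine ⟨p, ⟨hp, ?_⟩, rfl⟩
    have h1 := hE.2.1
    rw [draw_size hm hp] at h1
    omega

/-- Loops, and rays in presence of a loop, occupy a single class. -/
theorem Sys.loop_unique {m : ℕ} (hm : 2 ≤ m) {E : ℤ → ℤ → Prop} (hE : Sys m E) {i j : ℤ}
    (h : E i (i + m)) (h' : E j (j + m) ∨ E j (j + m + 1)) : (m : ℤ) ∣ i - j := by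
  have e1 := Int.emod_add_mul_ediv (j - i) m
  have e2 := Int.emod_nonneg (j - i) (show (m : ℤ) ≠ 0 by omega)
  have e3 := Int.emod_lt_of_pos (j - i) (show (0 : ℤ) < m by omega)
  generalize (j - i) % (m : ℤ) = r at *
  generalize (j - i) / (m : ℤ) = t at *
  by_cases hr : r = 0
  · exact ⟨-t, by rw [mul_neg]; omega⟩
  · exfalso
    obtain rfl : j = i + r + m * t := by omega
    rcases h' with h' | h'
    · rw [show i + r + m * t + m = i + r + m + m * t by ring, hE.shift] at h'
      have := hE.nc _ _ _ _ h h' (by omega) (by omega); omega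
    · rw [show i + r + m * t + m + 1 = i + r + m + 1 + m * t by ring, hE.shift] at h'
      have := hE.nc _ _ _ _ h h' (by omega) (by omega); omega

theorem drawn_finite {m : ℕ} (hm : 2 ≤ m) (u v : Prop) (k : ℕ) : (Drawn m u v k).Finite :=
  (ncard_sys (by omega) k).2.subset fun _ h => ⟨h.1, h.2.1⟩

/-- In presence of a loop the uniqueness of the class is automatic. -/
theorem drawn_loop_iff {m : ℕ} (hm : 2 ≤ m) (v : Prop) (k : ℕ) (E : ℤ → ℤ → Prop) :
    E ∈ Drawn m True v k ↔ Sys m E ∧ size m E = k ∧ (∃ i, E i (i + m)) ∧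
      (v ↔ ∃ i, E i (i + m + 1)) := by
  constructor
  · rintro ⟨h1, h2, h3, h4, -⟩; exact ⟨h1, h2, h3.1 trivial, h4⟩
  · rintro ⟨h1, h2, h3, h4⟩
    refine ⟨h1, h2, by simpa using h3, h4, fun i j hi hj => ?_⟩
    obtain ⟨l, hl⟩ := h3
    have a1 := h1.loop_unique hm hl hi
    have a2 := h1.loop_unique hm hl hj
    have := dvd_sub a2 a1
    rwa [show l - j - (l - i) = i - j by ring] at this

open Classical in
/-- A drawn system contains at least what is drawn. -/
theorem drawn_empty {m : ℕ} (hm : 2 ≤ m) {u v : Prop} (huv : u ∨ v) {k : ℕ}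
    (hk : k < (if u then 1 else 0) + (if v then 1 else 0)) : Drawn m u v k = ∅ := by
  refine Set.eq_empty_iff_forall_notMem.2 fun E hE => ?_
  obtain ⟨p, hp, rfl⟩ := exists_draw huv hE
  have h1 := hE.2.1
  rw [draw_size hm hp] at h1
  omega

/-- At the marked class one may equally draw a ray, a loop, or both. -/
theorem ncard_drawn {m : ℕ} (hm : 2 ≤ m) (k : ℕ) :
    (Drawn m True False k).ncard = (Drawn m False True k).ncard ∧
    (Drawn m True True (k + 1)).ncard = (Drawn m False True k).ncard := by
  cases k with
  | zero =>
    rw [drawn_empty hm (u := False) (v := True) (by simp) (by simp),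
      drawn_empty hm (u := True) (v := False) (by simp) (by simp),
      drawn_empty hm (u := True) (v := True) (by simp) (by simp)]
    simp
  | succ k =>
    have h1 := draw_bijOn hm (u := False) (v := True) (by simp) k (k + 1) (by simp)
    have h2 := draw_bijOn hm (u := True) (v := False) (by simp) k (k + 1) (by simp)
    have h3 := draw_bijOn hm (u := True) (v := True) (by simp) k (k + 1 + 1) (by simp)
    rw [← h1.image_eq, ← h2.image_eq, ← h3.image_eq, h1.injOn.ncard_image, h2.injOn.ncard_image,
      h3.injOn.ncard_image]
    simp

/-- Systems with a loop but without rays, counted by subtraction. -/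
theorem ncard_single {m : ℕ} (hm : 2 ≤ m) (k : ℕ) :
    (Drawn m False True k).ncard + (m + k - 1).choose k * (m - 2).choose k
      = (m + k - 1).choose k * (m - 1).choose k := by
  rw [← (ncard_drawn hm k).1, ← ncard_sys_noloop hm, ← ncard_sys_noray (by omega),
    ← Set.ncard_union_eq _ (drawn_finite hm _ _ _)
      ((ncard_sys (by omega) k).2.subset fun _ h => ⟨h.1, h.2.1⟩)]
  · congr 1
    ext E
    rw [Set.mem_union, drawn_loop_iff hm]
    simp only [Set.mem_ofPred_eq, false_iff, not_exists]
    by_cases h : ∃ i, E i (i + m)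
    · have : ¬ ∀ i, ¬ E i (i + m) := by push Not; exact h
      tauto
    · have : ∀ i, ¬ E i (i + m) := by push Not at h; exact h
      tauto
  · rw [Set.disjoint_left]
    rintro E h1 h2
    obtain ⟨i, hi⟩ := ((drawn_loop_iff hm _ _ _).1 h1).2.2.1
    exact h2.2.2.2 i hi

/-- Systems without loops, counted by subtraction. -/
theorem ncard_noloop {m : ℕ} (hm : 2 ≤ m) (k : ℕ) :
    {E | Sys m E ∧ size m E = k ∧ ∀ i, ¬ E i (i + m)}.ncard + (Drawn m False True k).ncard
      + (if k = 0 then 0 else (Drawn m False True (k - 1)).ncard)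
      = (m + k - 1).choose k * m.choose k := by
  -- Erasing the loop turns systems with loops and rays into those with rays only, one smaller.
  have hrt : (if k = 0 then 0 else (Drawn m False True (k - 1)).ncard)
      = (Drawn m True True k).ncard := by
    cases k with
    | zero => rw [drawn_empty hm (u := True) (v := True) (by simp) (by simp)]; simp
    | succ k => rw [(ncard_drawn hm k).2]; simp
  have hfin : {E | Sys m E ∧ size m E = k ∧ ∀ i, ¬ E i (i + m)}.Finite :=
    (ncard_sys (by omega) k).2.subset fun _ h => ⟨h.1, h.2.1⟩
  rw [hrt, ← (ncard_drawn hm k).1, ← (ncard_sys (by omega) k).1,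
    ← Set.ncard_union_eq _ hfin (drawn_finite hm _ _ _),
    ← Set.ncard_union_eq _ (hfin.union (drawn_finite hm _ _ _)) (drawn_finite hm _ _ _)]
  · congr 1
    ext E
    rw [Set.mem_union, Set.mem_union, drawn_loop_iff hm, drawn_loop_iff hm]
    simp only [Set.mem_ofPred_eq, false_iff, true_iff]
    have : (∀ i, ¬ E i (i + m)) ↔ ¬ ∃ i, E i (i + m) := not_exists.symm
    rw [this]
    tauto
  · rw [Set.disjoint_left]
    rintro E h1 h2
    rw [drawn_loop_iff hm] at h2
    rcases h1 with h1 | h1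
    · obtain ⟨i, hi⟩ := h2.2.2.1
      exact h1.2.2 i hi
    · rw [drawn_loop_iff hm] at h1
      simp only [false_iff, true_iff] at h1 h2
      exact h1.2.2.2 h2.2.2.2
  · rw [Set.disjoint_left]
    rintro E h1 h2
    obtain ⟨i, hi⟩ := ((drawn_loop_iff hm _ _ _).1 h2).2.2.1
    exact h1.2.2 i hi

/-! ### Wrapping a periodic system around the polygon -/

section cyclic

variable {N : ℕ}

/-- The standard representative of an integer in the first turn. -/
theorem val_intCast_of [NeZero N] {x : ℤ} (h1 : 0 ≤ x) (h2 : x < N) : (((x : ZMod N).val : ℕ) : ℤ) = x := by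
  rw [ZMod.val_intCast, Int.emod_eq_of_lt h1 h2]

/-- The standard representative of an integer in the second turn. -/
theorem val_intCast_of' [NeZero N] {x : ℤ} (h1 : N ≤ x) (h2 : x < N + N) :
    (((x : ZMod N).val : ℕ) : ℤ) = x - N := by
  rw [ZMod.val_intCast, ← Int.sub_emod_right, Int.emod_eq_of_lt (by omega) (by omega)]

theorem cast_val [NeZero N] (x : ZMod N) : (((x.val : ℕ) : ℤ) : ZMod N) = x := by simp

/-- Congruent integers less than a full turn apart are equal. -/
theorem eq_of_cast {x y : ℤ} (h : (x : ZMod N) = y) (h1 : x < y + N) (h2 : y < x + N) : x = y := by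
  rw [ZMod.intCast_eq_intCast_iff, Int.modEq_iff_dvd] at h
  have := dvd_lt h (by omega) (by omega)
  omega

theorem crossE_comm_left {i j a b : ZMod N} : crossE i j a b ↔ crossE j i a b := by
  unfold crossE; rw [min_comm i.val, max_comm i.val]

theorem crossE_comm_right {i j a b : ZMod N} : crossE i j a b ↔ crossE i j b a := by
  unfold crossE; rw [min_comm a.val, max_comm a.val]

/-- Interleaving integers within one turn give crossing chords. -/
theorem crossE_of_lt [NeZero N] {p r q s : ℤ} (h1 : p < r) (h2 : r < q) (h3 : q < s) (h4 : s < p + N) :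
    crossE (p : ZMod N) q r s := by
  have hN : (N : ℤ) ≠ 0 := by exact_mod_cast NeZero.ne N
  have hN' : (0 : ℤ) < N := by positivity
  have red : ∀ z : ℤ, ((z - N * (p / N) : ℤ) : ZMod N) = z := by intro z; simp
  have e1 := Int.emod_add_mul_ediv p N
  have e2 := Int.emod_nonneg p hN
  have e3 := Int.emod_lt_of_pos p hN'
  rw [← red p, ← red q, ← red r, ← red s]
  generalize (N : ℤ) * (p / N) = t at *
  have hv : ∀ z : ℤ, p ≤ z → z < p + N → (((z - t : ℤ) : ZMod N).val : ℤ) = z - t ∧ z - t < N ∨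
      (((z - t : ℤ) : ZMod N).val : ℤ) = z - t - N ∧ N ≤ z - t := by
    intro z z1 z2
    by_cases h : z - t < N
    · exact Or.inl ⟨val_intCast_of (by omega) h, h⟩
    · exact Or.inr ⟨val_intCast_of' (by omega) (by omega), by omega⟩
  have v1 := hv p (by omega) (by omega)
  have v2 := hv q (by omega) (by omega)
  have v3 := hv r (by omega) (by omega)
  have v4 := hv s (by omega) (by omega)
  unfold crossE
  omega

/-- Crossing chords have interleaving integer lifts within one turn. -/
theorem exists_of_crossE [NeZero N] {x y z w : ZMod N} (h : crossE x y z w) :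
    ∃ p r q s : ℤ, p < r ∧ r < q ∧ q < s ∧ s < p + N ∧
      (((p : ZMod N) = x ∧ (q : ZMod N) = y) ∨ ((p : ZMod N) = y ∧ (q : ZMod N) = x)) ∧
      (((r : ZMod N) = z ∧ (s : ZMod N) = w) ∨ ((r : ZMod N) = w ∧ (s : ZMod N) = z)) := by
  wlog hxy : x.val ≤ y.val generalizing x y
  · obtain ⟨p, r, q, s, h1, h2, h3, h4, h5, h6⟩ :=
      this (crossE_comm_left.1 h) (by omega)
    exact ⟨p, r, q, s, h1, h2, h3, h4, h5.symm, h6⟩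
  wlog hzw : z.val ≤ w.val generalizing z w
  · obtain ⟨p, r, q, s, h1, h2, h3, h4, h5, h6⟩ :=
      this (crossE_comm_right.1 h) (by omega)
    exact ⟨p, r, q, s, h1, h2, h3, h4, h5, h6.symm⟩
  have := x.val_lt
  have := y.val_lt
  have := z.val_lt
  have := w.val_lt
  unfold crossE at h
  rw [min_eq_left hxy, min_eq_left hzw, max_eq_right hxy, max_eq_right hzw] at h
  rcases h with h | h
  · exact ⟨x.val, z.val, y.val, w.val, by omega, by omega, by omega, by omega,
      Or.inl ⟨cast_val _, cast_val _⟩, Or.inl ⟨cast_val _, cast_val _⟩⟩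
  · exact ⟨x.val, w.val, y.val, z.val + N, by omega, by omega, by omega, by omega,
      Or.inl ⟨cast_val _, cast_val _⟩, Or.inr ⟨cast_val _, by simp⟩⟩

end cyclic

/-- An `m`-periodic symmetric dissection of the `2n`-gon: a relation `S` of non-diameter chords
and a set `c` of (endpoints of) diameters of a single color. -/
structure Good (n m : ℕ) (p : (ZMod (2 * n) → ZMod (2 * n) → Prop) × (ZMod (2 * n) → Prop)) :
    Prop where
  symm : ∀ i j, p.1 i j → p.1 j i
  ne : ∀ i j, p.1 i j → i ≠ j ∧ j ≠ i + 1 ∧ i ≠ j + 1 ∧ j ≠ i + (n : ZMod (2 * n))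
  per : ∀ i j, p.1 (i + (m : ZMod (2 * n))) (j + (m : ZMod (2 * n))) ↔ p.1 i j
  perc : ∀ a, p.2 (a + (m : ZMod (2 * n))) ↔ p.2 a
  nc : ∀ i j a b, p.1 i j → p.1 a b → ¬ crossE i j a b
  ncc : ∀ a i j, p.2 a → p.1 i j → ¬ crossE a (a + (n : ZMod (2 * n))) i j

/-- The symmetric dissection wrapped up by a periodic system. -/
def wrap (n m : ℕ) (E : ℤ → ℤ → Prop) :
    (ZMod (2 * n) → ZMod (2 * n) → Prop) × (ZMod (2 * n) → Prop) :=
  (fun x y => ∃ i j : ℤ, E i j ∧ j ≤ i + m ∧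
      (((i : ZMod (2 * n)) = x ∧ (j : ZMod (2 * n)) = y) ∨
        ((i : ZMod (2 * n)) = y ∧ (j : ZMod (2 * n)) = x)),
    fun x => ∃ i : ℤ, (i : ZMod (2 * n)) = x ∧ E i (i + m + 1))

/-- The systems that wrap up to dissections: arcs must be shorter than a diameter. -/
structure Wr (n m : ℕ) (E : ℤ → ℤ → Prop) : Prop where
  sys : Sys m E
  short : ∀ i j, E i j → j ≤ i + m → j < i + n

section wrap

variable {n m : ℕ} {E : ℤ → ℤ → Prop}

theorem Sys.shift_full (h : Sys m E) (hmn : m ∣ n) (i j t : ℤ) :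
    E (i + (2 * n : ℕ) * t) (j + (2 * n : ℕ) * t) ↔ E i j := by
  obtain ⟨e, rfl⟩ := hmn
  have := h.shift i j (2 * e * t)
  rw [show ((2 * (m * e) : ℕ) : ℤ) * t = m * (2 * e * t) by push_cast; ring]
  exact this

theorem cast_two_mul (n : ℕ) : (2 * (n : ZMod (2 * n))) = 0 := by
  exact_mod_cast ZMod.natCast_self (2 * n)

theorem lift_eq [NeZero (2 * n)] {x y : ℤ} (h : (x : ZMod (2 * n)) = y) :
    ∃ t : ℤ, x = y + (2 * n : ℕ) * t := by
  rw [ZMod.intCast_eq_intCast_iff, Int.modEq_iff_dvd] at h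
  obtain ⟨t, ht⟩ := h
  exact ⟨-t, by rw [mul_neg, ← ht]; ring⟩

/-- Chords of the wrapped dissection in terms of integer lifts of their endpoints. -/
theorem wrap_iff [NeZero (2 * n)] (h : Wr n m E) (hmn : m ∣ n) {p q : ℤ} (h1 : p < q)
    (h2 : q < p + (2 * n : ℕ)) :
    (wrap n m E).1 p q ↔ (E p q ∧ q ≤ p + m) ∨
      (E q (p + (2 * n : ℕ)) ∧ p + (2 * n : ℕ) ≤ q + m) := by
  constructor
  -- The arc is oriented from the lift of one endpoint; the lift of the other is either `q`, or
  -- `p` one turn later.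
  · rintro ⟨i, j, hE, hj, ⟨hi', hj'⟩ | ⟨hi', hj'⟩⟩
    · obtain ⟨t, rfl⟩ := lift_eq hi'
      have l1 := h.sys.len _ _ hE
      have l2 := h.short _ _ hE hj
      obtain ⟨j, rfl⟩ : ∃ j0, j = j0 + (2 * n : ℕ) * t := ⟨j - (2 * n : ℕ) * t, by ring⟩
      rw [h.sys.shift_full hmn] at hE
      have : j = q := eq_of_cast (N := 2 * n) (by rw [← hj']; push_cast; rw [cast_two_mul]; simp)
        (by push_cast at *; omega) (by push_cast at *; omega)
      subst this
      exact Or.inl ⟨hE, by omega⟩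
    · obtain ⟨t, rfl⟩ := lift_eq hi'
      have l1 := h.sys.len _ _ hE
      have l2 := h.short _ _ hE hj
      obtain ⟨j, rfl⟩ : ∃ j0, j = j0 + (2 * n : ℕ) * t := ⟨j - (2 * n : ℕ) * t, by ring⟩
      rw [h.sys.shift_full hmn] at hE
      have : j = p + (2 * n : ℕ) := eq_of_cast (N := 2 * n)
        (by
          push_cast at hj' ⊢
          rw [cast_two_mul] at hj' ⊢
          simpa using hj')
        (by push_cast at *; omega) (by push_cast at *; omega)
      subst this
      exact Or.inr ⟨hE, by omega⟩
  · rintro (⟨hE, hq⟩ | ⟨hE, hq⟩)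
    · exact ⟨p, q, hE, hq, Or.inl ⟨rfl, rfl⟩⟩
    · refine ⟨q, _, hE, hq, Or.inr ⟨rfl, ?_⟩⟩
      push_cast
      rw [cast_two_mul, add_zero]

/-- Diameters of the wrapped dissection are the rays of the system. -/
theorem wrap_diam_iff [NeZero (2 * n)] (h : Sys m E) (hmn : m ∣ n) {p : ℤ} :
    (wrap n m E).2 p ↔ E p (p + m + 1) := by
  constructor
  · rintro ⟨i, hi, hE⟩
    obtain ⟨t, rfl⟩ := lift_eq hi
    rw [show p + (2 * n : ℕ) * t + m + 1 = p + m + 1 + (2 * n : ℕ) * t by ring,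
      h.shift_full hmn] at hE
    exact hE
  · intro hE; exact ⟨p, rfl, hE⟩

theorem ray_shift (h : Sys m E) (i t : ℤ) :
    E (i + m * t) (i + m * t + m + 1) ↔ E i (i + m + 1) := by
  rw [show i + m * t + m + 1 = i + m + 1 + m * t by ring, h.shift]

theorem wrap_symm (E : ℤ → ℤ → Prop) (x y : ZMod (2 * n)) (h : (wrap n m E).1 x y) :
    (wrap n m E).1 y x := by
  obtain ⟨i, j, h1, h2, h3⟩ := h
  exact ⟨i, j, h1, h2, h3.symm⟩

/-- A crossing in the wrapped dissection lifts to integers interleaving within one turn, hence to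
a crossing in the system. -/
theorem wrap_good [NeZero (2 * n)] (h : Wr n m E) (hmn : m ∣ n) :
    Good n m (wrap n m E) := by
  have hn : 0 < n := by have := NeZero.ne (2 * n); omega
  have hle : m ≤ n := Nat.le_of_dvd hn hmn
  have hN : ((2 * n : ℕ) : ℤ) = 2 * n := by push_cast; ring
  have z2 := cast_two_mul n
  refine ⟨fun i j => wrap_symm E i j, ?_, ?_, ?_, ?_, ?_⟩
  · intro x y hxy
    have main : ∀ i j : ℤ, E i j → j ≤ i + m → (i : ZMod (2 * n)) ≠ j ∧
        (j : ZMod (2 * n)) ≠ i + 1 ∧ (i : ZMod (2 * n)) ≠ j + 1 ∧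
        (j : ZMod (2 * n)) ≠ i + (n : ZMod (2 * n)) ∧
        (i : ZMod (2 * n)) ≠ j + (n : ZMod (2 * n)) := by
      intro i j hE hj
      have l1 := h.sys.len _ _ hE
      have l2 := h.short _ _ hE hj
      refine ⟨fun hh => ?_, fun hh => ?_, fun hh => ?_, fun hh => ?_, fun hh => ?_⟩
      · have := eq_of_cast (N := 2 * n) hh (by omega) (by omega); omega
      · have := eq_of_cast (N := 2 * n) (x := j) (y := i + 1) (by push_cast; exact hh)
          (by omega) (by omega)
        omega
      · have := eq_of_cast (N := 2 * n) (x := i) (y := j + 1) (by push_cast; exact hh)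
          (by omega) (by omega)
        omega
      · have := eq_of_cast (N := 2 * n) (x := j) (y := i + n) (by push_cast; exact hh)
          (by omega) (by omega)
        omega
      · have := eq_of_cast (N := 2 * n) (x := j) (y := i + n) (by
          push_cast; rw [hh, add_assoc, ← two_mul, z2, add_zero])
          (by omega) (by omega)
        omega
    obtain ⟨i, j, hE, hj, ⟨rfl, rfl⟩ | ⟨rfl, rfl⟩⟩ := hxy
    · have := main i j hE hj; tauto
    · have := main i j hE hj
      exact ⟨this.1.symm, this.2.2.1, this.2.1, this.2.2.2.2⟩
  · intro x y
    constructor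
    · rintro ⟨i, j, hE, hj, hij⟩
      refine ⟨i - m, j - m, (h.sys.per _ _).1 (by simpa using hE), by omega, ?_⟩
      push_cast
      rcases hij with ⟨h1, h2⟩ | ⟨h1, h2⟩
      · left; constructor <;> simp [h1, h2]
      · right; constructor <;> simp [h1, h2]
    · rintro ⟨i, j, hE, hj, hij⟩
      refine ⟨i + m, j + m, (h.sys.per _ _).2 hE, by omega, ?_⟩
      push_cast
      rcases hij with ⟨h1, h2⟩ | ⟨h1, h2⟩
      · left; constructor <;> simp [h1, h2]
      · right; constructor <;> simp [h1, h2]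
  · intro x
    have hx := cast_val x
    generalize ((x.val : ℕ) : ℤ) = a at hx
    subst hx
    have h1 := wrap_diam_iff h.sys hmn (p := a + m)
    push_cast at h1
    have h2 := ray_shift h.sys a 1
    rw [mul_one] at h2
    rw [h1, h2, wrap_diam_iff h.sys hmn]
  · intro x y z w hxy hzw hc
    obtain ⟨p, r, q, s, h1, h2, h3, h4, h5, h6⟩ := exists_of_crossE hc
    have hpq : (wrap n m E).1 p q := by
      rcases h5 with ⟨rfl, rfl⟩ | ⟨rfl, rfl⟩
      · exact hxy
      · exact wrap_symm _ _ _ hxy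
    have hrs : (wrap n m E).1 r s := by
      rcases h6 with ⟨rfl, rfl⟩ | ⟨rfl, rfl⟩
      · exact hzw
      · exact wrap_symm _ _ _ hzw
    rw [wrap_iff h hmn (by omega) (by omega)] at hpq hrs
    rcases hpq with ⟨a1, a2⟩ | ⟨a1, a2⟩ <;> rcases hrs with ⟨b1, b2⟩ | ⟨b1, b2⟩
    · have := h.sys.nc _ _ _ _ a1 b1 (by omega) (by omega); omega
    · have a3 := (h.sys.shift_full hmn _ _ 1).2 a1
      rw [mul_one] at a3
      have := h.sys.nc _ _ _ _ b1 a3 (by omega) (by omega); omega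
    · have := h.sys.nc _ _ _ _ b1 a1 (by omega) (by omega); omega
    · have := h.sys.nc _ _ _ _ a1 b1 (by omega) (by omega); omega
  · intro a z w ha hzw hc
    obtain ⟨p, r, q, s, h1, h2, h3, h4, h5, h6⟩ := exists_of_crossE hc
    have hrs : (wrap n m E).1 r s := by
      rcases h6 with ⟨rfl, rfl⟩ | ⟨rfl, rfl⟩
      · exact hzw
      · exact wrap_symm _ _ _ hzw
    have hq : q = p + n := by
      refine eq_of_cast (N := 2 * n) ?_ (by omega) (by omega)
      push_cast
      rcases h5 with ⟨e1, e2⟩ | ⟨e1, e2⟩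
      · rw [e2, e1]
      · rw [e2, e1, add_assoc, ← two_mul, z2, add_zero]
    subst hq
    have hray : ∀ t : ℤ, E (p + n * t) (p + n * t + m + 1) := by
      obtain ⟨e, he⟩ := hmn
      have hsh : ∀ b t : ℤ, E (b + n * t) (b + n * t + m + 1) ↔ E b (b + m + 1) := by
        intro b t
        rw [show b + (n : ℤ) * t = b + m * (e * t) by rw [he]; push_cast; ring]
        exact ray_shift h.sys _ _
      intro t
      rw [hsh]
      rcases h5 with ⟨e1, -⟩ | ⟨-, e2⟩
      · subst e1; exact (wrap_diam_iff h.sys ⟨e, he⟩).1 ha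
      · subst e2
        have := (wrap_diam_iff h.sys ⟨e, he⟩).1 ha
        have h3 := hsh p 1
        rw [mul_one] at h3
        exact h3.1 this
    rw [wrap_iff h hmn (by omega) (by omega)] at hrs
    rcases hrs with ⟨b1, b2⟩ | ⟨b1, b2⟩
    · have a1 := hray 1
      rw [mul_one] at a1
      have := h.sys.nc _ _ _ _ b1 a1 (by omega) (by omega)
      omega
    · have a1 := hray 2
      rw [show p + (n : ℤ) * 2 = p + (2 * n : ℕ) by push_cast; ring] at a1
      have := h.sys.nc _ _ _ _ b1 a1 (by omega) (by omega)
      omega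

/-- Chords of an `m`-periodic noncrossing dissection span at most `m` sides. -/
theorem Good.short [NeZero (2 * n)]
    {p : (ZMod (2 * n) → ZMod (2 * n) → Prop) × (ZMod (2 * n) → Prop)} (h : Good n m p)
    (hm : 0 < m) {a b : ℤ} (hS : p.1 a b) :
    b ≤ a + m ∨ a + (2 * n : ℕ) ≤ b + m := by
  by_contra hcon
  push Not at hcon
  -- Otherwise the chord crosses its own rotation by `m`.
  have h3 := (h.per _ _).2 hS
  refine h.nc _ _ _ _ hS h3 ?_
  have := crossE_of_lt (N := 2 * n) (p := a) (r := a + m) (q := b) (s := b + m)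
    (by omega) (by omega) (by omega) (by omega)
  push_cast at this
  exact this

/-- The periodic system of an `m`-periodic dissection. -/
def unwrap (n m : ℕ) (p : (ZMod (2 * n) → ZMod (2 * n) → Prop) × (ZMod (2 * n) → Prop))
    (i j : ℤ) : Prop :=
  (i < j ∧ j ≤ i + m ∧ p.1 i j) ∨ (p.2 i ∧ j = i + m + 1)

/-- Unwrapping gives a periodic system: interleaving arcs, or an arc ending behind the start of a
ray, would wrap to crossing diagonals. -/
theorem unwrap_wr [NeZero (2 * n)]
    {p : (ZMod (2 * n) → ZMod (2 * n) → Prop) × (ZMod (2 * n) → Prop)} (h : Good n m p)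
    (hm : 0 < m) (hmn : m ∣ n) : Wr n m (unwrap n m p) := by
  have hn : 0 < n := by have := NeZero.ne (2 * n); omega
  have hle : m ≤ n := Nat.le_of_dvd hn hmn
  have hN : ((2 * n : ℕ) : ℤ) = 2 * n := by push_cast; ring
  refine ⟨⟨?_, ?_, ?_⟩, ?_⟩
  · intro i j
    unfold unwrap
    push_cast
    rw [h.per, h.perc, show (i + m < j + (m : ℤ)) ↔ i < j by omega,
      show (j + m ≤ i + m + (m : ℤ)) ↔ j ≤ i + m by omega,
      show (j + m = i + m + (m : ℤ) + 1) ↔ j = i + m + 1 by omega]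
  · rintro i j (⟨h1, h2, h3⟩ | ⟨-, h1⟩)
    · have h4 := (h.ne _ _ h3).2.1
      have : j ≠ i + 1 := by rintro rfl; exact h4 (by push_cast; rfl)
      omega
    · omega
  · rintro i j i' j' (⟨h1, h2, h3⟩ | ⟨-, h1⟩) hE hi hj
    · left
      by_contra hcon
      rcases hE with ⟨h4, h5, h6⟩ | ⟨h4, h5⟩
      · exact h.nc _ _ _ _ h3 h6 (crossE_of_lt (by omega) (by omega) (by omega) (by omega))
      · refine h.ncc _ _ _ h4 (h.symm _ _ h3) ?_
        have := crossE_of_lt (N := 2 * n) (p := i') (r := j) (q := i' + n) (s := i + (2 * n : ℕ))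
        -- Length at most `m ≤ n` puts the end `j` of the arc before the far end of the diameter.
        by_cases hjn : j < i' + n
        · have := this (by omega) (by omega) (by omega) (by omega)
          push_cast at this
          rw [cast_two_mul, add_zero] at this
          exact this
        · omega
    · exact Or.inr h1
  · rintro i j (⟨h1, h2, h3⟩ | ⟨-, h1⟩) hj
    · have h4 := (h.ne _ _ h3).2.2.2
      have : j ≠ i + n := by rintro rfl; exact h4 (by push_cast; rfl)
      omega
    · omega

/-- Wrapping is a bijection from periodic systems onto `m`-periodic dissections. -/
theorem wrap_bijOn [NeZero (2 * n)] (hm : 0 < m) (hmn : m ∣ n) :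
    Set.BijOn (wrap n m) {E | Wr n m E} {p | Good n m p} := by
  have hn : 0 < n := by have := NeZero.ne (2 * n); omega
  have hle : m ≤ n := Nat.le_of_dvd hn hmn
  have hN : ((2 * n : ℕ) : ℤ) = 2 * n := by push_cast; ring
  have hun : ∀ E, Wr n m E → unwrap n m (wrap n m E) = E := by
    intro E h
    funext i j
    refine propext ⟨?_, ?_⟩
    · rintro (⟨h1, h2, h3⟩ | ⟨h1, rfl⟩)
      · rw [wrap_iff h hmn h1 (by omega)] at h3
        rcases h3 with h3 | h3
        · exact h3.1
        · have := h.short _ _ h3.1 h3.2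
          omega
      · exact (wrap_diam_iff h.sys hmn).1 h1
    · intro hE
      have l1 := h.sys.len _ _ hE
      by_cases hj : j ≤ i + m
      · exact Or.inl ⟨by omega, hj, (wrap_iff h hmn (by omega) (by omega)).2 (Or.inl ⟨hE, hj⟩)⟩
      · obtain rfl : j = i + m + 1 := by omega
        exact Or.inr ⟨(wrap_diam_iff h.sys hmn).2 hE, rfl⟩
  refine ⟨fun E h => wrap_good h hmn, ?_, ?_⟩
  · intro E h E' h' he
    rw [← hun E h, ← hun E' h', he]
  · intro p h
    have hw := unwrap_wr h hm hmn
    refine ⟨unwrap n m p, hw, Prod.ext ?_ ?_⟩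
    · have key : ∀ a b : ℤ, a < b → b < a + (2 * n : ℕ) →
          ((wrap n m (unwrap n m p)).1 a b ↔ p.1 a b) := by
        intro a b h1 h2
        rw [wrap_iff hw hmn h1 h2]
        unfold unwrap
        push_cast
        rw [cast_two_mul, add_zero]
        constructor
        · rintro (⟨⟨-, -, h3⟩ | ⟨-, h3⟩, h4⟩ | ⟨⟨-, -, h3⟩ | ⟨-, h3⟩, h4⟩)
          · exact h3
          · omega
          · exact h.symm _ _ h3
          · omega
        · intro h3
          rcases h.short hm h3 with h4 | h4
          · exact Or.inl ⟨Or.inl ⟨h1, h4, h3⟩, h4⟩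
          · exact Or.inr ⟨Or.inl ⟨by omega, by omega, h.symm _ _ h3⟩, by omega⟩
      funext x y
      have hx := x.val_lt
      have hy := y.val_lt
      rw [← cast_val x, ← cast_val y]
      generalize x.val = a at *
      generalize y.val = b at *
      rcases lt_trichotomy a b with hab | rfl | hab
      · exact propext (key a b (by omega) (by omega))
      · refine propext ⟨fun hh => ?_, fun hh => ((h.ne _ _ hh).1 rfl).elim⟩
        exact (((wrap_good hw hmn).ne _ _ hh).1 rfl).elim
      · have := key b a (by omega) (by omega)
        refine propext ⟨fun hh => h.symm _ _ (this.1 (wrap_symm _ _ _ hh)), fun hh => ?_⟩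
        exact wrap_symm _ _ _ (this.2 (h.symm _ _ hh))
    · funext x
      rw [← cast_val x, wrap_diam_iff hw.sys hmn]
      unfold unwrap
      refine propext ⟨?_, fun hh => Or.inr ⟨hh, rfl⟩⟩
      rintro (⟨-, h1, -⟩ | ⟨h1, -⟩)
      · omega
      · exact h1

end wrap

/-! ### Counting diagonals -/

/-- The sum of an `m`-periodic function over `t` periods. -/
theorem sum_Ico_periodic {m : ℕ} {g : ℤ → ℕ} (hg : ∀ x, g (x + m) = g x) (t : ℕ) :
    ∑ x ∈ Ico (0 : ℤ) ((m * t : ℕ) : ℤ), g x = t * ∑ x ∈ Ico (0 : ℤ) m, g x := by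
  rw [← sum_fin_Ico, ← sum_fin_Ico, Fin.sum_univ_eq_sum_range (fun i => g (i : ℤ)),
    Fin.sum_univ_eq_sum_range (fun i => g (i : ℤ))]
  have hg' : ∀ (t : ℕ) (x : ℤ), g (x + m * t) = g x := by
    intro t x
    have := (show Function.Periodic g m from hg).nat_mul t x
    rwa [mul_comm] at this
  induction t with
  | zero => simp
  | succ t ih =>
    rw [mul_add, mul_one, Finset.sum_range_add, ih, add_mul, one_mul]
    congr 1
    refine Finset.sum_congr rfl fun x _ => ?_
    rw [← hg' t x]
    congr 1
    push_cast; ring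

open Classical in
/-- The arcs (no rays) starting at `x`. -/
noncomputable def arcs (m : ℕ) (E : ℤ → ℤ → Prop) (x : ℤ) : Finset ℤ :=
  {j ∈ Icc (x + 2) (x + m) | E x j}

section weight

variable {n m : ℕ} {E : ℤ → ℤ → Prop}

theorem mem_arcs (h : Sys m E) {x j : ℤ} : j ∈ arcs m E x ↔ E x j ∧ j ≤ x + m := by
  simp only [arcs, Finset.mem_filter, Finset.mem_Icc]
  constructor
  · rintro ⟨h1, h2⟩; exact ⟨h2, h1.2⟩
  · rintro ⟨h1, h2⟩; exact ⟨⟨(h.len _ _ h1).1, h2⟩, h1⟩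

theorem card_arcs_shift (h : Sys m E) (x : ℤ) : #(arcs m E (x + m)) = #(arcs m E x) := by
  symm
  refine Finset.card_bij (fun j _ => j + m) ?_ ?_ ?_
  · intro j hj
    rw [mem_arcs h] at hj ⊢
    exact ⟨(h.per _ _).2 hj.1, by omega⟩
  · intro i _ j _ hij; omega
  · intro j hj
    rw [mem_arcs h] at hj
    exact ⟨j - m, (mem_arcs h).2 ⟨(h.per _ _).1 (by simpa using hj.1), by omega⟩, by ring⟩

open Classical in
/-- At most one ray starts at `x`. -/
theorem card_ends (h : Sys m E) (x : ℤ) :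
    #(ends m E x) = #(arcs m E x) + (if E x (x + m + 1) then 1 else 0) := by
  have : ends m E x = arcs m E x ∪ (if E x (x + m + 1) then {x + (m : ℤ) + 1} else ∅) := by
    ext j
    rw [mem_ends h, Finset.mem_union, mem_arcs h]
    constructor
    · intro hE
      have := h.len _ _ hE
      by_cases hj : j ≤ x + m
      · exact Or.inl ⟨hE, hj⟩
      · obtain rfl : j = x + m + 1 := by omega
        right; simp [hE]
    · rintro (h1 | h1)
      · exact h1.1
      · split_ifs at h1 with h2
        · rw [Finset.mem_singleton] at h1; rwa [h1]
        · simp at h1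
  rw [this, Finset.card_union_of_disjoint]
  · split_ifs <;> simp
  · rw [Finset.disjoint_left]
    intro j hj
    rw [mem_arcs h] at hj
    split_ifs <;> simp; omega

/-- Half of the circle, `n` vertices, meets every diameter once. -/
theorem card_wrap_diam [NeZero (2 * n)] (h : Sys m E) (hmn : m ∣ n) :
    Nat.card {a : ZMod (2 * n) // a.val < n ∧ (wrap n m E).2 a} =
      (open Classical in ∑ x ∈ Ico (0 : ℤ) n, if E x (x + m + 1) then 1 else 0) := by
  classical
  rw [Nat.card_eq_fintype_card, Fintype.card_subtype, ← Finset.card_filter]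
  symm
  refine Finset.card_bij (fun x _ => (x : ZMod (2 * n))) ?_ ?_ ?_
  · intro x hx
    simp only [Finset.mem_filter, Finset.mem_Ico, Finset.mem_univ, true_and] at hx ⊢
    have := val_intCast_of (N := 2 * n) (x := x) (by omega) (by push_cast; omega)
    exact ⟨by omega, (wrap_diam_iff h hmn).2 hx.2⟩
  · intro x hx y hy hxy
    simp only [Finset.mem_filter, Finset.mem_Ico] at hx hy
    exact eq_of_cast hxy (by push_cast; omega) (by push_cast; omega)
  · intro a ha
    simp only [Finset.mem_filter, Finset.mem_univ, true_and] at ha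
    refine ⟨(a.val : ℤ), ?_, cast_val a⟩
    simp only [Finset.mem_filter, Finset.mem_Ico]
    exact ⟨by omega, (wrap_diam_iff h hmn).1 (by rw [cast_val]; exact ha.2)⟩

/-- Each chord is the image of a unique arc starting within one turn, since arcs are shorter than
`n`. -/
theorem card_wrap_chord [NeZero (2 * n)] (h : Wr n m E) (hmn : m ∣ n) :
    Nat.card {p : ZMod (2 * n) × ZMod (2 * n) // p.1.val < p.2.val ∧ (wrap n m E).1 p.1 p.2} =
      ∑ x ∈ Ico (0 : ℤ) (2 * n : ℕ), #(arcs m E x) := by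
  classical
  have hn : 0 < n := by have := NeZero.ne (2 * n); omega
  have hle : m ≤ n := Nat.le_of_dvd hn hmn
  have hN : ((2 * n : ℕ) : ℤ) = 2 * n := by push_cast; ring
  rw [Nat.card_eq_fintype_card, Fintype.card_subtype, ← Finset.card_sigma]
  symm
  have hcN : ∀ j : ℤ, ((j - (2 * n : ℕ) : ℤ) : ZMod (2 * n)) = j := by
    intro j; push_cast; rw [cast_two_mul, sub_zero]
  refine Finset.card_bij (fun t _ => if t.2 < (2 * n : ℕ) then
    ((t.1 : ZMod (2 * n)), (t.2 : ZMod (2 * n))) else ((t.2 : ZMod (2 * n)), (t.1 : ZMod (2 * n))))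
    ?_ ?_ ?_
  · rintro ⟨x, j⟩ ht
    simp only [Finset.mem_sigma, Finset.mem_Ico, mem_arcs h.sys, Finset.mem_filter,
      Finset.mem_univ, true_and] at ht ⊢
    obtain ⟨hx, hE, hj⟩ := ht
    have l1 := h.sys.len _ _ hE
    have v1 := val_intCast_of (N := 2 * n) (x := x) (by omega) (by omega)
    have hw : (wrap n m E).1 (x : ZMod (2 * n)) (j : ZMod (2 * n)) :=
      ⟨x, j, hE, hj, Or.inl ⟨rfl, rfl⟩⟩
    split_ifs with hlt
    · have v2 := val_intCast_of (N := 2 * n) (x := j) (by omega) (by omega)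
      exact ⟨by simp only; omega, hw⟩
    · have v2 := val_intCast_of' (N := 2 * n) (x := j) (by omega) (by omega)
      exact ⟨by simp only; omega, wrap_symm _ _ _ hw⟩
  · rintro ⟨x, j⟩ ht ⟨x', j'⟩ ht' heq
    simp only [Finset.mem_sigma, Finset.mem_Ico, mem_arcs h.sys] at ht ht'
    obtain ⟨hx, hE, hj⟩ := ht
    obtain ⟨hx', hE', hj'⟩ := ht'
    have l1 := h.sys.len _ _ hE
    have l2 := h.sys.len _ _ hE'
    have s1 := h.short _ _ hE hj
    have s2 := h.short _ _ hE' hj'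
    simp only at heq
    have hxx : x = x' ∧ j = j' := by
      split_ifs at heq with c1 c2 c2 <;> rw [Prod.mk.injEq] at heq <;> obtain ⟨q1, q2⟩ := heq
      · exact ⟨eq_of_cast q1 (by omega) (by omega), eq_of_cast q2 (by omega) (by omega)⟩
      · rw [← hcN j'] at q1
        have := eq_of_cast q1 (by omega) (by omega)
        have := eq_of_cast q2 (by omega) (by omega)
        omega
      · rw [← hcN j] at q1
        have := eq_of_cast q1 (by omega) (by omega)
        have := eq_of_cast q2 (by omega) (by omega)
        omega
      · exact ⟨eq_of_cast q2 (by omega) (by omega), eq_of_cast q1 (by omega) (by omega)⟩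
    obtain ⟨rfl, rfl⟩ := hxx
    rfl
  · rintro ⟨x, y⟩ hxy
    simp only [Finset.mem_filter, Finset.mem_univ, true_and] at hxy
    have v1 := cast_val x
    have v2 := cast_val y
    have w1 := x.val_lt
    have w2 := y.val_lt
    obtain ⟨hlt, hw⟩ := hxy
    rw [← v1, ← v2, wrap_iff h hmn (by omega) (by omega)] at hw
    rcases hw with ⟨hE, hj⟩ | ⟨hE, hj⟩
    · refine ⟨⟨x.val, y.val⟩, ?_, ?_⟩
      · simp only [Finset.mem_sigma, Finset.mem_Ico, mem_arcs h.sys]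
        exact ⟨by omega, hE, hj⟩
      · simp only
        rw [if_pos (by omega), v1, v2]
    · refine ⟨⟨y.val, x.val + (2 * n : ℕ)⟩, ?_, ?_⟩
      · simp only [Finset.mem_sigma, Finset.mem_Ico, mem_arcs h.sys]
        exact ⟨by omega, hE, hj⟩
      · simp only
        rw [if_neg (by omega), ← hcN]
        simp

/-- The number of diagonals of a wrapped system: every arc or ray modulo `m` accounts for
`n / m` diagonals. -/
theorem wrap_weight [NeZero (2 * n)] (h : Wr n m E) {e : ℕ} (he : n = m * e) :
    Nat.card {p : ZMod (2 * n) × ZMod (2 * n) // p.1.val < p.2.val ∧ (wrap n m E).1 p.1 p.2} +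
      2 * Nat.card {a : ZMod (2 * n) // a.val < n ∧ (wrap n m E).2 a} = 2 * (e * size m E) := by
  classical
  have hmn : m ∣ n := ⟨e, he⟩
  rw [card_wrap_diam h.sys hmn, card_wrap_chord h hmn]
  have h1 := sum_Ico_periodic (g := fun x => #(arcs m E x)) (card_arcs_shift h.sys) (2 * e)
  have h2 := sum_Ico_periodic (m := m) (g := fun x => if E x (x + m + 1) then 1 else 0)
    (fun x => by
      have := ray_shift h.sys x 1
      rw [mul_one] at this
      simp only [this]) e
  rw [show m * (2 * e) = 2 * n by rw [he]; ring] at h1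
  rw [← he] at h2
  rw [h1, h2]
  unfold size
  rw [Finset.sum_congr rfl fun x _ => card_ends h.sys x, Finset.sum_add_distrib]
  ring

end weight

/-! ### Symmetric dissections with one color of diameters -/

/-- Twice the number of diagonals of a dissection with diameters of one color. -/
noncomputable def weight (n : ℕ)
    (p : (ZMod (2 * n) → ZMod (2 * n) → Prop) × (ZMod (2 * n) → Prop)) : ℕ :=
  Nat.card {q : ZMod (2 * n) × ZMod (2 * n) // q.1.val < q.2.val ∧ p.1 q.1 q.2} +
    2 * Nat.card {a : ZMod (2 * n) // a.val < n ∧ p.2 a}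

section counts

variable {n m : ℕ}

/-- Dissections with `k` diagonals correspond to systems of size `k / e`. -/
theorem ncard_good [NeZero (2 * n)] {e : ℕ} (hm : 0 < m) (he : n = m * e) (k : ℕ)
    (Q : (ZMod (2 * n) → ZMod (2 * n) → Prop) × (ZMod (2 * n) → Prop) → Prop) :
    {p | Good n m p ∧ weight n p = 2 * k ∧ Q p}.ncard =
      {E | Wr n m E ∧ e * size m E = k ∧ Q (wrap n m E)}.ncard := by
  have hb := wrap_bijOn (n := n) hm ⟨e, he⟩
  have : {p | Good n m p ∧ weight n p = 2 * k ∧ Q p} =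
      wrap n m '' {E | Wr n m E ∧ e * size m E = k ∧ Q (wrap n m E)} := by
    ext p
    constructor
    · rintro ⟨h1, h2, h3⟩
      obtain ⟨E, hE, rfl⟩ := hb.surjOn h1
      have := wrap_weight hE he
      unfold weight at h2
      exact ⟨E, ⟨hE, by omega, h3⟩, rfl⟩
    · rintro ⟨E, ⟨h1, h2, h3⟩, rfl⟩
      refine ⟨hb.mapsTo h1, ?_, h3⟩
      have := wrap_weight h1 he
      unfold weight
      rw [this, h2]
  rw [this, (hb.injOn.mono fun E h => h.1).ncard_image]

/-- For `m < n` no arc is long enough to wrap to a diameter. -/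
theorem wr_iff_of_lt (h : m < n) (E : ℤ → ℤ → Prop) : Wr n m E ↔ Sys m E :=
  ⟨fun h => h.sys, fun hE => ⟨hE, fun i j _ hj => by omega⟩⟩

/-- For `m = n` the loops are the arcs that would wrap to diameters. -/
theorem wr_self_iff (E : ℤ → ℤ → Prop) : Wr n n E ↔ Sys n E ∧ ∀ i, ¬ E i (i + n) := by
  constructor
  · intro h
    refine ⟨h.sys, fun i hi => ?_⟩
    have := h.short _ _ hi le_rfl
    omega
  · rintro ⟨h1, h2⟩
    refine ⟨h1, fun i j hE hj => ?_⟩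
    have : j ≠ i + n := by rintro rfl; exact h2 i hE
    omega

theorem wrap_no_diam_iff [NeZero (2 * n)] {E : ℤ → ℤ → Prop} (h : Sys m E) (hmn : m ∣ n) :
    (∀ a, ¬ (wrap n m E).2 a) ↔ ∀ i, ¬ E i (i + m + 1) := by
  constructor
  · intro h1 i hi; exact h1 i ((wrap_diam_iff h hmn).2 hi)
  · intro h1 a ha
    rw [← cast_val a, wrap_diam_iff h hmn] at ha
    exact h1 _ ha

theorem ncard_good_all [NeZero (2 * n)] {e : ℕ} (hm : 0 < m) (he : n = m * e) (h2 : 2 ≤ e)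
    (k : ℕ) : {p | Good n m p ∧ weight n p = 2 * k}.ncard =
      if e ∣ k then (m + k / e - 1).choose (k / e) * m.choose (k / e) else 0 := by
  have hlt : m < n := by rw [he]; nlinarith
  have h1 := ncard_good hm he k (fun _ => True)
  simp only [and_true] at h1
  rw [h1]
  simp only [wr_iff_of_lt hlt]
  split_ifs with hk
  · obtain ⟨k', rfl⟩ := hk
    rw [Nat.mul_div_cancel_left _ (by omega)]
    rw [← (ncard_sys hm k').1]
    congr 1
    ext E
    simp only [Set.mem_ofPred_eq, Nat.mul_right_inj (show e ≠ 0 by omega)]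
  · refine Eq.trans (congrArg Set.ncard ?_) (Set.ncard_empty _)
    exact Set.eq_empty_iff_forall_notMem.2 fun E hE => hk ⟨_, hE.2.symm⟩

theorem ncard_good_noray [NeZero (2 * n)] {e : ℕ} (hm : 0 < m) (he : n = m * e) (h2 : 2 ≤ e)
    (k : ℕ) : {p | Good n m p ∧ weight n p = 2 * k ∧ ∀ a, ¬ p.2 a}.ncard =
      if e ∣ k then (m + k / e - 1).choose (k / e) * (m - 1).choose (k / e) else 0 := by
  have hlt : m < n := by rw [he]; nlinarith
  rw [ncard_good hm he k (fun p => ∀ a, ¬ p.2 a)]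
  simp only [wr_iff_of_lt hlt]
  split_ifs with hk
  · obtain ⟨k', rfl⟩ := hk
    rw [Nat.mul_div_cancel_left _ (by omega)]
    rw [← ncard_sys_noray hm k']
    congr 1
    ext E
    simp only [Set.mem_ofPred_eq, Nat.mul_right_inj (show e ≠ 0 by omega)]
    refine and_congr_right fun h => and_congr_right fun _ => ?_
    exact wrap_no_diam_iff h ⟨e, he⟩
  · refine Eq.trans (congrArg Set.ncard ?_) (Set.ncard_empty _)
    exact Set.eq_empty_iff_forall_notMem.2 fun E hE => hk ⟨_, hE.2.1.symm⟩

theorem ncard_self_all [NeZero (2 * n)] (hn : 0 < n) (k : ℕ) :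
    {p | Good n n p ∧ weight n p = 2 * k}.ncard =
      {E | Sys n E ∧ size n E = k ∧ ∀ i, ¬ E i (i + n)}.ncard := by
  have h1 := ncard_good hn (mul_one n).symm k (fun _ => True)
  simp only [and_true] at h1
  rw [h1]
  congr 1
  ext E
  simp only [Set.mem_ofPred_eq, wr_self_iff, one_mul]
  tauto

theorem ncard_self_noray [NeZero (2 * n)] (hn : 2 ≤ n) (k : ℕ) :
    {p | Good n n p ∧ weight n p = 2 * k ∧ ∀ a, ¬ p.2 a}.ncard =
      (n + k - 1).choose k * (n - 2).choose k := by
  rw [ncard_good (by omega) (mul_one n).symm k (fun p => ∀ a, ¬ p.2 a), ← ncard_sys_noloop hn k]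
  congr 1
  ext E
  simp only [Set.mem_ofPred_eq, wr_self_iff, one_mul]
  constructor
  · rintro ⟨⟨h1, h2⟩, h3, h4⟩
    exact ⟨h1, h3, (wrap_no_diam_iff h1 dvd_rfl).1 h4, h2⟩
  · rintro ⟨h1, h3, h4, h2⟩
    exact ⟨⟨h1, h2⟩, h3, (wrap_no_diam_iff h1 dvd_rfl).2 h4⟩

/-- A set of endpoints consisting of exactly one diameter. -/
def Single (n : ℕ) (c : ZMod (2 * n) → Prop) : Prop :=
  (∃ a, c a) ∧ ∀ a b, c a → c b → b = a ∨ b = a + (n : ZMod (2 * n))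

/-- Dissections with exactly one diameter unwrap to systems with a single class of rays and no
loop. -/
theorem ncard_self_single [NeZero (2 * n)] (hn : 2 ≤ n) (k : ℕ) :
    {p | Good n n p ∧ weight n p = 2 * k ∧ Single n p.2}.ncard =
      (Drawn n False True k).ncard := by
  rw [ncard_good (by omega) (mul_one n).symm k (fun p => Single n p.2)]
  congr 1
  ext E
  simp only [Set.mem_ofPred_eq, wr_self_iff, one_mul, Drawn, false_iff, true_iff]
  -- Endpoints of the same diameter differ by a multiple of `n`, so one diameter is one class.
  have hS : Sys n E → (∀ i, ¬ E i (i + n)) → (Single n (wrap n n E).2 ↔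
      (∃ i, E i (i + n + 1)) ∧ ∀ i j, (E i (i + n) ∨ E i (i + n + 1)) →
        (E j (j + n) ∨ E j (j + n + 1)) → (n : ℤ) ∣ i - j) := by
    intro h hl
    simp only [hl, false_or]
    unfold Single
    constructor
    · rintro ⟨⟨a, ha⟩, h2⟩
      refine ⟨?_, ?_⟩
      · rw [← cast_val a, wrap_diam_iff h dvd_rfl] at ha; exact ⟨_, ha⟩
      · intro i j hi hj
        rcases h2 _ _ ((wrap_diam_iff h dvd_rfl).2 hi) ((wrap_diam_iff h dvd_rfl).2 hj) with h3 | h3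
        · obtain ⟨t, ht⟩ := lift_eq h3.symm
          exact ⟨2 * t, by rw [ht]; push_cast; ring⟩
        · obtain ⟨t, ht⟩ := lift_eq (n := n) (x := j) (y := i + n) (by push_cast; exact h3)
          exact ⟨-(2 * t + 1), by rw [ht]; push_cast; ring⟩
    · rintro ⟨⟨i, hi⟩, h2⟩
      refine ⟨⟨i, (wrap_diam_iff h dvd_rfl).2 hi⟩, fun a b ha hb => ?_⟩
      have va := a.val_lt
      have vb := b.val_lt
      rw [← cast_val a, wrap_diam_iff h dvd_rfl] at ha
      rw [← cast_val b, wrap_diam_iff h dvd_rfl] at hb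
      rw [← cast_val a, ← cast_val b]
      obtain ⟨t, ht⟩ := h2 _ _ hb ha
      have hb' : ((b.val : ℕ) : ℤ) = a.val + n * t := by omega
      rcases Int.even_or_odd' t with ⟨u, rfl | rfl⟩
      · left
        rw [hb', show (n : ℤ) * (2 * u) = (2 * n : ℕ) * u by push_cast; ring]
        push_cast
        rw [cast_two_mul]; simp
      · right
        rw [hb', show (n : ℤ) * (2 * u + 1) = (2 * n : ℕ) * u + n by push_cast; ring]
        push_cast
        rw [cast_two_mul]; simp
  constructor
  · rintro ⟨⟨h1, h2⟩, h3, h4⟩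
    have := (hS h1 h2).1 h4
    exact ⟨h1, h3, not_exists.2 h2, this⟩
  · rintro ⟨h1, h3, h2, h4⟩
    exact ⟨⟨h1, not_exists.1 h2⟩, h3, (hS h1 (not_exists.1 h2)).2 h4⟩

/-- A single diameter has exactly one endpoint among the first `n` vertices. -/
theorem card_single [NeZero (2 * n)] {c : ZMod (2 * n) → Prop} (h : Single n c)
    (hper : ∀ a, c (a + (n : ZMod (2 * n))) ↔ c a) :
    Nat.card {a : ZMod (2 * n) // a.val < n ∧ c a} = 1 := by
  obtain ⟨⟨a, ha⟩, hu⟩ := h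
  have hn : 0 < n := by have := NeZero.ne (2 * n); omega
  have key : ∃ a0 : ZMod (2 * n), a0.val < n ∧ c a0 := by
    by_cases h1 : a.val < n
    · exact ⟨a, h1, ha⟩
    · refine ⟨a + (n : ZMod (2 * n)), ?_, (hper a).2 ha⟩
      have h2 := a.val_lt
      have h3 := val_intCast_of (N := 2 * n) (x := (a.val : ℤ) - n) (by omega)
        (by push_cast; omega)
      have h4 : (((a.val : ℤ) - n : ℤ) : ZMod (2 * n)) = a + (n : ZMod (2 * n)) := by
        push_cast
        rw [sub_eq_iff_eq_add, add_assoc, ← two_mul, cast_two_mul]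
        simp
      rw [h4] at h3
      omega
  obtain ⟨a0, h1, h2⟩ := key
  rw [Nat.card_eq_one_iff_unique]
  refine ⟨⟨?_⟩, ⟨⟨a0, h1, h2⟩⟩⟩
  have hall : ∀ b : ZMod (2 * n), b.val < n → c b → b = a0 := by
    intro b hb hcb
    rcases hu _ _ h2 hcb with h | h
    · exact h
    · exfalso
      have h3 := val_intCast_of (N := 2 * n) (x := (a0.val : ℤ) + n) (by omega)
        (by push_cast; omega)
      have h4 : (((a0.val : ℤ) + n : ℤ) : ZMod (2 * n)) = a0 + (n : ZMod (2 * n)) := by simp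
      rw [h4, ← h] at h3
      omega
  rintro ⟨b, hb⟩ ⟨b', hb'⟩
  rw [Subtype.mk.injEq, hall b hb.1 hb.2, hall b' hb'.1 hb'.2]

end counts

/-! ### Two colors of diameters -/

/-- Triples (chords, blue diameters, red diameters). -/
abbrev Triple (n : ℕ) : Type :=
  (ZMod (2 * n) → ZMod (2 * n) → Prop) × (ZMod (2 * n) → Prop) × (ZMod (2 * n) → Prop)

/-- The triples encoding D-dissections with `k` diagonals. -/
structure Tri (n k : ℕ) (S : Triple n) : Prop where
  symm : ∀ i j, S.1 i j → S.1 j i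
  ne : ∀ i j, S.1 i j → i ≠ j ∧ j ≠ i + 1 ∧ i ≠ j + 1 ∧ j ≠ i + (n : ZMod (2 * n))
  per : ∀ i j, S.1 (i + (n : ZMod (2 * n))) (j + (n : ZMod (2 * n))) ↔ S.1 i j
  perb : ∀ a, S.2.1 (a + (n : ZMod (2 * n))) ↔ S.2.1 a
  perr : ∀ a, S.2.2 (a + (n : ZMod (2 * n))) ↔ S.2.2 a
  nc : ∀ i j a b, S.1 i j → S.1 a b → ¬ crossE i j a b
  ncb : ∀ a i j, S.2.1 a → S.1 i j → ¬ crossE a (a + (n : ZMod (2 * n))) i j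
  ncr : ∀ a i j, S.2.2 a → S.1 i j → ¬ crossE a (a + (n : ZMod (2 * n))) i j
  compat : ∀ a b, S.2.1 a → S.2.2 b → b = a ∨ b = a + (n : ZMod (2 * n))
  size : Nat.card {p : ZMod (2 * n) × ZMod (2 * n) // p.1.val < p.2.val ∧ S.1 p.1 p.2} +
    2 * (Nat.card {a : ZMod (2 * n) // a.val < n ∧ S.2.1 a} +
      Nat.card {a : ZMod (2 * n) // a.val < n ∧ S.2.2 a}) = 2 * k

/-- Invariance of a D-dissection under the `d`-th power of the D-rotation. -/
structure RotInv (n d : ℕ) (S : Triple n) : Prop where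
  per : ∀ i j, S.1 (i + (d : ZMod (2 * n))) (j + (d : ZMod (2 * n))) ↔ S.1 i j
  perb : ∀ a, S.2.1 (a + (d : ZMod (2 * n))) ↔ (if d % 2 = 0 then S.2.1 a else S.2.2 a)
  perr : ∀ a, S.2.2 (a + (d : ZMod (2 * n))) ↔ (if d % 2 = 0 then S.2.2 a else S.2.1 a)

section assembly

variable {n k d : ℕ}

/-- All diameters of a pair are drawn blue. -/
def blue (p : (ZMod (2 * n) → ZMod (2 * n) → Prop) × (ZMod (2 * n) → Prop)) : Triple n :=
  (p.1, p.2, fun _ => False)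

/-- All diameters of a pair are drawn red. -/
def red (p : (ZMod (2 * n) → ZMod (2 * n) → Prop) × (ZMod (2 * n) → Prop)) : Triple n :=
  (p.1, fun _ => False, p.2)

/-- All diameters of a pair are drawn in both colors. -/
def both (p : (ZMod (2 * n) → ZMod (2 * n) → Prop) × (ZMod (2 * n) → Prop)) : Triple n :=
  (p.1, p.2, p.2)

theorem blue_injective : Function.Injective (blue (n := n)) := by
  rintro ⟨a, b⟩ ⟨a', b'⟩ h
  simp only [blue, Prod.mk.injEq] at h
  rw [h.1, h.2.1]

theorem red_injective : Function.Injective (red (n := n)) := by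
  rintro ⟨a, b⟩ ⟨a', b'⟩ h
  simp only [red, Prod.mk.injEq] at h
  rw [h.1, h.2.2]

theorem both_injective : Function.Injective (both (n := n)) := by
  rintro ⟨a, b⟩ ⟨a', b'⟩ h
  simp only [both, Prod.mk.injEq] at h
  rw [h.1, h.2.1]

variable {p : (ZMod (2 * n) → ZMod (2 * n) → Prop) × (ZMod (2 * n) → Prop)}

theorem tri_blue_iff : Tri n k (blue p) ↔ Good n n p ∧ weight n p = 2 * k := by
  have hw : Nat.card {a : ZMod (2 * n) // a.val < n ∧ False} = 0 := by simp
  constructor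
  · intro h
    refine ⟨⟨h.symm, h.ne, h.per, h.perb, h.nc, h.ncb⟩, ?_⟩
    have := h.size
    simp only [blue, hw] at this
    exact this
  · rintro ⟨h, hs⟩
    refine ⟨h.symm, h.ne, h.per, h.perc, fun _ => Iff.rfl, h.nc, h.ncc, fun _ _ _ h => h.elim,
      fun _ _ _ h => h.elim, ?_⟩
    simp only [blue, hw]
    exact hs

theorem tri_red_iff : Tri n k (red p) ↔ Good n n p ∧ weight n p = 2 * k := by
  have hw : Nat.card {a : ZMod (2 * n) // a.val < n ∧ False} = 0 := by simp
  constructor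
  · intro h
    refine ⟨⟨h.symm, h.ne, h.per, h.perr, h.nc, h.ncr⟩, ?_⟩
    have := h.size
    simp only [red, hw, zero_add] at this
    exact this
  · rintro ⟨h, hs⟩
    refine ⟨h.symm, h.ne, h.per, fun _ => Iff.rfl, h.perc, h.nc, fun _ _ _ h => h.elim, h.ncc,
      fun _ _ h => h.elim, ?_⟩
    simp only [red, hw, zero_add]
    exact hs

/-- Drawing a set of diameters in both colors is allowed only for a single diameter, which then
counts twice. -/
theorem tri_both_iff [NeZero (2 * n)] (hne : ∃ a, p.2 a) :
    Tri n k (both p) ↔ Good n n p ∧ weight n p + 2 = 2 * k ∧ Single n p.2 := by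
  constructor
  · intro h
    have hs : Single n p.2 := ⟨hne, fun a b => h.compat a b⟩
    refine ⟨⟨h.symm, h.ne, h.per, h.perb, h.nc, h.ncb⟩, ?_, hs⟩
    have := h.size
    have h1 := card_single hs h.perb
    simp only [both, h1] at this
    unfold weight
    rw [h1]
    omega
  · rintro ⟨h, h', hs⟩
    refine ⟨h.symm, h.ne, h.per, h.perc, h.perc, h.nc, h.ncc, h.ncc, hs.2, ?_⟩
    have h1 := card_single hs h.perc
    unfold weight at h'
    simp only [both]
    omega

/-- A predicate with period `m` is also periodic under multiples of `m`. -/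
theorem per_of_dvd {R : Type*} [Ring R] {f : R → Prop} {m : ℕ} {t : ℤ} (hmt : (m : ℤ) ∣ t)
    (h : ∀ a, f (a + (m : R)) ↔ f a) (a : R) : f (a + (t : R)) ↔ f a := by
  obtain ⟨e, rfl⟩ := hmt
  have h1 : Function.Periodic f (m : R) := fun a => propext (h a)
  have h2 := (h1.int_mul e) a
  rw [Int.cast_mul, Int.cast_natCast, (Int.cast_commute e (m : R)).eq.symm]
  exact iff_of_eq h2

/-- Two periods of a predicate have their greatest common divisor as a period. -/
theorem per_gcd {R : Type*} [Ring R] {f : R → Prop} {d n : ℕ}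
    (h1 : ∀ a, f (a + (d : R)) ↔ f a) (h2 : ∀ a, f (a + (n : R)) ↔ f a) (a : R) :
    f (a + ((Nat.gcd d n : ℕ) : R)) ↔ f a := by
  have e := Nat.gcd_eq_gcd_ab d n
  have : ((Nat.gcd d n : ℕ) : R) = ((d * Nat.gcdA d n : ℤ) : R) + ((n * Nat.gcdB d n : ℤ) : R) := by
    rw [← Int.cast_add, ← e, Int.cast_natCast]
  rw [this, ← add_assoc, per_of_dvd (dvd_mul_right _ _) h2, per_of_dvd (dvd_mul_right _ _) h1]

theorem per_rel_iff {R : Type*} [Ring R] {f : R → R → Prop} (c : R) :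
    (∀ i j, f (i + c) (j + c) ↔ f i j) ↔
      ∀ i j, ∀ a, f (i + (a + c)) (j + (a + c)) ↔ f (i + a) (j + a) := by
  constructor
  · intro h i j a; rw [← add_assoc, ← add_assoc, h]
  · intro h i j
    have := h i j 0
    simpa using this

/-- Invariance under rotation by `d` and by a half turn is invariance under rotation by `gcd d n`. -/
theorem good_gcd_iff : Good n (Nat.gcd d n) p ↔ Good n n p ∧
    (∀ i j, p.1 (i + (d : ZMod (2 * n))) (j + (d : ZMod (2 * n))) ↔ p.1 i j) ∧
    (∀ a, p.2 (a + (d : ZMod (2 * n))) ↔ p.2 a) := by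
  constructor
  · intro h
    have hrel : ∀ t : ℕ, Nat.gcd d n ∣ t → ∀ i j,
        (p.1 (i + (t : ZMod (2 * n))) (j + (t : ZMod (2 * n))) ↔ p.1 i j) := by
      intro t ht
      rw [per_rel_iff]
      intro i j a
      have := per_of_dvd (f := fun a => p.1 (i + a) (j + a)) (t := t) (by exact_mod_cast ht)
        ((per_rel_iff _).1 h.per i j) a
      simpa using this
    have hc : ∀ t : ℕ, Nat.gcd d n ∣ t → ∀ a, (p.2 (a + (t : ZMod (2 * n))) ↔ p.2 a) := by
      intro t ht a
      have := per_of_dvd (t := t) (by exact_mod_cast ht) h.perc a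
      simpa using this
    exact ⟨⟨h.symm, h.ne, hrel n (Nat.gcd_dvd_right _ _), hc n (Nat.gcd_dvd_right _ _), h.nc,
      h.ncc⟩, hrel d (Nat.gcd_dvd_left _ _), hc d (Nat.gcd_dvd_left _ _)⟩
  · rintro ⟨h, h1, h2⟩
    refine ⟨h.symm, h.ne, ?_, per_gcd h2 h.perc, h.nc, h.ncc⟩
    rw [per_rel_iff]
    intro i j a
    exact per_gcd (f := fun a => p.1 (i + a) (j + a)) ((per_rel_iff _).1 h1 i j)
      ((per_rel_iff _).1 h.per i j) a

/-- For even `d` colors are preserved, so a blue dissection is fixed exactly when its underlying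
dissection is invariant. -/
theorem blue_mem_iff (hd : d % 2 = 0) :
    (Tri n k (blue p) ∧ RotInv n d (blue p)) ↔ Good n (Nat.gcd d n) p ∧ weight n p = 2 * k := by
  rw [tri_blue_iff, good_gcd_iff]
  constructor
  · rintro ⟨⟨h1, h2⟩, h3⟩
    refine ⟨⟨h1, h3.per, fun a => ?_⟩, h2⟩
    have := h3.perb a
    rwa [if_pos hd] at this
  · rintro ⟨⟨h1, h2, h3⟩, h4⟩
    refine ⟨⟨h1, h4⟩, h2, fun a => ?_, fun a => ?_⟩
    · rw [if_pos hd]; exact h3 a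
    · rw [if_pos hd]; exact Iff.rfl

theorem red_mem_iff (hd : d % 2 = 0) :
    (Tri n k (red p) ∧ RotInv n d (red p)) ↔ Good n (Nat.gcd d n) p ∧ weight n p = 2 * k := by
  rw [tri_red_iff, good_gcd_iff]
  constructor
  · rintro ⟨⟨h1, h2⟩, h3⟩
    refine ⟨⟨h1, h3.per, fun a => ?_⟩, h2⟩
    have := h3.perr a
    rwa [if_pos hd] at this
  · rintro ⟨⟨h1, h2, h3⟩, h4⟩
    refine ⟨⟨h1, h4⟩, h2, fun a => ?_, fun a => ?_⟩
    · rw [if_pos hd]; exact Iff.rfl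
    · rw [if_pos hd]; exact h3 a

/-- Without diameters the parity of `d` is irrelevant. -/
theorem blue_empty_mem_iff (hp : ∀ a, ¬ p.2 a) :
    (Tri n k (blue p) ∧ RotInv n d (blue p)) ↔ Good n (Nat.gcd d n) p ∧ weight n p = 2 * k := by
  rw [tri_blue_iff, good_gcd_iff]
  constructor
  · rintro ⟨⟨h1, h2⟩, h3⟩
    exact ⟨⟨h1, h3.per, fun a => by simp [hp]⟩, h2⟩
  · rintro ⟨⟨h1, h2, h3⟩, h4⟩
    exact ⟨⟨h1, h4⟩, h2, fun a => by simp [hp, blue], fun a => by simp [hp, blue]⟩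

/-- A nonempty set of diameters drawn in both colors consists of a single diameter. -/
theorem both_mem_iff [NeZero (2 * n)] (hnd : n ∣ d) (hne : ∃ a, p.2 a) :
    (Tri n k (both p) ∧ RotInv n d (both p)) ↔
      Good n n p ∧ weight n p + 2 = 2 * k ∧ Single n p.2 := by
  rw [tri_both_iff hne]
  constructor
  · rintro ⟨h, -⟩; exact h
  · intro h
    refine ⟨h, ?_⟩
    have hg : Good n (Nat.gcd d n) p := by rw [Nat.gcd_eq_right hnd]; exact h.1
    have := good_gcd_iff.1 hg
    exact ⟨this.2.1, fun a => by simpa [both] using this.2.2 a,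
      fun a => by simpa [both] using this.2.2 a⟩

/-- If `n ∤ d`, diameters of both colors cannot coexist in an invariant dissection. -/
theorem not_both [NeZero (2 * n)] {S : Triple n} (hnd : ¬ n ∣ d) (hS : Tri n k S)
    (hI : RotInv n d S) (hd : d % 2 = 0) : (∀ a, ¬ S.2.1 a) ∨ (∀ a, ¬ S.2.2 a) := by
  by_contra hcon
  push Not at hcon
  obtain ⟨⟨a, ha⟩, b, hb⟩ := hcon
  have hb' := (hI.perr b).2 (by rw [if_pos hd]; exact hb)
  have h1 := hS.compat _ _ ha hb
  have h2 := hS.compat _ _ ha hb'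
  -- The single diameter in common is mapped to itself, so `d` is `0` or `n` modulo `2n`.
  have key : (d : ZMod (2 * n)) = 0 ∨ (d : ZMod (2 * n)) = n := by
    have h0 : (n : ZMod (2 * n)) + n = 0 := by rw [← two_mul, cast_two_mul]
    rcases h1 with rfl | rfl <;> rcases h2 with h2 | h2
    · left; simpa using h2
    · right; simpa using h2
    · right
      have : a + ((n : ZMod (2 * n)) + d) = a + 0 := by rw [← add_assoc, h2, add_zero]
      have := add_left_cancel this
      rw [← h0] at this
      exact add_left_cancel this
    · left
      simpa using h2
  apply hnd
  rcases key with h | h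
  · rw [ZMod.natCast_eq_zero_iff] at h
    exact (dvd_mul_left n 2).trans h
  · rw [ZMod.natCast_eq_natCast_iff, Nat.modEq_iff_dvd] at h
    have h3 : (n : ℤ) ∣ (n : ℤ) - d := (Dvd.intro_left 2 (by push_cast; rfl)).trans h
    have := (dvd_sub_right (dvd_refl (n : ℤ))).1 h3
    exact_mod_cast this

/-- If `n ∤ d` and `d` is odd there are no diameters in an invariant dissection. -/
theorem no_diam [NeZero (2 * n)] {S : Triple n} (hnd : ¬ n ∣ d) (hS : Tri n k S)
    (hI : RotInv n d S) (hd : d % 2 ≠ 0) : (∀ a, ¬ S.2.1 a) ∧ (∀ a, ¬ S.2.2 a) := by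
  have hblue : ∀ a, ¬ S.2.1 a := by
    intro a ha
    have hb := (hI.perr a).2 (by rw [if_neg hd]; exact ha)
    have h2 := hS.compat _ _ ha hb
    apply hnd
    rcases h2 with h | h
    · have h : (d : ZMod (2 * n)) = 0 := by simpa using h
      rw [ZMod.natCast_eq_zero_iff] at h
      exact (dvd_mul_left n 2).trans h
    · have h : (d : ZMod (2 * n)) = n := by simpa using h
      rw [ZMod.natCast_eq_natCast_iff, Nat.modEq_iff_dvd] at h
      have h3 : (n : ℤ) ∣ (n : ℤ) - d := (Dvd.intro_left 2 (by push_cast; rfl)).trans h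
      have := (dvd_sub_right (dvd_refl (n : ℤ))).1 h3
      exact_mod_cast this
  refine ⟨hblue, fun a ha => ?_⟩
  exact hblue _ ((hI.perb a).2 (by rw [if_neg hd]; exact ha))

theorem eq_blue {S : Triple n} (h : ∀ a, ¬ S.2.2 a) : S = blue (S.1, S.2.1) := by
  refine Prod.ext rfl (Prod.ext rfl ?_)
  funext a
  simp [blue, h]

theorem eq_red {S : Triple n} (h : ∀ a, ¬ S.2.1 a) : S = red (S.1, S.2.2) := by
  refine Prod.ext rfl (Prod.ext ?_ rfl)
  funext a
  simp [red, h]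

end assembly

/-! ### Numbers of fixed points -/

section fixedpoints

variable {n k d : ℕ}

/-- The D-dissections with `k` diagonals fixed by the `d`-th power of the D-rotation. -/
def fixedSet (n k d : ℕ) : Set (Triple n) := {S | Tri n k S ∧ RotInv n d S}

/-- Monochromatic dissections: the two choices of color agree exactly when there is no diameter. -/
theorem ncard_mono [NeZero (2 * n)] (m : ℕ) :
    (blue '' {p | Good n m p ∧ weight n p = 2 * k} ∪
      red '' {p | Good n m p ∧ weight n p = 2 * k}).ncard +
      {p | Good n m p ∧ weight n p = 2 * k ∧ ∀ a, ¬ p.2 a}.ncard =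
      2 * {p | Good n m p ∧ weight n p = 2 * k}.ncard := by
  have hi : blue '' {p | Good n m p ∧ weight n p = 2 * k} ∩
      red '' {p | Good n m p ∧ weight n p = 2 * k} =
      blue '' {p | Good n m p ∧ weight n p = 2 * k ∧ ∀ a, ¬ p.2 a} := by
    ext S
    constructor
    · rintro ⟨⟨p, ⟨h1, h2⟩, rfl⟩, q, -, hq⟩
      refine ⟨p, ⟨h1, h2, fun a ha => ?_⟩, rfl⟩
      have := congrFun (congrArg (fun S => S.2.1) hq) a
      simp only [red, blue] at this
      exact (this.symm ▸ ha : False)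
    · rintro ⟨p, ⟨h1, h2, h3⟩, rfl⟩
      refine ⟨⟨p, ⟨h1, h2⟩, rfl⟩, p, ⟨h1, h2⟩, ?_⟩
      have : p.2 = fun _ => False := by funext a; simp [h3]
      simp [red, blue, this]
  have := Set.ncard_union_add_ncard_inter (blue '' {p | Good n m p ∧ weight n p = 2 * k})
    (red '' {p | Good n m p ∧ weight n p = 2 * k}) (Set.toFinite _) (Set.toFinite _)
  rw [hi, Set.ncard_image_of_injective _ blue_injective,
    Set.ncard_image_of_injective _ blue_injective,
    Set.ncard_image_of_injective _ red_injective] at this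
  omega

theorem mono_subset (hd : d % 2 = 0) :
    (blue '' {p | Good n (Nat.gcd d n) p ∧ weight n p = 2 * k} ∪
      red '' {p | Good n (Nat.gcd d n) p ∧ weight n p = 2 * k}) ⊆ fixedSet n k d := by
  rintro S (⟨p, hp, rfl⟩ | ⟨p, hp, rfl⟩)
  · exact (blue_mem_iff hd).2 hp
  · exact (red_mem_iff hd).2 hp

/-- A fixed D-dissection lacking one of the colors is monochromatic. -/
theorem mem_mono_of {S : Triple n} (hd : d % 2 = 0) (hS : S ∈ fixedSet n k d)
    (h : (∀ a, ¬ S.2.1 a) ∨ (∀ a, ¬ S.2.2 a)) :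
    S ∈ (blue '' {p | Good n (Nat.gcd d n) p ∧ weight n p = 2 * k} ∪
      red '' {p | Good n (Nat.gcd d n) p ∧ weight n p = 2 * k}) := by
  rcases h with h | h
  · right
    have e := eq_red h
    refine ⟨_, ?_, e.symm⟩
    rw [e] at hS
    exact (red_mem_iff hd).1 hS
  · left
    have e := eq_blue h
    refine ⟨_, ?_, e.symm⟩
    rw [e] at hS
    exact (blue_mem_iff hd).1 hS

/-- For `d` even and `n ∤ d` all fixed D-dissections are monochromatic. -/
theorem fixed_even [NeZero (2 * n)] (hnd : ¬ n ∣ d) (hd : d % 2 = 0) :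
    (fixedSet n k d).ncard +
      {p | Good n (Nat.gcd d n) p ∧ weight n p = 2 * k ∧ ∀ a, ¬ p.2 a}.ncard =
      2 * {p | Good n (Nat.gcd d n) p ∧ weight n p = 2 * k}.ncard := by
  rw [← ncard_mono]
  congr 2
  exact Set.Subset.antisymm
    (fun S hS => mem_mono_of hd hS (not_both hnd hS.1 hS.2 hd)) (mono_subset hd)

/-- For `d` odd and `n ∤ d` the fixed D-dissections have no diameters. -/
theorem fixed_odd [NeZero (2 * n)] (hnd : ¬ n ∣ d) (hd : d % 2 ≠ 0) :
    (fixedSet n k d).ncard =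
      {p | Good n (Nat.gcd d n) p ∧ weight n p = 2 * k ∧ ∀ a, ¬ p.2 a}.ncard := by
  rw [← Set.ncard_image_of_injective _ blue_injective]
  congr 1
  apply Set.Subset.antisymm
  · intro S hS
    obtain ⟨h1, h2⟩ := no_diam hnd hS.1 hS.2 hd
    have e := eq_blue h2
    rw [e] at hS
    have := (blue_empty_mem_iff (p := (S.1, S.2.1)) h1).1 hS
    exact ⟨_, ⟨this.1, this.2, h1⟩, e.symm⟩
  · rintro _ ⟨p, ⟨h1, h2, h3⟩, rfl⟩
    exact (blue_empty_mem_iff h3).2 ⟨h1, h2⟩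

/-- Dissections containing diameters of both colors: one diameter, drawn twice. -/
def bichrom (n k : ℕ) : Set (Triple n) :=
  both '' {p | Good n n p ∧ weight n p + 2 = 2 * k ∧ Single n p.2}

/-- A diameter drawn in both colors counts twice, so the underlying dissection has `k - 1`
diagonals. -/
theorem ncard_bichrom [NeZero (2 * n)] (hn : 2 ≤ n) :
    (bichrom n k).ncard = if k = 0 then 0 else (Drawn n False True (k - 1)).ncard := by
  rw [bichrom, Set.ncard_image_of_injective _ both_injective]
  split_ifs with h
  · subst h
    have : {p | Good n n p ∧ weight n p + 2 = 2 * 0 ∧ Single n p.2} = ∅ := by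
      ext p
      simp
    rw [this, Set.ncard_empty]
  · rw [← ncard_self_single hn]
    congr 1
    ext p
    have : weight n p + 2 = 2 * k ↔ weight n p = 2 * (k - 1) := by omega
    simp only [Set.mem_ofPred_eq, this]

/-- When both colors occur, compatibility forces all diameters to coincide. -/
theorem eq_both {S : Triple n} (hS : Tri n k S) (h1 : ∃ a, S.2.1 a) (h2 : ∃ a, S.2.2 a) :
    S = both (S.1, S.2.1) := by
  have h0 : (n : ZMod (2 * n)) + n = 0 := by rw [← two_mul, cast_two_mul]
  refine Prod.ext rfl (Prod.ext rfl ?_)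
  obtain ⟨a, ha⟩ := h1
  obtain ⟨b, hb⟩ := h2
  funext x
  apply propext
  show S.2.2 x ↔ S.2.1 x
  constructor
  · intro hx
    rcases hS.compat _ _ ha hx with rfl | rfl
    · exact ha
    · exact (hS.perb _).2 ha
  · intro hx
    rcases hS.compat _ _ hx hb with rfl | rfl
    · exact hb
    · exact (hS.perr _).1 hb

theorem bichrom_subset [NeZero (2 * n)] (hnd : n ∣ d) : bichrom n k ⊆ fixedSet n k d := by
  rintro _ ⟨p, hp, rfl⟩
  exact (both_mem_iff hnd hp.2.2.1).2 hp

theorem mem_bichrom [NeZero (2 * n)] {S : Triple n} (hnd : n ∣ d) (hS : S ∈ fixedSet n k d)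
    (h1 : ∃ a, S.2.1 a) (h2 : ∃ a, S.2.2 a) : S ∈ bichrom n k := by
  have e := eq_both hS.1 h1 h2
  rw [e] at hS
  exact ⟨_, (both_mem_iff (p := (S.1, S.2.1)) hnd h1).1 hS, e.symm⟩

/-- For `d` even and `n ∣ d`: every D-dissection is fixed, be it monochromatic or with one diameter
in both colors. -/
theorem fixed_even_self [NeZero (2 * n)] (hn : 2 ≤ n) (hnd : n ∣ d) (hd : d % 2 = 0) :
    (fixedSet n k d).ncard + (n + k - 1).choose k * (n - 2).choose k =
      2 * {E | Sys n E ∧ size n E = k ∧ ∀ i, ¬ E i (i + n)}.ncard +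
      if k = 0 then 0 else (Drawn n False True (k - 1)).ncard := by
  have hg : Nat.gcd d n = n := Nat.gcd_eq_right hnd
  have hT : fixedSet n k d = (blue '' {p | Good n n p ∧ weight n p = 2 * k} ∪
      red '' {p | Good n n p ∧ weight n p = 2 * k}) ∪ bichrom n k := by
    apply Set.Subset.antisymm
    · intro S hS
      by_cases h : (∀ a, ¬ S.2.1 a) ∨ (∀ a, ¬ S.2.2 a)
      · left
        have := mem_mono_of hd hS h
        rwa [hg] at this
      · push Not at h
        exact Or.inr (mem_bichrom hnd hS h.1 h.2)
    · refine Set.union_subset ?_ (bichrom_subset hnd)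
      have := mono_subset (n := n) (k := k) hd
      rwa [hg] at this
  have hdis : Disjoint (blue '' {p | Good n n p ∧ weight n p = 2 * k} ∪
      red '' {p | Good n n p ∧ weight n p = 2 * k}) (bichrom n k) := by
    rw [Set.disjoint_left]
    rintro _ (⟨p, -, rfl⟩ | ⟨p, -, rfl⟩) ⟨q, hq, h⟩
    · obtain ⟨a, ha⟩ := hq.2.2.1
      exact ((congrFun (congrArg (fun S => S.2.2) h) a).mp ha : False)
    · obtain ⟨a, ha⟩ := hq.2.2.1
      exact ((congrFun (congrArg (fun S => S.2.1) h) a).mp ha : False)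
  rw [hT, Set.ncard_union_eq hdis (Set.toFinite _) (Set.toFinite _), ncard_bichrom hn,
    ← ncard_self_noray hn, ← ncard_self_all (by omega), ← ncard_mono]
  omega

/-- For `d` odd and `n ∣ d`: the rotation swaps the colors, so the fixed D-dissections have no
diameter or one diameter in both colors. -/
theorem fixed_odd_self [NeZero (2 * n)] (hn : 2 ≤ n) (hnd : n ∣ d) (hd : d % 2 ≠ 0) :
    (fixedSet n k d).ncard = (n + k - 1).choose k * (n - 2).choose k +
      if k = 0 then 0 else (Drawn n False True (k - 1)).ncard := by
  have hg : Nat.gcd d n = n := Nat.gcd_eq_right hnd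
  have hT : fixedSet n k d =
      blue '' {p | Good n n p ∧ weight n p = 2 * k ∧ ∀ a, ¬ p.2 a} ∪ bichrom n k := by
    apply Set.Subset.antisymm
    · intro S hS
      by_cases h : ∀ a, ¬ S.2.2 a
      · left
        have h1 : ∀ a, ¬ S.2.1 a := fun a ha =>
          h _ ((hS.2.perr a).2 (by rw [if_neg hd]; exact ha))
        have e := eq_blue h
        rw [e] at hS
        have := (blue_empty_mem_iff (p := (S.1, S.2.1)) h1).1 hS
        rw [hg] at this
        exact ⟨_, ⟨this.1, this.2, h1⟩, e.symm⟩
      · right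
        push Not at h
        obtain ⟨a, ha⟩ := h
        exact mem_bichrom hnd hS
          ⟨_, (hS.2.perb a).2 (by rw [if_neg hd]; exact ha)⟩ ⟨a, ha⟩
    · refine Set.union_subset ?_ (bichrom_subset hnd)
      rintro _ ⟨p, ⟨h1, h2, h3⟩, rfl⟩
      refine (blue_empty_mem_iff h3).2 ⟨?_, h2⟩
      rwa [hg]
  have hdis : Disjoint (blue '' {p | Good n n p ∧ weight n p = 2 * k ∧ ∀ a, ¬ p.2 a})
      (bichrom n k) := by
    rw [Set.disjoint_left]
    rintro _ ⟨p, -, rfl⟩ ⟨q, hq, h⟩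
    obtain ⟨a, ha⟩ := hq.2.2.1
    exact ((congrFun (congrArg (fun S => S.2.2) h) a).mp ha : False)
  rw [hT, Set.ncard_union_eq hdis (Set.toFinite _) (Set.toFinite _), ncard_bichrom hn,
    Set.ncard_image_of_injective _ blue_injective, ncard_self_noray hn]

/-- The cardinality of `Drawn`, solved for. -/
theorem ncard_single_eq (hn : 2 ≤ n) (κ : ℕ) : (Drawn n False True κ).ncard =
    if κ = 0 then 0 else (n + κ - 1).choose κ * (n - 2).choose (κ - 1) := by
  have h := ncard_single hn κ
  obtain ⟨n, rfl⟩ : ∃ l, n = l + 2 := ⟨n - 2, by omega⟩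
  rcases κ with _ | κ
  · simp at h ⊢; exact h
  · rw [if_neg (by omega)]
    have : (n + 2 - 1).choose (κ + 1) = n.choose κ + n.choose (κ + 1) := Nat.choose_succ_succ n κ
    rw [this] at h
    simp only [Nat.add_sub_cancel] at h ⊢
    rw [mul_add] at h
    omega

end fixedpoints

/-! ### Evaluating the polynomial -/

section evaluation

/-- The polynomial of the cyclic sieving triple at `q² = x`, `qⁿ = w`. -/
noncomputable def sieve (n k : ℕ) (x w : ℂ) : ℂ :=
  (qbinom (n + k - 1) k).eval x * (qbinom (n - 1) k).eval x +
    (qbinom (n + k - 1) k).eval x * (if 1 ≤ k then (qbinom (n - 2) (k - 1)).eval x else 0) * w +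
    (qbinom (n + k - 1) k).eval x * (if 2 ≤ k then (qbinom (n - 2) (k - 2)).eval x else 0) +
    (qbinom (n + k - 2) k).eval x * (if 2 ≤ k then (qbinom (n - 2) (k - 2)).eval x else 0) * w

/-- The `q`-Lucas theorem for explicitly given quotients and remainders. -/
theorem qbinom_eval_of {x : ℂ} {e M r a b c t : ℕ} (hq : IsPrimitiveRoot x e)
    (hM : M = e * a + b) (hb : b < e) (hr : r = e * c + t) (ht : t < e) :
    (qbinom M r).eval x = (a.choose c : ℂ) * (qbinom b t).eval x := by
  have he : 0 < e := by omega
  rw [qLucas he hq, hM, hr, Nat.mul_add_div he, Nat.mul_add_div he, Nat.mul_add_mod,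
    Nat.mul_add_mod, Nat.div_eq_of_lt hb, Nat.div_eq_of_lt ht, Nat.mod_eq_of_lt hb,
    Nat.mod_eq_of_lt ht, add_zero, add_zero]

theorem qbinom_eval_zero {x : ℂ} {e M r a b c t : ℕ} (hq : IsPrimitiveRoot x e)
    (hM : M = e * a + b) (hb : b < t) (hr : r = e * c + t) (ht : t < e) :
    (qbinom M r).eval x = 0 := by
  rw [qbinom_eval_of hq hM (by omega) hr ht, qbinom_eq_zero hb]
  simp

/-- At `q = 1` the Gaussian binomials are ordinary binomials. -/
theorem qbinom_eval_one (M r : ℕ) : (qbinom M r).eval 1 = (M.choose r : ℂ) := by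
  have := qbinom_eval_of (a := M) (b := 0) (c := r) (t := 0) IsPrimitiveRoot.one
    (by omega) (by omega) (by omega) (by omega) (M := M) (r := r)
  rw [this, qbinom_zero_right]
  simp

/-- If `e ∤ k`, a remainder modulo `e` is too small in every summand. -/
theorem sieve_not_dvd {n m e k : ℕ} {x : ℂ} (hq : IsPrimitiveRoot x e) (hm : 0 < m)
    (hn : n = m * e) (he : 2 ≤ e) (hk : ¬ e ∣ k) (w : ℂ) : sieve n k x w = 0 := by
  obtain ⟨m, rfl⟩ : ∃ l, m = l + 1 := ⟨m - 1, by omega⟩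
  have hs : 0 < k % e := Nat.pos_of_ne_zero fun h => hk (Nat.dvd_of_mod_eq_zero h)
  have hs' : k % e < e := Nat.mod_lt _ (by omega)
  have hk' : k = e * (k / e) + k % e := (Nat.div_add_mod k e).symm
  generalize k / e = c at hk'
  generalize hsd : k % e = s at hs hs' hk'
  have hn' : n = e * m + e := by rw [hn]; ring
  have h1 : (qbinom (n + k - 1) k).eval x = 0 :=
    qbinom_eval_zero (a := m + 1 + c) (b := s - 1) hq (by rw [mul_add, mul_add]; omega)
      (by omega) hk' hs'
  have h2 : (qbinom (n + k - 2) k).eval x *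
      (if 2 ≤ k then (qbinom (n - 2) (k - 2)).eval x else 0) = 0 := by
    by_cases hs1 : 2 ≤ s
    · rw [qbinom_eval_zero (a := m + 1 + c) (b := s - 2) hq (by rw [mul_add, mul_add]; omega)
        (by omega) hk' hs', zero_mul]
    · have : s = 1 := by omega
      subst this
      split_ifs with h
      · obtain ⟨c, rfl⟩ : ∃ l, c = l + 1 := ⟨c - 1, by
          rcases Nat.eq_zero_or_pos c with rfl | h
          · omega
          · omega⟩
        rw [mul_add] at hk'
        rw [qbinom_eval_zero (M := n - 2) (a := m) (b := e - 2) (c := c) (t := e - 1) hq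
          (by omega) (by omega) (by omega) (by omega), mul_zero]
      · rw [mul_zero]
  rw [sieve, h1, h2]
  simp

/-- If `e ∣ k`, the second summand vanishes and the others become ordinary binomials. -/
theorem sieve_dvd {n m e j : ℕ} {x : ℂ} (hq : IsPrimitiveRoot x e) (hm : 0 < m)
    (hn : n = m * e) (he : 2 ≤ e) (w : ℂ) : sieve n (e * (j + 1)) x w =
      ((m + j).choose (j + 1) : ℂ) * (((m - 1).choose (j + 1) : ℂ) +
        ((m - 1).choose j : ℂ) * (1 + w)) := by
  obtain ⟨m, rfl⟩ : ∃ l, m = l + 1 := ⟨m - 1, by omega⟩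
  have hn' : n = e * m + e := by rw [hn]; ring
  have hk : e * (j + 1) = e * j + e := by ring
  have h1 : (qbinom (n + e * (j + 1) - 1) (e * (j + 1))).eval x =
      ((m + 1 + j).choose (j + 1) : ℂ) := by
    rw [qbinom_eval_of (a := m + 1 + j) (b := e - 1) (c := j + 1) (t := 0) hq
      (by simp only [mul_add]; omega) (by omega) (by omega) (by omega), qbinom_zero_right]
    simp
  have h2 : (qbinom (n - 1) (e * (j + 1))).eval x = (m.choose (j + 1) : ℂ) := by
    rw [qbinom_eval_of (a := m) (b := e - 1) (c := j + 1) (t := 0) hq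
      (by omega) (by omega) (by omega) (by omega), qbinom_zero_right]
    simp
  have h3 : (qbinom (n - 2) (e * (j + 1) - 1)).eval x = 0 :=
    qbinom_eval_zero (a := m) (b := e - 2) (c := j) (t := e - 1) hq
      (by omega) (by omega) (by omega) (by omega)
  have h4 : (qbinom (n - 2) (e * (j + 1) - 2)).eval x = (m.choose j : ℂ) := by
    rw [qbinom_eval_of (a := m) (b := e - 2) (c := j) (t := e - 2) hq
      (by omega) (by omega) (by omega) (by omega), qbinom_self]
    simp
  have h5 : (qbinom (n + e * (j + 1) - 2) (e * (j + 1))).eval x =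
      ((m + 1 + j).choose (j + 1) : ℂ) := by
    rw [qbinom_eval_of (a := m + 1 + j) (b := e - 2) (c := j + 1) (t := 0) hq
      (by simp only [mul_add]; omega) (by omega) (by omega) (by omega), qbinom_zero_right]
    simp
  rw [sieve, if_pos (by omega), if_pos (by omega), h1, h2, h3, h4, h5, Nat.add_sub_cancel]
  ring

theorem sieve_zero (n : ℕ) (x w : ℂ) : sieve n 0 x w = 1 := by
  simp [sieve, qbinom_zero_right]

/-- The sieve at `x` of order at least two, in the form in which the fixed points are counted. -/
theorem sieve_eq {n m e k : ℕ} {x : ℂ} (hq : IsPrimitiveRoot x e) (hm : 0 < m)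
    (hn : n = m * e) (he : 2 ≤ e) :
    sieve n k x 1 + ((if e ∣ k then (m + k / e - 1).choose (k / e) * (m - 1).choose (k / e)
      else 0 : ℕ) : ℂ) =
      2 * ((if e ∣ k then (m + k / e - 1).choose (k / e) * m.choose (k / e) else 0 : ℕ) : ℂ) ∧
    sieve n k x (-1) = ((if e ∣ k then (m + k / e - 1).choose (k / e) * (m - 1).choose (k / e)
      else 0 : ℕ) : ℂ) := by
  by_cases hk : e ∣ k
  · simp only [if_pos hk]
    obtain ⟨c, rfl⟩ := hk
    rw [Nat.mul_div_cancel_left c (by omega)]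
    rcases c with _ | j
    · rw [mul_zero, sieve_zero, sieve_zero]
      simp
      norm_num
    · rw [sieve_dvd hq hm hn he, sieve_dvd hq hm hn he]
      obtain ⟨m, rfl⟩ : ∃ l, m = l + 1 := ⟨m - 1, by omega⟩
      have e1 : m + 1 + (j + 1) - 1 = m + 1 + j := by omega
      rw [e1, Nat.add_sub_cancel, Nat.choose_succ_succ m j]
      push_cast
      constructor <;> ring
  · simp only [if_neg hk]
    rw [sieve_not_dvd hq hm hn he hk, sieve_not_dvd hq hm hn he hk]
    simp

/-- The order of `ζ ^ (2 * d)`. -/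
theorem primitive_sq_pow {n : ℕ} (hn : 0 < n) (d : ℕ) :
    IsPrimitiveRoot ((Complex.exp (2 * Real.pi * Complex.I / (2 * n)) ^ d) ^ 2)
      (n / Nat.gcd d n) := by
  have h := Complex.isPrimitiveRoot_exp (2 * n) (by omega)
  push_cast at h
  have h2 := h.pow (by omega) (rfl : 2 * n = 2 * n)
  rw [← pow_mul, mul_comm d 2, pow_mul]
  have hf : IsOfFinOrder (Complex.exp (2 * Real.pi * Complex.I / (2 * n)) ^ 2) :=
    isOfFinOrder_iff_pow_eq_one.2 ⟨n, hn, h2.pow_eq_one⟩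
  have := IsOfFinOrder.orderOf_pow _ d hf
  rw [← h2.eq_orderOf, Nat.gcd_comm] at this
  rw [← this]
  exact IsPrimitiveRoot.orderOf _

/-- `ζ ^ n = -1`. -/
theorem exp_pow_mul {n : ℕ} (hn : 0 < n) (d : ℕ) :
    Complex.exp (2 * Real.pi * Complex.I / (2 * n)) ^ (d * n) = (-1) ^ d := by
  rw [mul_comm d n, pow_mul, ← Complex.exp_nat_mul]
  congr 1
  rw [← Complex.exp_pi_mul_I]
  congr 1
  have : (n : ℂ) ≠ 0 := by exact_mod_cast hn.ne'
  field_simp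

end evaluation

/-! ### Cyclic sieving -/

section sieving

variable {n k d : ℕ}

/-- Here `m = gcd(d, n) < n`, and `q ^ 2` has order at least two. -/
theorem sieving_not_dvd (hn : 2 ≤ n) (hnd : ¬ n ∣ d) :
    ((fixedSet n k d).ncard : ℂ) =
      sieve n k ((Complex.exp (2 * Real.pi * Complex.I / (2 * n)) ^ d) ^ 2) ((-1) ^ d) := by
  have : NeZero (2 * n) := ⟨by omega⟩
  have hm : 0 < Nat.gcd d n := Nat.gcd_pos_of_pos_right d (by omega)
  have he : n = Nat.gcd d n * (n / Nat.gcd d n) := (Nat.mul_div_cancel' (Nat.gcd_dvd_right d n)).symm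
  have hq := primitive_sq_pow (n := n) (by omega) d
  have he2 : 2 ≤ n / Nat.gcd d n := by
    by_contra hlt
    have : n / Nat.gcd d n = 0 ∨ n / Nat.gcd d n = 1 := by
      generalize n / Nat.gcd d n = e at hlt
      omega
    rcases this with h | h
    · rw [h, mul_zero] at he; omega
    · rw [h, mul_one] at he
      exact hnd (he ▸ Nat.gcd_dvd_left d n)
  obtain ⟨h1, h2⟩ := sieve_eq (k := k) hq hm he he2
  rw [← ncard_good_all hm he he2, ← ncard_good_noray hm he he2] at h1
  rw [← ncard_good_noray hm he he2] at h2
  rcases Nat.mod_two_eq_zero_or_one d with hd | hd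
  · rw [(Nat.even_iff.2 hd).neg_one_pow]
    have := congrArg (Nat.cast : ℕ → ℂ) (fixed_even (k := k) hnd hd)
    push_cast at this
    linear_combination this - h1
  · rw [(Nat.odd_iff.2 hd).neg_one_pow, h2, fixed_odd hnd (by omega)]

/-- Here `m = n` and `q ^ 2 = 1`. -/
theorem sieving_dvd (hn : 2 ≤ n) (hnd : n ∣ d) :
    ((fixedSet n k d).ncard : ℂ) =
      sieve n k ((Complex.exp (2 * Real.pi * Complex.I / (2 * n)) ^ d) ^ 2) ((-1) ^ d) := by
  have : NeZero (2 * n) := ⟨by omega⟩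
  have hq := primitive_sq_pow (n := n) (by omega) d
  rw [Nat.gcd_eq_right hnd, Nat.div_self (by omega), IsPrimitiveRoot.one_right_iff] at hq
  have hN := congrArg (Nat.cast : ℕ → ℂ) (ncard_noloop hn k)
  rw [hq]
  simp only [sieve, qbinom_eval_one]
  rw [ncard_single_eq hn, ncard_single_eq hn] at hN
  rcases Nat.mod_two_eq_zero_or_one d with hd | hd
  · rw [(Nat.even_iff.2 hd).neg_one_pow]
    have hF := congrArg (Nat.cast : ℕ → ℂ) (fixed_even_self (k := k) hn hnd hd)
    rw [ncard_single_eq hn] at hF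
    generalize (fixedSet n k d).ncard = F at hF ⊢
    generalize Set.ncard {E | Sys n E ∧ size n E = k ∧ ∀ i, ¬ E i (i + n)} = A at hF hN
    obtain ⟨l, rfl⟩ : ∃ l, n = l + 2 := ⟨n - 2, by omega⟩
    -- For `k ≥ 2` the truncated subtractions are removed and Pascal's rule makes both sides polynomial
    -- in the same binomials.
    rcases k with _ | _ | κ
    · simp at hF hN ⊢
      subst hN
      have : (F : ℂ) = 1 := by
        push_cast at hF
        linear_combination hF
      exact_mod_cast this
    · simp at hF hN ⊢
      linear_combination hF + 2 * hN
    · have e1 : l + 2 + (κ + 1 + 1) - 1 = l + κ + 2 + 1 := by omega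
      have e2 : l + 2 + (κ + 1 + 1) - 2 = l + κ + 2 := by omega
      have e3 : l + 2 + (κ + 1) - 1 = l + κ + 2 := by omega
      have e4 : l + 2 - 1 = l + 1 := by omega
      simp only [e1, e2, e3, e4, Nat.add_sub_cancel, Nat.choose_succ_succ'] at hF hN ⊢
      simp at hF hN ⊢
      linear_combination hF + 2 * hN
  · rw [(Nat.odd_iff.2 hd).neg_one_pow]
    have hF := congrArg (Nat.cast : ℕ → ℂ) (fixed_odd_self (k := k) hn hnd (by omega))
    rw [ncard_single_eq hn] at hF
    generalize (fixedSet n k d).ncard = F at hF ⊢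
    obtain ⟨l, rfl⟩ : ∃ l, n = l + 2 := ⟨n - 2, by omega⟩
    rcases k with _ | _ | κ
    · simp at hF ⊢
      linear_combination hF
    · simp at hF ⊢
      linear_combination hF
    · have e1 : l + 2 + (κ + 1 + 1) - 1 = l + κ + 2 + 1 := by omega
      have e2 : l + 2 + (κ + 1 + 1) - 2 = l + κ + 2 := by omega
      have e3 : l + 2 + (κ + 1) - 1 = l + κ + 2 := by omega
      have e4 : l + 2 - 1 = l + 1 := by omega
      simp only [e1, e2, e3, e4, Nat.add_sub_cancel, Nat.choose_succ_succ'] at hF ⊢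
      simp at hF ⊢
      linear_combination hF

end sieving

/-- Eu–Fu, type D, `s = 1`.  Fix `k ≥ 0` and `n ≥ 2`.  The set of
D-dissections of `P_{2n}` with exactly `k` D-diagonals — a D-diagonal is either a
centrally symmetric pair of non-diameter diagonals (counted once, encoded by the
symmetric antipodally invariant relation `S.1`) or a blue or red diameter (`S.2.1`,
`S.2.2`, the diameter `{a,a+n}` being recorded at both `a` and `a+n`) — with `Z_{2n}`
acting by D-rotation (rotation by one vertex position, switching diameter colors),
together with the polynomial
`X(q) = [n+k−1,k]_{q²}[n−1,k]_{q²} + [n+k−1,k]_{q²}[n−2,k−1]_{q²}·qⁿ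
      + [n+k−1,k]_{q²}[n−2,k−2]_{q²} + [n+k−2,k]_{q²}[n−2,k−2]_{q²}·qⁿ`
(binomials with negative lower index being `0`), exhibits the cyclic sieving
phenomenon with `ζ = e^{2πi/(2n)}`. -/
theorem statement2 (n k : ℕ) (hn : 2 ≤ n) :
    ∀ d : ℕ,
      (Nat.card {S : (ZMod (2*n) → ZMod (2*n) → Prop) ×
            (ZMod (2*n) → Prop) × (ZMod (2*n) → Prop) //
          (∀ i j, S.1 i j → S.1 j i) ∧
          (∀ i j, S.1 i j → i ≠ j ∧ j ≠ i + 1 ∧ i ≠ j + 1 ∧ j ≠ i + (n : ZMod (2*n))) ∧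
          (∀ i j, S.1 (i + (n : ZMod (2*n))) (j + (n : ZMod (2*n))) ↔ S.1 i j) ∧
          (∀ a, S.2.1 (a + (n : ZMod (2*n))) ↔ S.2.1 a) ∧
          (∀ a, S.2.2 (a + (n : ZMod (2*n))) ↔ S.2.2 a) ∧
          (∀ i j a b, S.1 i j → S.1 a b → ¬ crossE i j a b) ∧
          (∀ a i j, S.2.1 a → S.1 i j → ¬ crossE a (a + (n : ZMod (2*n))) i j) ∧
          (∀ a i j, S.2.2 a → S.1 i j → ¬ crossE a (a + (n : ZMod (2*n))) i j) ∧
          (∀ a b, S.2.1 a → S.2.2 b → b = a ∨ b = a + (n : ZMod (2*n))) ∧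
          Nat.card {p : ZMod (2*n) × ZMod (2*n) // p.1.val < p.2.val ∧ S.1 p.1 p.2} +
              2 * (Nat.card {a : ZMod (2*n) // a.val < n ∧ S.2.1 a} +
                   Nat.card {a : ZMod (2*n) // a.val < n ∧ S.2.2 a}) = 2 * k ∧
          (∀ i j, S.1 (i + (d : ZMod (2*n))) (j + (d : ZMod (2*n))) ↔ S.1 i j) ∧
          (∀ a, S.2.1 (a + (d : ZMod (2*n))) ↔
            (if d % 2 = 0 then S.2.1 a else S.2.2 a)) ∧
          (∀ a, S.2.2 (a + (d : ZMod (2*n))) ↔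
            (if d % 2 = 0 then S.2.2 a else S.2.1 a))} : ℂ) =
      (qbinom (n+k-1) k).eval ((Complex.exp (2 * Real.pi * Complex.I / (2*n)) ^ d) ^ 2) *
          (qbinom (n-1) k).eval ((Complex.exp (2 * Real.pi * Complex.I / (2*n)) ^ d) ^ 2) +
        (qbinom (n+k-1) k).eval ((Complex.exp (2 * Real.pi * Complex.I / (2*n)) ^ d) ^ 2) *
          (if 1 ≤ k then
            (qbinom (n-2) (k-1)).eval
              ((Complex.exp (2 * Real.pi * Complex.I / (2*n)) ^ d) ^ 2) else 0) *
          Complex.exp (2 * Real.pi * Complex.I / (2*n)) ^ (d * n) +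
        (qbinom (n+k-1) k).eval ((Complex.exp (2 * Real.pi * Complex.I / (2*n)) ^ d) ^ 2) *
          (if 2 ≤ k then
            (qbinom (n-2) (k-2)).eval
              ((Complex.exp (2 * Real.pi * Complex.I / (2*n)) ^ d) ^ 2) else 0) +
        (qbinom (n+k-2) k).eval ((Complex.exp (2 * Real.pi * Complex.I / (2*n)) ^ d) ^ 2) *
          (if 2 ≤ k then
            (qbinom (n-2) (k-2)).eval
              ((Complex.exp (2 * Real.pi * Complex.I / (2*n)) ^ d) ^ 2) else 0) *
          Complex.exp (2 * Real.pi * Complex.I / (2*n)) ^ (d * n) := by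
  intro d
  rw [exp_pow_mul (by omega)]
  have key : ((fixedSet n k d).ncard : ℂ) =
      sieve n k ((Complex.exp (2 * Real.pi * Complex.I / (2 * n)) ^ d) ^ 2) ((-1) ^ d) := by
    by_cases hnd : n ∣ d
    · exact sieving_dvd hn hnd
    · exact sieving_not_dvd hn hnd
  refine Eq.trans ?_ key
  rw [← Nat.card_coe_set_eq]
  refine congrArg _ (Nat.card_congr (Equiv.subtypeEquivRight fun S => ?_))
  constructor
  · rintro ⟨h1, h2, h3, h4, h5, h6, h7, h8, h9, h10, h11, h12, h13⟩
    exact ⟨⟨h1, h2, h3, h4, h5, h6, h7, h8, h9, h10⟩, h11, h12, h13⟩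
  · rintro ⟨⟨h1, h2, h3, h4, h5, h6, h7, h8, h9, h10⟩, h11, h12, h13⟩
    exact ⟨h1, h2, h3, h4, h5, h6, h7, h8, h9, h10, h11, h12, h13⟩
end

section
/- Let n ≥ 3 and k ≥ 0. The set {z_f^A}, where f ranges over all A-multidissections of P_n with exactly k edges, is a ℂ-basis of V^A(n,k), the homogeneous component of polynomial degree 2k of the subalgebra 𝒜_n ⊆ ℂ[x] generated by the 2×2 minors Δ_{ij}. -/
/-!
Spanning is straightening. The Plücker relation
`Δ_{ij} Δ_{ab} = Δ_{ia} Δ_{jb} + Δ_{ib} Δ_{aj}` (for `i < a < j < b`)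
rewrites a product of two crossing minors as a sum of two products of non-crossing ones and keeps
the number of edges. It strictly decreases the total weight, where the edge `{p,q}` has weight
`ℓ (n - ℓ)`, `ℓ = |p - q|` (`weight_uncross`), so repeated uncrossing terminates
(`zA_mem_span`). The products of minors span the algebra, each is homogeneous, and taking a
homogeneous component gives the degree-`2k` statement.

Linear independence comes from leading monomials. For a lexicographic (diagonal) monomial order
the leading monomial of `Δ_{ij}`, `i < j`, is `x_{i1} x_{j2}`, so that of `z_f` records, at every
vertex `v`, the number of edges of `f` going from `v` to larger vertices and the number going to
smaller ones. A multidissection is determined by these numbers, like a balanced bracketing by the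
positions of its brackets: if `f` and `g` have the same numbers, agree on all edges shorter than
`{i,j}` and `g i j < f i j`, then `g` must have an edge `{i,q}` with `q > j` and an edge `{p,j}`
with `p < i`, and these cross (`apply_le_of_degrees_eq`).
-/

open Finset

/-- An A-multidissection of the `n`-gon `P_n` (vertices labeled clockwise by `ZMod n`),
encoded as a symmetric function `f` on ordered pairs of vertices (`f i j` is the
multiplicity of the edge `{i,j}`): whenever two edges cross, one of them has
multiplicity `0`. -/
def IsAMulti (n : ℕ) (f : ZMod n → ZMod n → ℕ) : Prop :=
  (∀ i j, f i j = f j i) ∧ (∀ i, f i i = 0) ∧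
  (∀ i j a b, crossE i j a b → f i j = 0 ∨ f a b = 0)

/-- The number of edges of an A-multidissection, counted with multiplicity. -/
def aEdges (n : ℕ) (f : ZMod n → ZMod n → ℕ) : ℕ :=
  ∑ i ∈ Finset.range n, ∑ j ∈ Finset.range n,
    if i < j then f (i : ZMod n) (j : ZMod n) else 0

/-- The 2×2 minor `Δ_{ij} = x_{i1}x_{j2} − x_{j1}x_{i2}` of the `n×2` matrix of
variables `x = (x_{ij})`, the rows being indexed by `ZMod n` and columns by `Fin 2`. -/
noncomputable def Dmin (n : ℕ) (i j : ZMod n) : MvPolynomial (ZMod n × Fin 2) ℂ :=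
  MvPolynomial.X (i, 0) * MvPolynomial.X (j, 1) - MvPolynomial.X (j, 0) * MvPolynomial.X (i, 1)

/-- The cluster monomial `z_f^A = ∏_{e={i,j}, i<j} Δ_{ij}^{f(e)}` associated to an
A-multidissection `f`. -/
noncomputable def zA (n : ℕ) (f : ZMod n → ZMod n → ℕ) : MvPolynomial (ZMod n × Fin 2) ℂ :=
  ∏ i ∈ Finset.range n, ∏ j ∈ Finset.range n,
    if i < j then Dmin n (i : ZMod n) (j : ZMod n) ^ f (i : ZMod n) (j : ZMod n) else 1

namespace Multidissection

/-! ### Sums and products over edges -/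

/-- The edges of the polygon, as pairs of vertices in increasing order of labels. -/
def edges (n : ℕ) [NeZero n] : Finset (ZMod n × ZMod n) :=
  univ.filter fun p => p.1.val < p.2.val

variable {n : ℕ} [NeZero n]

lemma mem_edges {p : ZMod n × ZMod n} : p ∈ edges n ↔ p.1.val < p.2.val := by
  simp [edges]

lemma prod_range_cast {M : Type*} [CommMonoid M] (g : ℕ → M) :
    ∏ i ∈ Finset.range n, g i = ∏ i : ZMod n, g i.val := by
  refine Finset.prod_bij' (fun i _ => (i : ZMod n)) (fun i _ => i.val) ?_ ?_ ?_ ?_ ?_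
  · simp
  · intro i _; simpa using ZMod.val_lt i
  · intro i hi; exact ZMod.val_cast_of_lt (by simpa using hi)
  · intro i _; simp
  · intro i hi; rw [ZMod.val_cast_of_lt (by simpa using hi)]

lemma prod_edges {M : Type*} [CommMonoid M] (g : ZMod n → ZMod n → M) :
    ∏ i ∈ Finset.range n, ∏ j ∈ Finset.range n,
      (if i < j then g (i : ZMod n) (j : ZMod n) else 1) = ∏ p ∈ edges n, g p.1 p.2 := by
  rw [prod_range_cast, edges, Finset.prod_filter, Fintype.prod_prod_type]
  refine Finset.prod_congr rfl fun i _ => ?_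
  rw [prod_range_cast]
  simp

lemma zA_eq (f : ZMod n → ZMod n → ℕ) :
    zA n f = ∏ p ∈ edges n, Dmin n p.1 p.2 ^ f p.1 p.2 :=
  prod_edges fun i j => Dmin n i j ^ f i j

lemma aEdges_eq (f : ZMod n → ZMod n → ℕ) :
    aEdges n f = ∑ p ∈ edges n, f p.1 p.2 :=
  prod_edges (M := Multiplicative ℕ) fun i j => Multiplicative.ofAdd (f i j)

lemma zA_add (f g : ZMod n → ZMod n → ℕ) : zA n (f + g) = zA n f * zA n g := by
  simp [zA_eq, pow_add, Finset.prod_mul_distrib]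

lemma aEdges_add (f g : ZMod n → ZMod n → ℕ) : aEdges n (f + g) = aEdges n f + aEdges n g := by
  simp [aEdges_eq, Finset.sum_add_distrib]

/-- The total weight of a multiset of edges, an edge joining vertices at distance `ℓ` having
weight `ℓ (n - ℓ)`. There is no truncation, since `ℓ < n`. -/
def weight (f : ZMod n → ZMod n → ℕ) : ℕ :=
  ∑ p ∈ edges n, f p.1 p.2 * ((p.2.val - p.1.val) * (n - (p.2.val - p.1.val)))

lemma weight_add (f g : ZMod n → ZMod n → ℕ) : weight (f + g) = weight f + weight g := by
  simp [weight, add_mul, Finset.sum_add_distrib]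

/-- The single edge `{i,j}`, as a symmetric multiplicity function. -/
def edge (i j : ZMod n) : ZMod n → ZMod n → ℕ :=
  fun p q => if (p = i ∧ q = j) ∨ (p = j ∧ q = i) then 1 else 0

lemma edge_symm (i j p q : ZMod n) : edge i j p q = edge i j q p := by
  unfold edge
  congr 1
  apply propext
  tauto

lemma edge_diag {i j : ZMod n} (h : i ≠ j) (p : ZMod n) : edge i j p p = 0 := by
  unfold edge
  rw [if_neg]
  rintro (⟨rfl, rfl⟩ | ⟨rfl, rfl⟩) <;> exact h rfl

lemma edge_apply_of_mem {i j : ZMod n} (h : i.val < j.val) {p : ZMod n × ZMod n}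
    (hp : p ∈ edges n) : edge i j p.1 p.2 = if p = (i, j) then 1 else 0 := by
  rw [mem_edges] at hp
  obtain ⟨p, q⟩ := p
  unfold edge
  congr 1
  apply propext
  simp only [Prod.mk.injEq, or_iff_left_iff_imp]
  rintro ⟨rfl, rfl⟩
  simp only at hp
  omega

lemma zA_edge {i j : ZMod n} (h : i.val < j.val) : zA n (edge i j) = Dmin n i j := by
  rw [zA_eq, Finset.prod_congr rfl fun p hp => by rw [edge_apply_of_mem h hp],
    Finset.prod_eq_single (i, j)]
  · simp
  · intro b _ hb; simp [hb]
  · intro hb; exact absurd (mem_edges.2 h) hb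

lemma aEdges_edge {i j : ZMod n} (h : i.val < j.val) : aEdges n (edge i j) = 1 := by
  rw [aEdges_eq, Finset.sum_congr rfl fun p hp => edge_apply_of_mem h hp,
    Finset.sum_ite_eq' , if_pos (mem_edges.2 h)]

lemma weight_edge {i j : ZMod n} (h : i.val < j.val) :
    weight (edge i j) = (j.val - i.val) * (n - (j.val - i.val)) := by
  rw [weight, Finset.sum_congr rfl fun p hp => by rw [edge_apply_of_mem h hp],
    Finset.sum_eq_single (i, j)]
  · simp
  · intro b _ hb; simp [hb]
  · intro hb; exact absurd (mem_edges.2 h) hb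

/-! ### Spanning by uncrossing -/

lemma plucker (i a j b : ZMod n) :
    Dmin n i j * Dmin n a b = Dmin n i a * Dmin n j b + Dmin n i b * Dmin n a j := by
  unfold Dmin; ring

/-- Both ways of uncrossing the edges `{i,j}`, `{a,b}` with `i < a < j < b` lower the total weight:
if the four arcs have lengths `x, y, z, w`, the two decreases are `2yw` and `2xz`. -/
lemma weight_uncross {i a j b : ZMod n} (h1 : i.val < a.val) (h2 : a.val < j.val)
    (h3 : j.val < b.val) :
    weight (edge i a) + weight (edge j b) < weight (edge i j) + weight (edge a b) ∧
    weight (edge i b) + weight (edge a j) < weight (edge i j) + weight (edge a b) := by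
  rw [weight_edge h1, weight_edge h2, weight_edge h3, weight_edge (h1.trans h2),
    weight_edge (h2.trans h3), weight_edge (h1.trans (h2.trans h3))]
  have hb := ZMod.val_lt b
  obtain ⟨x, hx⟩ := Nat.exists_eq_add_of_lt h1
  obtain ⟨y, hy⟩ := Nat.exists_eq_add_of_lt h2
  obtain ⟨z, hz⟩ := Nat.exists_eq_add_of_lt h3
  obtain ⟨w, hw⟩ : ∃ w, n = x + y + z + 3 + (w + 1) := ⟨n - (x + y + z + 4), by omega⟩
  rw [show a.val - i.val = x + 1 by omega, show j.val - a.val = y + 1 by omega,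
    show b.val - j.val = z + 1 by omega, show j.val - i.val = x + y + 2 by omega,
    show b.val - a.val = y + z + 2 by omega, show b.val - i.val = x + y + z + 3 by omega,
    show n - (x + 1) = y + z + w + 3 by omega, show n - (y + 1) = x + z + w + 3 by omega,
    show n - (z + 1) = x + y + w + 3 by omega, show n - (x + y + 2) = z + w + 2 by omega,
    show n - (y + z + 2) = x + w + 2 by omega, show n - (x + y + z + 3) = w + 1 by omega]
  constructor <;> nlinarith [Nat.zero_le (y * w), Nat.zero_le (x * z)]

/-- A multiplicity function that is not a multidissection uses two edges `{i,j}`, `{a,b}` with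
`i < a < j < b`. -/
lemma exists_crossing {f : ZMod n → ZMod n → ℕ} (hs : ∀ i j, f i j = f j i)
    (hd : ∀ i, f i i = 0) (hf : ¬ IsAMulti n f) :
    ∃ i a j b : ZMod n, i.val < a.val ∧ a.val < j.val ∧ j.val < b.val ∧
      f i j ≠ 0 ∧ f a b ≠ 0 := by
  simp only [IsAMulti, not_and, not_forall, not_or] at hf
  obtain ⟨i, j, a, b, hc, hij, hab⟩ := hf hs hd
  -- Reorder the endpoints of both edges, then the two edges themselves.
  wlog h1 : i.val ≤ j.val generalizing i j
  · exact this j i (by simpa only [crossE, min_comm, max_comm] using hc) (by rwa [hs])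
      (by omega)
  wlog h2 : a.val ≤ b.val generalizing a b
  · exact this b a (by rwa [hs]) (by simpa only [crossE, min_comm, max_comm] using hc)
      (by omega)
  simp only [crossE, min_eq_left h1, max_eq_right h1, min_eq_left h2, max_eq_right h2] at hc
  rcases hc with ⟨u, v, w⟩ | ⟨u, v, w⟩
  · exact ⟨i, a, j, b, u, v, w, hij, hab⟩
  · exact ⟨a, i, b, j, u, v, w, hab, hij⟩

/-- Two crossing edges of positive multiplicity can be split off. -/
lemma exists_eq_add {f : ZMod n → ZMod n → ℕ} (hs : ∀ i j, f i j = f j i)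
    (hd : ∀ i, f i i = 0) {i a j b : ZMod n} (h1 : i.val < a.val) (h2 : a.val < j.val)
    (h3 : j.val < b.val) (hij : f i j ≠ 0) (hab : f a b ≠ 0) :
    ∃ g : ZMod n → ZMod n → ℕ, (∀ i j, g i j = g j i) ∧ (∀ i, g i i = 0) ∧
      f = g + (edge i j + edge a b) := by
  refine ⟨fun p q => f p q - (edge i j p q + edge a b p q), ?_, ?_, ?_⟩
  · intro p q
    simp only [hs p q, edge_symm _ _ p q]
  · intro p
    simp [hd]
  · funext p q
    have key : edge i j p q + edge a b p q ≤ f p q := by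
      unfold edge
      have hia : i ≠ a := by rintro rfl; omega
      have hib : i ≠ b := by rintro rfl; omega
      split_ifs with u v v
      · exfalso
        rcases u with ⟨rfl, rfl⟩ | ⟨rfl, rfl⟩ <;> tauto
      · rcases u with ⟨rfl, rfl⟩ | ⟨rfl, rfl⟩
        · omega
        · have := hs p q
          omega
      · rcases v with ⟨rfl, rfl⟩ | ⟨rfl, rfl⟩
        · omega
        · have := hs p q
          omega
      · omega
    simp only [Pi.add_apply]
    omega

/-- Straightening: every product of `k` minors is a linear combination of the `z_g`, where `g`
ranges over the multidissections with `k` edges. -/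
lemma zA_mem_span (N : ℕ) : ∀ (f : ZMod n → ZMod n → ℕ), weight f = N →
    (∀ i j, f i j = f j i) → (∀ i, f i i = 0) →
    zA n f ∈ Submodule.span ℂ (Set.range (fun g : {g : ZMod n → ZMod n → ℕ //
      IsAMulti n g ∧ aEdges n g = aEdges n f} => zA n g.1)) := by
  induction N using Nat.strong_induction_on with
  | _ N ih =>
    intro f hN hs hd
    by_cases hf : IsAMulti n f
    · exact Submodule.subset_span ⟨⟨f, hf, rfl⟩, rfl⟩
    obtain ⟨i, a, j, b, h1, h2, h3, hij, hab⟩ := exists_crossing hs hd hf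
    obtain ⟨g, gs, gd, rfl⟩ := exists_eq_add hs hd h1 h2 h3 hij hab
    have h12 := h1.trans h2
    have h23 := h2.trans h3
    have h123 := h1.trans h23
    have ne {p q : ZMod n} (h : p.val < q.val) : p ≠ q := by rintro rfl; omega
    obtain ⟨w1, w2⟩ := weight_uncross h1 h2 h3
    simp only [weight_add] at hN
    have e1 := ih (weight (g + (edge i a + edge j b))) (by simp only [weight_add]; omega)
      (g + (edge i a + edge j b)) rfl
      (fun p q => by simp only [Pi.add_apply, gs p q, edge_symm _ _ p q])
      (fun p => by simp [gd, edge_diag (ne h1), edge_diag (ne h3)])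
    have e2 := ih (weight (g + (edge i b + edge a j))) (by simp only [weight_add]; omega)
      (g + (edge i b + edge a j)) rfl
      (fun p q => by simp only [Pi.add_apply, gs p q, edge_symm _ _ p q])
      (fun p => by simp [gd, edge_diag (ne h123), edge_diag (ne h2)])
    have c1 : aEdges n (g + (edge i a + edge j b)) = aEdges n (g + (edge i j + edge a b)) := by
      simp only [aEdges_add, aEdges_edge h1, aEdges_edge h3, aEdges_edge h12, aEdges_edge h23]
    have c2 : aEdges n (g + (edge i b + edge a j)) = aEdges n (g + (edge i j + edge a b)) := by
      simp only [aEdges_add, aEdges_edge h2, aEdges_edge h123, aEdges_edge h12, aEdges_edge h23]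
    rw [c1] at e1
    rw [c2] at e2
    have hz : zA n (g + (edge i j + edge a b)) =
        zA n (g + (edge i a + edge j b)) + zA n (g + (edge i b + edge a j)) := by
      simp only [zA_add, zA_edge h1, zA_edge h2, zA_edge h3, zA_edge h12, zA_edge h23,
        zA_edge h123]
      rw [plucker i a j b, mul_add]
    rw [hz]
    exact Submodule.add_mem _ e1 e2

lemma zA_isHomogeneous (f : ZMod n → ZMod n → ℕ) :
    (zA n f).IsHomogeneous (2 * aEdges n f) := by
  rw [zA_eq, aEdges_eq, Finset.mul_sum]
  refine MvPolynomial.IsHomogeneous.prod _ _ _ fun p _ => ?_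
  refine MvPolynomial.IsHomogeneous.pow ?_ _
  exact ((MvPolynomial.isHomogeneous_X ℂ _).mul (MvPolynomial.isHomogeneous_X ℂ _)).sub
    ((MvPolynomial.isHomogeneous_X ℂ _).mul (MvPolynomial.isHomogeneous_X ℂ _))

lemma exists_zA_of_mem_closure {p : MvPolynomial (ZMod n × Fin 2) ℂ}
    (hp : p ∈ Submonoid.closure {p : MvPolynomial (ZMod n × Fin 2) ℂ |
            ∃ i j : ZMod n, i.val < j.val ∧ p = Dmin n i j}) :
    ∃ f : ZMod n → ZMod n → ℕ, (∀ i j, f i j = f j i) ∧ (∀ i, f i i = 0) ∧ p = zA n f := by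
  induction hp using Submonoid.closure_induction with
  | mem x hx =>
    obtain ⟨i, j, h, rfl⟩ := hx
    exact ⟨edge i j, edge_symm i j, edge_diag (by rintro rfl; omega), (zA_edge h).symm⟩
  | one => exact ⟨0, by simp, by simp, by simp [zA_eq]⟩
  | mul x y _ _ hx hy =>
    obtain ⟨f, fs, fd, rfl⟩ := hx
    obtain ⟨g, gs, gd, rfl⟩ := hy
    exact ⟨f + g, fun i j => by simp [fs i j, gs i j], fun i => by simp [fd, gd],
      (zA_add f g).symm⟩

/-! ### Multidissections are determined by their vertex degrees -/

/-- The number of edges from `i` to larger vertices. -/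
def outDeg (f : ZMod n → ZMod n → ℕ) (i : ZMod n) : ℕ :=
  ∑ q ∈ univ.filter (fun q : ZMod n => i.val < q.val), f i q

/-- The number of edges from `j` to smaller vertices. -/
def inDeg (f : ZMod n → ZMod n → ℕ) (j : ZMod n) : ℕ :=
  ∑ p ∈ univ.filter (fun p : ZMod n => p.val < j.val), f p j

/-- The inductive step on the length `d` of the edge: an excess of `f` over `g` at `{i,j}` would
force two crossing edges of `g`. -/
lemma apply_le_of_degrees_eq {f g : ZMod n → ZMod n → ℕ} (hg : IsAMulti n g)
    (ho : ∀ i, outDeg f i = outDeg g i) (hi : ∀ i, inDeg f i = inDeg g i) {d : ℕ}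
    (ih : ∀ i j : ZMod n, i.val < j.val → j.val - i.val < d → f i j = g i j)
    {i j : ZMod n} (hij : i.val < j.val) (hd : j.val - i.val = d) : f i j ≤ g i j := by
  by_contra! hlt
  obtain ⟨q, hq, hgq⟩ : ∃ q : ZMod n, j.val < q.val ∧ g i q ≠ 0 := by
    by_contra! hno
    refine (ho i).not_gt (Finset.sum_lt_sum (fun q hq => ?_) ⟨j, by simpa using hij, hlt⟩)
    have hq : i.val < q.val := by simpa using hq
    rcases lt_trichotomy q.val j.val with h | h | h
    · exact (ih i q hq (by omega)).ge
    · rw [ZMod.val_injective n h]; exact hlt.le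
    · rw [hno q h]; exact Nat.zero_le _
  obtain ⟨p, hp, hgp⟩ : ∃ p : ZMod n, p.val < i.val ∧ g p j ≠ 0 := by
    by_contra! hno
    refine (hi j).not_gt (Finset.sum_lt_sum (fun p hp => ?_) ⟨i, by simpa using hij, hlt⟩)
    have hp : p.val < j.val := by simpa using hp
    rcases lt_trichotomy p.val i.val with h | h | h
    · rw [hno p h]; exact Nat.zero_le _
    · rw [ZMod.val_injective n h]; exact hlt.le
    · exact (ih p j hp (by omega)).ge
  have hc : crossE p j i q := by
    left
    rw [min_eq_left (hp.trans hij).le, max_eq_right (hp.trans hij).le,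
      min_eq_left (hij.trans hq).le, max_eq_right (hij.trans hq).le]
    exact ⟨hp, hij, hq⟩
  rcases hg.2.2 p j i q hc with h | h
  · exact hgp h
  · exact hgq h

lemma eq_of_degrees_eq {f g : ZMod n → ZMod n → ℕ} (hf : IsAMulti n f) (hg : IsAMulti n g)
    (ho : ∀ i, outDeg f i = outDeg g i) (hi : ∀ i, inDeg f i = inDeg g i) : f = g := by
  have key : ∀ d : ℕ, ∀ i j : ZMod n, i.val < j.val → j.val - i.val = d → f i j = g i j := by
    intro d
    induction d using Nat.strong_induction_on with
    | _ d ih =>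
      intro i j hij hd
      exact le_antisymm
        (apply_le_of_degrees_eq hg ho hi (fun i j h h' => ih _ h' i j h rfl) hij hd)
        (apply_le_of_degrees_eq hf (fun i => (ho i).symm) (fun i => (hi i).symm)
          (fun i j h h' => (ih _ h' i j h rfl).symm) hij hd)
  funext i j
  rcases lt_trichotomy i.val j.val with h | h | h
  · exact key _ i j h rfl
  · rw [ZMod.val_injective n h, hf.2.1, hg.2.1]
  · rw [hf.1, hg.1]; exact key _ j i h rfl

/-! ### Leading monomials -/

open scoped MonomialOrder

/-- Nonzero polynomials with pairwise distinct leading monomials are linearly independent. -/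
lemma linearIndependent_of_degree_injective {σ ι : Type*} (m : MonomialOrder σ)
    (v : ι → MvPolynomial σ ℂ) (h0 : ∀ i, v i ≠ 0)
    (hinj : Function.Injective fun i => m.degree (v i)) : LinearIndependent ℂ v := by
  classical
  rw [linearIndependent_iff']
  intro s c hsum i hi
  by_contra hci
  obtain ⟨t, ht, hmax⟩ := Finset.exists_max_image (s.filter fun i => c i ≠ 0)
    (fun i => m.toSyn (m.degree (v i))) ⟨i, by simp [hi, hci]⟩
  rw [Finset.mem_filter] at ht
  have hcoeff := congrArg (MvPolynomial.coeff (m.degree (v t))) hsum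
  rw [MvPolynomial.coeff_sum, Finset.sum_eq_single t] at hcoeff
  · simp only [MvPolynomial.coeff_smul, MvPolynomial.coeff_zero, smul_eq_mul, mul_eq_zero,
      ht.2, false_or] at hcoeff
    exact m.coeff_degree_ne_zero_iff.2 (h0 t) hcoeff
  · intro b hb hbt
    rw [MvPolynomial.coeff_smul]
    by_cases hcb : c b = 0
    · simp [hcb]
    rw [m.coeff_eq_zero_of_lt, smul_zero]
    refine lt_of_le_of_ne (hmax b (by simp [hb, hcb])) fun h => hbt (hinj (m.toSyn.injective h))
  · intro h; exact absurd ht.1 h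

/-- The exponent of the diagonal monomial `x_{i1} x_{j2}` of `Δ_{ij}`. -/
noncomputable def diag (i j : ZMod n) : ZMod n × Fin 2 →₀ ℕ :=
  Finsupp.single (i, 0) 1 + Finsupp.single (j, 1) 1

/-- There is a diagonal monomial order, namely the lexicographic one for
`x_{11} > x_{21} > ⋯ > x_{n1} > x_{12} > ⋯ > x_{n2}`. -/
lemma exists_diagonal_order (n : ℕ) [NeZero n] : ∃ m : MonomialOrder.{0, 0} (ZMod n × Fin 2),
    ∀ i j : ZMod n, i.val < j.val → diag j i ≺[m] diag i j := by
  let key : ZMod n × Fin 2 → Fin 2 ×ₗ ℕ := fun x => toLex (x.2, x.1.val)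
  have hkey : Function.Injective key := by
    rintro ⟨a, b⟩ ⟨c, d⟩ h
    have h' : (b, a.val) = (d, c.val) := toLex.injective h
    rw [Prod.mk.injEq] at h'
    exact Prod.ext (ZMod.val_injective n h'.2) h'.1
  let _ : LinearOrder (ZMod n × Fin 2) := LinearOrder.lift' key hkey
  refine ⟨MonomialOrder.lex, fun i j hij => ?_⟩
  have hne : i ≠ j := by rintro rfl; omega
  rw [MonomialOrder.lex_lt_iff]
  refine ⟨(i, 0), ?_, ?_⟩
  · rintro ⟨p, c⟩ hy
    have hy' : key (p, c) < key (i, 0) := hy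
    simp only [key, Prod.Lex.toLex_lt_toLex] at hy'
    obtain ⟨rfl, hp⟩ : c = 0 ∧ p.val < i.val := by
      rcases hy' with h | h
      · exact absurd h (Fin.not_lt_zero c)
      · exact h
    have hpi : i ≠ p := by rintro rfl; omega
    have hpj : j ≠ p := by rintro rfl; omega
    simp [diag, hpi, hpj]
  · simp [diag, hne.symm]

lemma degree_Dmin {m : MonomialOrder (ZMod n × Fin 2)}
    (hm : ∀ i j : ZMod n, i.val < j.val → diag j i ≺[m] diag i j) {i j : ZMod n}
    (hij : i.val < j.val) : m.degree (Dmin n i j) = diag i j := by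
  have hX (p q : ZMod n × Fin 2) :
      m.degree (MvPolynomial.X p * MvPolynomial.X q : MvPolynomial (ZMod n × Fin 2) ℂ) =
        Finsupp.single p 1 + Finsupp.single q 1 := by
    rw [m.degree_mul (MvPolynomial.X_ne_zero p) (MvPolynomial.X_ne_zero q), m.degree_X,
      m.degree_X]
  unfold Dmin
  rw [m.degree_sub_of_lt, hX]
  · rfl
  · rw [hX, hX]
    exact hm i j hij

lemma Dmin_ne_zero {i j : ZMod n} (hij : i.val < j.val) : Dmin n i j ≠ 0 := by
  obtain ⟨m, hm⟩ := exists_diagonal_order n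
  intro h
  have h1 := degree_Dmin hm hij
  rw [h, m.degree_zero] at h1
  have := DFunLike.congr_fun h1 (i, 0)
  simp [diag] at this

lemma zA_ne_zero (f : ZMod n → ZMod n → ℕ) : zA n f ≠ 0 := by
  rw [zA_eq]
  exact Finset.prod_ne_zero_iff.2 fun p hp => pow_ne_zero _ (Dmin_ne_zero (mem_edges.1 hp))

lemma degree_zA {m : MonomialOrder (ZMod n × Fin 2)}
    (hm : ∀ i j : ZMod n, i.val < j.val → diag j i ≺[m] diag i j) (f : ZMod n → ZMod n → ℕ) :
    m.degree (zA n f) = ∑ p ∈ edges n, f p.1 p.2 • diag p.1 p.2 := by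
  rw [zA_eq, m.degree_prod fun p hp => pow_ne_zero _ (Dmin_ne_zero (mem_edges.1 hp))]
  refine Finset.sum_congr rfl fun p hp => ?_
  rw [m.degree_pow, degree_Dmin hm (mem_edges.1 hp)]

lemma degree_zA_zero {m : MonomialOrder (ZMod n × Fin 2)}
    (hm : ∀ i j : ZMod n, i.val < j.val → diag j i ≺[m] diag i j) (f : ZMod n → ZMod n → ℕ)
    (i : ZMod n) : m.degree (zA n f) (i, 0) = outDeg f i := by
  rw [degree_zA hm, Finsupp.finsetSum_apply, outDeg, edges, Finset.sum_filter,
    Finset.sum_filter, Fintype.sum_prod_type, Finset.sum_eq_single i]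
  · simp [diag]
  · intro b _ hb
    simp [diag, hb]
  · simp

lemma degree_zA_one {m : MonomialOrder (ZMod n × Fin 2)}
    (hm : ∀ i j : ZMod n, i.val < j.val → diag j i ≺[m] diag i j) (f : ZMod n → ZMod n → ℕ)
    (j : ZMod n) : m.degree (zA n f) (j, 1) = inDeg f j := by
  rw [degree_zA hm, Finsupp.finsetSum_apply, inDeg, edges, Finset.sum_filter,
    Finset.sum_filter, Fintype.sum_prod_type_right, Finset.sum_eq_single j]
  · simp [diag]
  · intro b _ hb
    simp [diag, hb]
  · simp

end Multidissection

open Multidissection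

/-- Kung–Rota; Pylyavskyy; Fomin–Zelevinsky.  Let `n ≥ 3` and `k ≥ 0`.
The cluster monomials `z_f^A`, as `f` ranges over all A-multidissections of `P_n` with
exactly `k` edges, form a `ℂ`-basis of `V^A(n,k)`, the homogeneous component of
polynomial degree `2k` of the subalgebra `𝒜_n ⊆ ℂ[x]` generated by the 2×2 minors
`Δ_{ij}`: the family is linearly independent and its span is
`𝒜_n ⊓ (degree-2k homogeneous polynomials)`. -/
theorem statement3 (n k : ℕ) (hn : 3 ≤ n) :
    LinearIndependent ℂ
      (fun f : {f : ZMod n → ZMod n → ℕ // IsAMulti n f ∧ aEdges n f = k} => zA n f.1) ∧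
    Submodule.span ℂ
        (Set.range (fun f : {f : ZMod n → ZMod n → ℕ //
          IsAMulti n f ∧ aEdges n f = k} => zA n f.1)) =
      Subalgebra.toSubmodule (Algebra.adjoin ℂ
          {p : MvPolynomial (ZMod n × Fin 2) ℂ |
            ∃ i j : ZMod n, i.val < j.val ∧ p = Dmin n i j}) ⊓
        MvPolynomial.homogeneousSubmodule (ZMod n × Fin 2) ℂ (2 * k) := by
  have : NeZero n := ⟨by omega⟩
  constructor
  · obtain ⟨m, hm⟩ := exists_diagonal_order n
    refine linearIndependent_of_degree_injective m _ (fun f => zA_ne_zero f.1) ?_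
    intro f g hfg
    refine Subtype.ext (eq_of_degrees_eq f.2.1 g.2.1 (fun i => ?_) fun i => ?_)
    · rw [← degree_zA_zero hm, ← degree_zA_zero hm]
      exact DFunLike.congr_fun hfg (i, 0)
    · rw [← degree_zA_one hm, ← degree_zA_one hm]
      exact DFunLike.congr_fun hfg (i, 1)
  · apply le_antisymm
    · rw [Submodule.span_le]
      rintro _ ⟨⟨f, hf, rfl⟩, rfl⟩
      refine ⟨?_, zA_isHomogeneous f⟩
      change zA n f ∈ Algebra.adjoin ℂ _
      rw [zA_eq]
      refine Subalgebra.prod_mem _ fun p hp => Subalgebra.pow_mem _ ?_ _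
      apply Algebra.subset_adjoin
      exact ⟨p.1, p.2, mem_edges.1 hp, rfl⟩
    · rintro p ⟨hp, hhom⟩
      -- `p` is its own component of degree `2k`, and that component of each product of minors
      -- is either the product itself or zero.
      have hcomp : p = MvPolynomial.homogeneousComponent (2 * k) p := by
        rw [MvPolynomial.homogeneousComponent_of_mem hhom, if_pos rfl]
      rw [hcomp]
      have hp' : p ∈ Submodule.span ℂ (Submonoid.closure
          {p : MvPolynomial (ZMod n × Fin 2) ℂ |
            ∃ i j : ZMod n, i.val < j.val ∧ p = Dmin n i j} : Set _) := by
        rw [← Algebra.adjoin_eq_span]; exact hp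
      clear hcomp hhom hp
      induction hp' using Submodule.span_induction with
      | mem x hx =>
        obtain ⟨f, fs, fd, rfl⟩ := exists_zA_of_mem_closure hx
        rw [MvPolynomial.homogeneousComponent_of_mem (zA_isHomogeneous f)]
        split_ifs with h
        · obtain rfl : k = aEdges n f := by omega
          exact zA_mem_span _ f rfl fs fd
        · exact Submodule.zero_mem _
      | zero => rw [map_zero]; exact Submodule.zero_mem _
      | add x y _ _ hx hy => rw [map_add]; exact Submodule.add_mem _ hx hy
      | smul c x _ hx => rw [map_smul]; exact Submodule.smul_mem _ c hx
end
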